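/- Let G be any connected planar graph on at least 2 vertices. Then the 3-surviving rate satisfies ρ₃(G) > 2/21. -/

import Mathlib

/-- The set of vertices on fire after `t` fire-spread rounds, when the fire breaks out
at `v` and the firefighters protect the vertices of `P s` in round `s + 1` (protection
happens just before the `s`-th spread step and is permanent). -/
def burnedSet {V : Type*} (G : SimpleGraph V) (v : V) (P : ℕ → Set V) : ℕ → Set V
  | 0 => {v}
  | t + 1 => burnedSet G v P t ∪
      {w | (∃ u ∈ burnedSet G v P t, G.Adj u w) ∧ ∀ s ≤ t, w ∉ P s}

/-- A strategy `P` is valid for the per-round budgets `b` if in each round it protects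
at most `b t` vertices, none of which are already on fire. -/
def ValidStrategy {V : Type*} (G : SimpleGraph V) (b : ℕ → ℕ) (v : V) (P : ℕ → Set V) : Prop :=
  ∀ t, (P t).Finite ∧ (P t).ncard ≤ b t ∧ Disjoint (P t) (burnedSet G v P t)

/-- `sn G b v` is the maximum number of vertices that can be saved (i.e. that never
catch fire) when the fire breaks out at `v` and the firefighters may protect at most
`b t` vertices in round `t + 1`. -/
noncomputable def sn {V : Type*} (G : SimpleGraph V) (b : ℕ → ℕ) (v : V) : ℕ :=
  sSup {m | ∃ P, ValidStrategy G b v P ∧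
    m = Nat.card {w : V | ∀ t, w ∉ burnedSet G v P t}}

/-- The surviving rate of `G` with per-round budgets `b` : the expected fraction of
vertices that can be saved when the starting vertex is chosen uniformly at random. -/
noncomputable def survivingRate {V : Type*} [Fintype V] (G : SimpleGraph V) (b : ℕ → ℕ) : ℝ :=
  (∑ v : V, (sn G b v : ℝ)) / (Fintype.card V : ℝ) ^ 2

/-- A plane embedding of a simple graph: vertices are points of the plane and edges are
simple arcs between their endpoints, such that arcs avoid all other vertices and two
arcs of distinct edges meet only in common endpoints. -/
structure PlaneEmbedding {V : Type*} (G : SimpleGraph V) where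
  pos : V → ℝ × ℝ
  arc : V → V → ℝ → ℝ × ℝ
  pos_inj : Function.Injective pos
  arc_cont : ∀ ⦃u v⦄, G.Adj u v → Continuous (arc u v)
  arc_injOn : ∀ ⦃u v⦄, G.Adj u v → Set.InjOn (arc u v) (Set.Icc 0 1)
  arc_zero : ∀ ⦃u v⦄, G.Adj u v → arc u v 0 = pos u
  arc_one : ∀ ⦃u v⦄, G.Adj u v → arc u v 1 = pos v
  arc_symm : ∀ ⦃u v⦄, G.Adj u v → ∀ t, arc v u t = arc u v (1 - t)
  arc_avoid : ∀ ⦃u v⦄, G.Adj u v → ∀ w : V, pos w ∉ arc u v '' Set.Ioo 0 1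
  arc_meet : ∀ ⦃u v x y⦄, G.Adj u v → G.Adj x y → s(u, v) ≠ s(x, y) →
      arc u v '' Set.Icc 0 1 ∩ arc x y '' Set.Icc 0 1 ⊆
        ({pos u, pos v} : Set (ℝ × ℝ)) ∩ {pos x, pos y}

/-- A graph is planar if it admits a plane embedding. -/
def IsPlanar {V : Type*} (G : SimpleGraph V) : Prop :=
  Nonempty (PlaneEmbedding G)

/-!
Rasterizing a drawing of a planar graph turns it into a subgraph of a quotient `H` of the triangular
lattice by finitely many connected fibres. Closed curves become closed chains mod `2`; since these
bound in the plane, every closed curve has two sides, and Euler's inequality `|E| ≤ 3 (n - 1)`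
follows.

Fix a breadth-first search tree of `H` rooted at the vertex `v` where the fire starts. Each lattice
edge together with the tree paths from the labels of its ends to `v` forms a closed curve. The fire
needs at least `i` rounds to reach level `i`, and the curve has at most two vertices per level, so
the curve and one of its sides are saved, except for `v`, whenever they contain at most three
neighbours of `v` in `H`. However one chooses a side of each curve, some lattice triangle is such
that the three chosen closed sides cover all vertices. Writing `f(v)` for the number of vertices
saved and `d(v)` for the degree of `v` in `H`, this gives `f(v) ≥ n - 1` if `d(v) ≤ 3`, and
`3 f(v) ≥ n - 1` if `d(v) ≤ 5`. If `d(v) = 6` and `6 f(v) < n - 1`, then some curve has two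
neighbours of `v` on it and two on either side; a geodesic that shortcuts the curve would make
`f(v)` larger, and if there is none then a fire starting at either neighbour of `v` on the smaller
side can be confined to that side. The bound follows by discharging these estimates against
`∑ d ≤ 6 (n - 1)`.
-/

open scoped Finset Topology

section Firefighting

open Finset
open scoped Classical

/-- Firefighters with `k` tasks per day can meet all deadlines `d` once, for every `t`, at most
`k * t` tasks are due by time `t`. -/
lemma exists_schedule {α : Type*} (B : Finset α) (d : α → ℕ) (k : ℕ)
    (h : ∀ t, #{b ∈ B | d b ≤ t} ≤ k * t) :
    ∃ day : α → ℕ, (∀ b ∈ B, day b < d b) ∧ ∀ t, #{b ∈ B | day b = t} ≤ k := by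
  induction B using Finset.induction_on_max_value d with
  | empty => exact ⟨0, by simp, by simp⟩
  | insert a s ha hmax ih =>
    obtain ⟨day, hlt, hcap⟩ := ih fun t ↦
      (card_le_card (filter_subset_filter _ (subset_insert a s))).trans (h t)
    obtain ⟨t, hta, ht⟩ : ∃ t < d a, #{b ∈ s | day b = t} < k := by
      by_contra! hfull
      have hs : #s = ∑ t ∈ range (d a), #{b ∈ s | day b = t} :=
        card_eq_sum_card_fiberwise fun b hb ↦
          mem_coe.2 (mem_range.2 ((hlt b hb).trans_le (hmax b hb)))
      have hle : d a * k ≤ #s := by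
        simpa [hs] using card_nsmul_le_sum (range (d a)) (fun t ↦ #{b ∈ s | day b = t}) k
          fun t ht ↦ hfull t (mem_range.1 ht)
      have hall : {b ∈ insert a s | d b ≤ d a} = insert a s :=
        filter_true_of_mem (by simpa using hmax)
      have := h (d a)
      rw [hall, card_insert_of_notMem ha, mul_comm] at this
      omega
    have hne : ∀ b ∈ s, b ≠ a := fun b hb hba ↦ ha (hba ▸ hb)
    refine ⟨Function.update day a t, ?_, fun r ↦ ?_⟩
    · rintro b hb
      rcases mem_insert.1 hb with rfl | hb
      · simpa using hta
      · simpa [hne b hb] using hlt b hb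
    · have hs : {b ∈ s | Function.update day a t b = r} = {b ∈ s | day b = r} :=
        filter_congr fun b hb ↦ by simp [hne b hb]
      rw [filter_insert, hs]
      split_ifs with har
      · obtain rfl : t = r := by simpa using har
        exact (card_insert_le _ _).trans ht
      · exact hcap r

variable {V : Type*} {G : SimpleGraph V} {v : V}

lemma card_saved_le_sn [Finite V] {b : ℕ → ℕ} {P : ℕ → Set V} (hP : ValidStrategy G b v P)
    {S : Finset V} (hS : ∀ t, ∀ w ∈ burnedSet G v P t, w ∉ S) : #S ≤ sn G b v := by
  have hbdd : BddAbove {m | ∃ P, ValidStrategy G b v P ∧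
      m = Nat.card {w : V | ∀ t, w ∉ burnedSet G v P t}} := by
    refine ⟨Nat.card V, ?_⟩
    rintro m ⟨P, -, rfl⟩
    exact Nat.card_le_card_of_injective _ Subtype.val_injective
  refine le_trans ?_ (le_csSup hbdd ⟨P, hP, rfl⟩)
  rw [Nat.card_coe_set_eq, ← Set.ncard_coe_finset]
  exact Set.ncard_le_ncard (fun w hw t hb ↦ hS t w hb hw) (Set.toFinite _)

lemma burnedSet_of_protected_inBoundary {P : ℕ → Set V} {d : V → ℕ} (hd : d v = 0)
    (hstep : ∀ x y, G.Adj x y → d y ≤ d x + 1) {S : Finset V} (hv : v ∉ S)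
    (hP : ∀ y ∈ S, ∀ x ∉ S, G.Adj x y → ∃ s < d y, y ∈ P s) (t : ℕ) :
    ∀ w ∈ burnedSet G v P t, w ∉ S ∧ d w ≤ t := by
  induction t with
  | zero =>
    rintro w rfl
    exact ⟨hv, hd.le⟩
  | succ t ih =>
    rintro w (hw | ⟨⟨u, hu, huw⟩, hfree⟩)
    · exact ⟨(ih w hw).1, (ih w hw).2.trans t.le_succ⟩
    · obtain ⟨huS, hut⟩ := ih u hu
      have hwt : d w ≤ t + 1 := (hstep u w huw).trans (by omega)
      refine ⟨fun hwS ↦ ?_, hwt⟩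
      obtain ⟨s, hs, hws⟩ := hP w hwS u huS huw
      exact hfree s (by omega) hws

/-- The fire needs at least `d w` rounds to reach `w`, so a set is saved as soon as its inner
boundary can be protected in time. -/
lemma card_le_sn_of_inBoundary [Finite V] {k : ℕ} {d : V → ℕ} (hd : d v = 0)
    (hstep : ∀ x y, G.Adj x y → d y ≤ d x + 1) {S B : Finset V} (hv : v ∉ S) (hBS : B ⊆ S)
    (hB : ∀ y ∈ S, ∀ x ∉ S, G.Adj x y → y ∈ B) (hcard : ∀ t, #{b ∈ B | d b ≤ t} ≤ k * t) :
    #S ≤ sn G (fun _ ↦ k) v := by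
  obtain ⟨day, hlt, hcap⟩ := exists_schedule B d k hcard
  let P : ℕ → Set V := fun t ↦ ({b ∈ B | day b = t} : Finset V)
  have hburn := burnedSet_of_protected_inBoundary (P := P) hd hstep hv fun y hy x hx hxy ↦
    have hyB := hB y hy x hx hxy
    ⟨day y, hlt y hyB, by simp [P, hyB]⟩
  refine card_saved_le_sn (P := P) (fun t ↦ ⟨Set.toFinite _, ?_, ?_⟩) fun t w hw ↦ (hburn t w hw).1
  · rw [Set.ncard_coe_finset]
    exact hcap t
  · exact Set.disjoint_left.2 fun w hw hwb ↦ (hburn t w hwb).1 (hBS (mem_filter.1 hw).1)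

lemma card_filter_le_of_injOn {α : Type*} {d : α → ℕ} {Q : Finset α} (h : Set.InjOn d Q)
    (i j : ℕ) : #{w ∈ Q | i ≤ d w ∧ d w ≤ j} ≤ j + 1 - i := by
  rw [← Nat.card_Icc]
  exact card_le_card_of_injOn d (fun w hw ↦ by simpa using (mem_filter.1 hw).2)
    (h.mono fun w hw ↦ (mem_filter.1 hw).1)

lemma card_filter_adj_or_mem_le {H : SimpleGraph V} (hH : H.Connected) {k : ℕ} (hk : 2 ≤ k)
    {S Q₁ Q₂ : Finset V} (h₁ : Set.InjOn (H.dist v) Q₁) (h₂ : Set.InjOn (H.dist v) Q₂)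
    (hv : v ∉ S) (hnbr : #{w ∈ S | H.Adj v w} ≤ k) (t : ℕ) :
    #{w ∈ {w ∈ S | H.Adj v w ∨ w ∈ Q₁ ∪ Q₂} | H.dist v w ≤ t} ≤ k * t := by
  have hpos : ∀ w ∈ S, 0 < H.dist v w := fun w hw ↦ hH.pos_dist_of_ne fun h ↦ hv (h ▸ hw)
  obtain _ | t := t
  · rw [mul_zero, Nat.le_zero, card_eq_zero, filter_eq_empty_iff]
    exact fun w hw ↦ (hpos w (mem_filter.1 hw).1).not_ge
  have hsub : {w ∈ {w ∈ S | H.Adj v w ∨ w ∈ Q₁ ∪ Q₂} | H.dist v w ≤ t + 1} ⊆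
      {w ∈ S | H.Adj v w} ∪ {w ∈ Q₁ | 2 ≤ H.dist v w ∧ H.dist v w ≤ t + 1} ∪
        {w ∈ Q₂ | 2 ≤ H.dist v w ∧ H.dist v w ≤ t + 1} := fun w hw ↦ by
    simp only [mem_union, mem_filter] at hw ⊢
    have hone : H.dist v w = 1 → H.Adj v w := SimpleGraph.dist_eq_one_iff_adj.1
    have htwo : ¬ H.Adj v w → 2 ≤ H.dist v w := fun h ↦
      lt_of_le_of_ne (hpos w hw.1.1) fun h' ↦ h (hone h'.symm)
    tauto
  calc #{w ∈ {w ∈ S | H.Adj v w ∨ w ∈ Q₁ ∪ Q₂} | H.dist v w ≤ t + 1}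
      ≤ #{w ∈ S | H.Adj v w} + #{w ∈ Q₁ | 2 ≤ H.dist v w ∧ H.dist v w ≤ t + 1} +
          #{w ∈ Q₂ | 2 ≤ H.dist v w ∧ H.dist v w ≤ t + 1} :=
        (card_le_card hsub).trans <|
          (card_union_le _ _).trans (Nat.add_le_add_right (card_union_le _ _) _)
    _ ≤ k + t + t :=
        add_le_add_three hnbr (card_filter_le_of_injOn h₁ 2 _) (card_filter_le_of_injOn h₂ 2 _)
    _ ≤ k * (t + 1) := by nlinarith

/-- A set enclosed by two geodesic pieces `Q₁` and `Q₂` through the root can be saved: in each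
round two firefighters suffice for the pieces, as soon as the neighbours of the root are dealt with
in the first round. -/
lemma card_erase_le_sn_of_geodesics [Finite V] {H : SimpleGraph V} (hGH : G ≤ H)
    (hH : H.Connected) {k : ℕ} (hk : 2 ≤ k) {D Q₁ Q₂ : Finset V} (h₁ : Set.InjOn (H.dist v) Q₁)
    (h₂ : Set.InjOn (H.dist v) Q₂)
    (hD : ∀ w ∈ D, ∀ w', H.Adj w w' → w' ∈ D ∪ Q₁ ∪ Q₂ ∨ w' = v)
    (hnbr : #{w ∈ D ∪ Q₁ ∪ Q₂ | H.Adj v w} ≤ k) :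
    #((D ∪ Q₁ ∪ Q₂).erase v) ≤ sn G (fun _ ↦ k) v := by
  refine card_le_sn_of_inBoundary (d := H.dist v)
    (B := {w ∈ (D ∪ Q₁ ∪ Q₂).erase v | H.Adj v w ∨ w ∈ Q₁ ∪ Q₂}) SimpleGraph.dist_self
    (fun x y hxy ↦ ?_) (notMem_erase v _) (filter_subset _ _) (fun y hy x hx hxy ↦ ?_)
    (card_filter_adj_or_mem_le hH hk h₁ h₂ (notMem_erase v _)
      ((card_le_card (filter_subset_filter _ (erase_subset _ _))).trans hnbr))
  · have hxy1 : H.dist x y = 1 := SimpleGraph.dist_eq_one_iff_adj.2 (hGH hxy)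
    exact hxy1 ▸ hH.dist_triangle
  · have hyx := (hGH hxy).symm
    have hySQ := mem_of_mem_erase hy
    refine mem_filter.2 ⟨hy, ?_⟩
    by_contra! hcon
    have hyD : y ∈ D := by simp only [mem_union] at hySQ hcon; tauto
    have hxv : x ≠ v := by rintro rfl; exact hcon.1 hyx.symm
    exact (hD y hyD x hyx).elim (fun hxS ↦ hx (mem_erase.2 ⟨hxv, hxS⟩)) hxv

end Firefighting

/-- The points of the triangular lattice, in coordinates for which the six neighbours of a point
are given by `hexDir`. -/
abbrev LatticePoint := ℤ × ℤ

/-- The six directions of the triangular lattice, in counterclockwise order. -/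
def hexDir : Fin 6 → LatticePoint := ![(1, 0), (1, 1), (0, 1), (-1, 0), (-1, -1), (0, -1)]

/-- The triangular lattice. -/
def triLattice : SimpleGraph LatticePoint where
  Adj a b := ∃ k, b = a + hexDir k
  symm := ⟨by
    rintro a _ ⟨k, rfl⟩
    have hneg : ∀ k, hexDir (k + 3) = -hexDir k := by decide
    exact ⟨k + 3, by rw [hneg]; abel⟩⟩
  loopless := ⟨by
    rintro a ⟨k, hk⟩
    have hne : ∀ k, hexDir k ≠ 0 := by decide
    exact hne k (by simpa using hk)⟩

/-- The faces of the triangular lattice: `(a, true)` and `(a, false)` are the triangles below and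
above the diagonal of the unit square with lower left corner `a`. -/
abbrev LatticeFace := LatticePoint × Bool

/-- The triangle to the left of the dart from `a` in direction `k`. The triangle to its right is
`leftFace a (k - 1)`. -/
def leftFace (a : LatticePoint) (k : Fin 6) : LatticeFace :=
  (a + ![(0, 0), (0, 0), (-1, 0), (-1, -1), (-1, -1), (0, -1)] k,
    ![true, false, true, false, true, false] k)

lemma fin_six_add_three_add_three (k : Fin 6) : k + 3 + 3 = k := by revert k; decide

lemma hexDir_add_three (k : Fin 6) : hexDir (k + 3) = -hexDir k := by revert k; decide

lemma hexDir_injective : Function.Injective hexDir := by decide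

lemma add_hexDir_add_hexDir_add_three (a : LatticePoint) (k : Fin 6) :
    a + hexDir k + hexDir (k + 3) = a := by
  simp [hexDir_add_three]

lemma triLattice_adj_add_hexDir (a : LatticePoint) (k : Fin 6) : triLattice.Adj a (a + hexDir k) :=
  ⟨k, rfl⟩

lemma leftFace_add_hexDir_add_two (a : LatticePoint) (k : Fin 6) :
    leftFace (a + hexDir k) (k + 2) = leftFace a k := by
  obtain ⟨x, y⟩ := a
  fin_cases k <;> simp [leftFace, hexDir]

lemma leftFace_add_hexDir_add_three (a : LatticePoint) (k : Fin 6) :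
    leftFace (a + hexDir k) (k + 3) = leftFace a (k - 1) := by
  obtain ⟨x, y⟩ := a
  fin_cases k <;> simp [leftFace, hexDir]

lemma exists_leftFace_eq : ∀ f : LatticeFace, ∃ a k, leftFace a k = f
  | (a, true) => ⟨a, 0, by simp [leftFace]⟩
  | (a, false) => ⟨a, 1, by simp [leftFace]⟩

/-- The jump of a face function across the dart from `a` in direction `k`. -/
def jump (s : LatticeFace → ZMod 2) (a : LatticePoint) (k : Fin 6) : ZMod 2 :=
  s (leftFace a k) + s (leftFace a (k - 1))

lemma jump_add_hexDir_add_three (s : LatticeFace → ZMod 2) (a : LatticePoint) (k : Fin 6) :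
    jump s (a + hexDir k) (k + 3) = jump s a k := by
  have hk : k + 3 - 1 = k + 2 := by revert k; decide
  rw [jump, jump, hk, leftFace_add_hexDir_add_two, leftFace_add_hexDir_add_three, add_comm]

lemma sum_jump_eq_zero (s : LatticeFace → ZMod 2) (a : LatticePoint) : ∑ k, jump s a k = 0 := by
  have hrot : ∑ k, s (leftFace a (k - 1)) = ∑ k, s (leftFace a k) :=
    Equiv.sum_comp (Equiv.subRight (1 : Fin 6)) fun k ↦ s (leftFace a k)
  simp only [jump, Finset.sum_add_distrib, hrot, CharTwo.add_self_eq_zero]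

lemma sum_jump_out_eq_zero (Y : Finset LatticePoint) (s : LatticeFace → ZMod 2) :
    ∑ d ∈ Y ×ˢ Finset.univ with d.1 + hexDir d.2 ∉ Y, jump s d.1 d.2 = 0 := by
  have htotal : ∑ d ∈ Y ×ˢ Finset.univ, jump s d.1 d.2 = 0 := by
    rw [Finset.sum_product]
    exact Finset.sum_eq_zero fun a _ ↦ sum_jump_eq_zero s a
  have hinner : ∑ d ∈ Y ×ˢ Finset.univ with d.1 + hexDir d.2 ∈ Y, jump s d.1 d.2 = 0 := by
    refine Finset.sum_involution (fun d _ ↦ (d.1 + hexDir d.2, d.2 + 3)) ?_ ?_ ?_ ?_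
    · rintro ⟨a, k⟩ -
      rw [jump_add_hexDir_add_three, CharTwo.add_self_eq_zero]
    · rintro ⟨a, k⟩ - - h
      have hk : ∀ k : Fin 6, k + 3 ≠ k := by decide
      exact hk k (Prod.ext_iff.1 h).2
    · rintro ⟨a, k⟩ hd
      simpa [add_hexDir_add_hexDir_add_three, and_comm] using hd
    · rintro ⟨a, k⟩ -
      rw [add_hexDir_add_hexDir_add_three, fin_six_add_three_add_three]
  rwa [← Finset.sum_filter_add_sum_filter_not _ fun d ↦ d.1 + hexDir d.2 ∈ Y, hinner,
    zero_add] at htotal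

lemma exists_ne_jump_ne_zero_of_finite {Y : Set LatticePoint} (hY : Y.Finite)
    (s : LatticeFace → ZMod 2) {a₀ : LatticePoint} {k₀ : Fin 6} (ha : a₀ ∈ Y)
    (hb : a₀ + hexDir k₀ ∉ Y) (h₀ : jump s a₀ k₀ ≠ 0) :
    ∃ a k, a ∈ Y ∧ a + hexDir k ∉ Y ∧ (a, k) ≠ (a₀, k₀) ∧ jump s a k ≠ 0 := by
  by_contra! h
  lift Y to Finset LatticePoint using hY
  refine h₀ ?_
  rw [← sum_jump_out_eq_zero Y s, Finset.sum_eq_single_of_mem (a₀, k₀)]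
  · simpa using ⟨ha, hb⟩
  · rintro ⟨a, k⟩ hd hne
    simp only [Finset.mem_filter, Finset.mem_product, Finset.mem_univ, and_true] at hd
    exact h a k hd.1 hd.2 hne

/-- By parity, a face function cannot jump across exactly one dart that leaves `Y`. -/
lemma exists_ne_jump_ne_zero {Y : Set LatticePoint} (hY : Y.Finite ∨ Yᶜ.Finite)
    (s : LatticeFace → ZMod 2) {a₀ : LatticePoint} {k₀ : Fin 6} (ha : a₀ ∈ Y)
    (hb : a₀ + hexDir k₀ ∉ Y) (h₀ : jump s a₀ k₀ ≠ 0) :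
    ∃ a k, a ∈ Y ∧ a + hexDir k ∉ Y ∧ (a, k) ≠ (a₀, k₀) ∧ jump s a k ≠ 0 := by
  obtain hY | hY := hY
  · exact exists_ne_jump_ne_zero_of_finite hY s ha hb h₀
  obtain ⟨b, l, hbY, hbl, hne, hj⟩ := exists_ne_jump_ne_zero_of_finite hY s
    (a₀ := a₀ + hexDir k₀) (k₀ := k₀ + 3) hb
    (by simpa [add_hexDir_add_hexDir_add_three] using ha) (by rwa [jump_add_hexDir_add_three])
  have hback := add_hexDir_add_hexDir_add_three b l
  refine ⟨b + hexDir l, l + 3, by simpa using hbl, by rwa [hback], fun h ↦ hne ?_,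
    by rwa [jump_add_hexDir_add_three]⟩
  obtain ⟨rfl, rfl⟩ := Prod.ext_iff.1 h
  rw [hback, fin_six_add_three_add_three]

/-- Mod-2 chains of edges of the triangular lattice. Unordered pairs of points that are not edges
of the lattice play no role for the boundary. -/
abbrev LatticeChain := Sym2 LatticePoint → ZMod 2

/-- The boundary of a chain of edges. -/
def boundary : LatticeChain →ₗ[ZMod 2] (LatticePoint → ZMod 2) where
  toFun c a := ∑ k, c s(a, a + hexDir k)
  map_add' c d := by
    ext a
    simp [Finset.sum_add_distrib]
  map_smul' r c := by
    ext a
    simp [Finset.mul_sum]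

lemma sym2_dart_eq_iff {p a : LatticePoint} {l k : Fin 6} :
    s(p, p + hexDir l) = s(a, a + hexDir k) ↔
      (p = a ∧ l = k) ∨ (p = a + hexDir k ∧ l = k + 3) := by
  rw [Sym2.eq_iff]
  constructor
  · rintro (⟨rfl, h⟩ | ⟨rfl, h⟩)
    · exact .inl ⟨rfl, hexDir_injective (add_left_cancel h)⟩
    · refine .inr ⟨rfl, hexDir_injective ?_⟩
      rw [hexDir_add_three]
      exact eq_neg_of_add_eq_zero_right (by simpa [add_assoc] using h)
  · rintro (⟨rfl, rfl⟩ | ⟨rfl, rfl⟩)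
    · exact .inl ⟨rfl, rfl⟩
    · exact .inr ⟨rfl, add_hexDir_add_hexDir_add_three _ _⟩

lemma boundary_single {a b : LatticePoint} (hab : triLattice.Adj a b) :
    boundary (Pi.single s(a, b) 1) = Pi.single a 1 + Pi.single b 1 := by
  have hne := hab.ne
  obtain ⟨k, rfl⟩ := hab
  ext p
  have hsplit : ∀ l, (Pi.single s(a, a + hexDir k) 1 : LatticeChain) s(p, p + hexDir l) =
      (if l = k then Pi.single (M := fun _ ↦ ZMod 2) a 1 p else 0) +
        if l = k + 3 then Pi.single (M := fun _ ↦ ZMod 2) (a + hexDir k) 1 p else 0 := fun l ↦ by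
    simp only [Pi.single_apply, sym2_dart_eq_iff]
    grind
  simp [boundary, hsplit, Finset.sum_add_distrib]

/-- The chains whose edges have both ends in `Y`. -/
def chainsOn (Y : Set LatticePoint) : Submodule (ZMod 2) LatticeChain where
  carrier := {c | ∀ p ∉ Y, ∀ q, c s(p, q) = 0}
  add_mem' hc hd p hp q := by simp [hc p hp q, hd p hp q]
  zero_mem' _ _ _ := rfl
  smul_mem' r c hc p hp q := by simp [hc p hp q]

lemma mem_chainsOn {Y : Set LatticePoint} {c : LatticeChain} :
    c ∈ chainsOn Y ↔ ∀ p ∉ Y, ∀ q, c s(p, q) = 0 := Iff.rfl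

lemma chainsOn_mono {Y Z : Set LatticePoint} (h : Y ⊆ Z) : chainsOn Y ≤ chainsOn Z :=
  fun _ hc p hp ↦ hc p fun hpY ↦ hp (h hpY)

lemma single_mem_chainsOn {Y : Set LatticePoint} {a b : LatticePoint} (ha : a ∈ Y) (hb : b ∈ Y) :
    (Pi.single s(a, b) 1 : LatticeChain) ∈ chainsOn Y := by
  intro p hp q
  refine Pi.single_eq_of_ne (fun h ↦ ?_) _
  rcases Sym2.eq_iff.1 h with ⟨rfl, -⟩ | ⟨rfl, -⟩
  exacts [hp ha, hp hb]

lemma exists_boundary_eq {Y : Set LatticePoint} {a b : Y}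
    (h : (triLattice.induce Y).Reachable a b) :
    ∃ c ∈ chainsOn Y, boundary c = Pi.single a.1 1 + Pi.single b.1 1 := by
  obtain ⟨w⟩ := h
  induction w with
  | nil => exact ⟨0, zero_mem _, by rw [map_zero, CharTwo.add_self_eq_zero]⟩
  | @cons a b d hab _ ih =>
    obtain ⟨c, hc, hbd⟩ := ih
    refine ⟨Pi.single s(a.1, b.1) 1 + c, add_mem (single_mem_chainsOn a.2 b.2) hc, ?_⟩
    rw [map_add, boundary_single (SimpleGraph.induce_adj.1 hab), hbd, add_assoc,
      CharTwo.add_cancel_left]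

/-- A filling of a chain `c` is a set of faces, given by its indicator function, whose boundary
is `c`. -/
def IsFilling (c : LatticeChain) (s : LatticeFace → ZMod 2) : Prop :=
  ∀ a k, c s(a, a + hexDir k) = jump s a k

lemma IsFilling.add {c d : LatticeChain} {s t : LatticeFace → ZMod 2} (hc : IsFilling c s)
    (hd : IsFilling d t) : IsFilling (c + d) (s + t) := by
  intro a k
  simp only [Pi.add_apply, hc a k, hd a k, jump]
  ring

lemma IsFilling.apply_leftFace_eq {c : LatticeChain} {s : LatticeFace → ZMod 2}
    (h : IsFilling c s) {a : LatticePoint} (ha : ∀ q, c s(a, q) = 0) (k l : Fin 6) :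
    s (leftFace a k) = s (leftFace a l) := by
  have hturn : ∀ k, s (leftFace a k) = s (leftFace a (k - 1)) := fun k ↦
    CharTwo.add_eq_zero.1 ((h a k).symm.trans (ha _))
  have hzero : ∀ k, s (leftFace a k) = s (leftFace a 0) := fun k ↦ by
    induction k using Fin.induction with
    | zero => rfl
    | succ k ih => rw [hturn, ← ih, ← Fin.coeSucc_eq_succ, add_sub_cancel_right]
  exact (hzero k).trans (hzero l).symm

lemma IsFilling.eq_of_preconnected {c : LatticeChain} {s : LatticeFace → ZMod 2}
    (h : IsFilling c s) {Y : Set LatticePoint} (hY : (triLattice.induce Y).Preconnected)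
    (hc : c ∈ chainsOn Yᶜ) {a b : LatticePoint} (ha : a ∈ Y) (hb : b ∈ Y) (k l : Fin 6) :
    s (leftFace a k) = s (leftFace b l) := by
  have hfree : ∀ p : Y, ∀ q, c s(p.1, q) = 0 := fun p ↦ hc p.1 (not_not.2 p.2)
  obtain ⟨w⟩ := hY ⟨a, ha⟩ ⟨b, hb⟩
  suffices ∀ {p q : Y}, (triLattice.induce Y).Walk p q →
      s (leftFace p.1 0) = s (leftFace q.1 0) from
    (h.apply_leftFace_eq (hfree ⟨a, ha⟩) k 0).trans
      ((this w).trans (h.apply_leftFace_eq (hfree ⟨b, hb⟩) 0 l))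
  intro p q w
  induction w with
  | nil => rfl
  | @cons p q r hpq _ ih =>
    obtain ⟨k, hk⟩ := hpq
    rw [← ih, h.apply_leftFace_eq (hfree p) 0 k, h.apply_leftFace_eq (hfree q) 0 (k + 2)]
    rw [show q.1 = p.1 + hexDir k from hk, leftFace_add_hexDir_add_two]

lemma exists_sub_apply_sub_one_eq {A : Type*} [AddCommGroup A] (f : ℤ → A) :
    ∃ F : ℤ → A, ∀ n, F n - F (n - 1) = f n := by
  refine ⟨fun n ↦ ∑ i ∈ Finset.Ioc 0 n, f i - ∑ i ∈ Finset.Ioc n 0, f i, fun n ↦ ?_⟩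
  rcases le_or_gt n 0 with hn | hn
  · have hins : Finset.Ioc (n - 1) 0 = insert n (Finset.Ioc n 0) := by
      ext i
      simp only [Finset.mem_insert, Finset.mem_Ioc]
      omega
    simp [hins, Finset.Ioc_eq_empty_of_le hn, Finset.Ioc_eq_empty_of_le (show n - 1 ≤ 0 by omega)]
  · have hins : Finset.Ioc 0 n = insert n (Finset.Ioc 0 (n - 1)) := by
      ext i
      simp only [Finset.mem_insert, Finset.mem_Ioc]
      omega
    simp [hins, Finset.Ioc_eq_empty_of_le hn.le,
      Finset.Ioc_eq_empty_of_le (show 0 ≤ n - 1 by omega)]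

lemma exists_potential {A : Type*} [AddCommGroup A] (α γ : ℤ → ℤ → A)
    (h : ∀ i j, α i j - α (i - 1) j = γ i j - γ i (j - 1)) :
    ∃ u : ℤ → ℤ → A, (∀ i j, u i j - u i (j - 1) = α i j) ∧
      ∀ i j, u i j - u (i - 1) j = γ i j := by
  choose Q hQ using fun i ↦ exists_sub_apply_sub_one_eq (α i)
  obtain ⟨R, hR⟩ := exists_sub_apply_sub_one_eq fun i ↦ γ i 0
  let u : ℤ → ℤ → A := fun i j ↦ R i + (Q i j - Q i 0)
  have hα : ∀ i j, u i j - u i (j - 1) = α i j := fun i j ↦ by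
    rw [← hQ i j]
    simp only [u]
    abel
  refine ⟨u, hα, fun i j ↦ ?_⟩
  have hstep : ∀ j, u i j - u (i - 1) j - γ i j = u i (j - 1) - u (i - 1) (j - 1) - γ i (j - 1) :=
    fun j ↦ by
      rw [← sub_eq_zero, ← sub_eq_zero.2 (h i j), ← hα i j, ← hα (i - 1) j]
      abel
  have hzero : u i 0 - u (i - 1) 0 - γ i 0 = 0 := by simp [u, hR]
  rw [← sub_eq_zero]
  induction j using Int.induction_on with
  | zero => exact hzero
  | succ j ih => rw [hstep, add_sub_cancel_right, ih]
  | pred j ih => rw [← hstep, ih]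

lemma isFilling_of_lt_three {c : LatticeChain} {s : LatticeFace → ZMod 2}
    (h : ∀ a, ∀ k : Fin 6, k < 3 → c s(a, a + hexDir k) = jump s a k) : IsFilling c s := by
  intro a k
  rcases lt_or_ge k 3 with hk | hk
  · exact h a k hk
  · have hk' : k + 3 < 3 := by revert k; decide
    have hrev := h (a + hexDir k) (k + 3) hk'
    rwa [add_hexDir_add_hexDir_add_three, Sym2.eq_swap, jump_add_hexDir_add_three] at hrev

/-- The first homology of the plane vanishes. -/
lemma exists_isFilling {c : LatticeChain} (hc : boundary c = 0) : ∃ s, IsFilling c s := by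
  let cH : ℤ → ℤ → ZMod 2 := fun i j ↦ c s((i, j), (i + 1, j))
  let cD : ℤ → ℤ → ZMod 2 := fun i j ↦ c s((i, j), (i + 1, j + 1))
  let cV : ℤ → ℤ → ZMod 2 := fun i j ↦ c s((i, j), (i, j + 1))
  have hclosed : ∀ i j, cH i j + cD i j + cV i j + cH (i - 1) j + cD (i - 1) (j - 1)
      + cV i (j - 1) = 0 := fun i j ↦ by
    have hij := congrFun hc (i, j)
    simp only [boundary, LinearMap.coe_mk, AddHom.coe_mk, Fin.sum_univ_six] at hij
    simp only [hexDir, Int.reduceNeg, Fin.isValue, Matrix.cons_val_zero, Matrix.cons_val_one,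
      Matrix.cons_val, Prod.mk_add_mk, add_zero, ← sub_eq_add_neg, Pi.zero_apply] at hij
    simp [cH, cD, cV, hij, Sym2.eq_swap (a := (i - 1, j)), Sym2.eq_swap (a := (i - 1, j - 1)),
      Sym2.eq_swap (a := (i, j - 1))]
  obtain ⟨u, hu, hu'⟩ := exists_potential (fun i j ↦ cH i j + cD i (j - 1))
    (fun i j ↦ cV i j + cD i j) fun i j ↦ by
      have := hclosed i j
      grind
  refine ⟨fun f ↦ u f.1.1 f.1.2 + if f.2 then 0 else cD f.1.1 f.1.2,
    isFilling_of_lt_three ?_⟩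
  rintro ⟨i, j⟩ k hk
  obtain rfl | rfl | rfl : k = 0 ∨ k = 1 ∨ k = 2 := by revert k; decide
  · have := hu i j
    simp only [jump, leftFace, hexDir, Int.reduceNeg, Fin.isValue, Matrix.cons_val_zero,
      Matrix.cons_val, Prod.mk_add_mk, add_zero, zero_sub, sub_add_cancel, ← sub_eq_add_neg,
      Nat.succ_eq_add_one, Nat.reduceAdd, ↓reduceIte, Bool.false_eq_true, cH, cD] at this ⊢
    grind
  · simp only [jump, leftFace, hexDir, Int.reduceNeg, Fin.isValue, Matrix.cons_val_one,
      Matrix.cons_val_zero, Prod.mk_add_mk, add_zero, sub_self, Nat.succ_eq_add_one,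
      Nat.reduceAdd, ↓reduceIte, Bool.false_eq_true, cD]
    grind
  · have := hu' i j
    simp only [jump, leftFace, hexDir, Int.reduceNeg, Fin.isValue, Matrix.cons_val_zero,
      Matrix.cons_val_one, Matrix.cons_val, Prod.mk_add_mk, add_zero, Fin.reduceSub,
      ← sub_eq_add_neg, Nat.succ_eq_add_one, Nat.reduceAdd, ↓reduceIte, Bool.false_eq_true, cV,
      cD] at this ⊢
    grind

lemma reachable_induce_add_nsmul {Y : Set LatticePoint} (a : LatticePoint) (k : Fin 6) (n : ℕ)
    (h : ∀ i ≤ n, a + i • hexDir k ∈ Y) :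
    (triLattice.induce Y).Reachable ⟨a, by simpa using h 0 n.zero_le⟩
      ⟨a + n • hexDir k, h n le_rfl⟩ := by
  induction n with
  | zero => simp
  | succ n ih =>
    refine (ih fun i hi ↦ h i (hi.trans n.le_succ)).trans (SimpleGraph.Adj.reachable ⟨k, ?_⟩)
    simp [add_one_mul, add_assoc]

lemma reachable_induce_row {Y : Set LatticePoint} {x x' y : ℤ}
    (h : ∀ z ∈ Set.uIcc x x', (z, y) ∈ Y) :
    (triLattice.induce Y).Reachable ⟨(x, y), h x Set.left_mem_uIcc⟩
      ⟨(x', y), h x' Set.right_mem_uIcc⟩ := by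
  wlog hx : x ≤ x' generalizing x x'
  · exact (this (by rwa [Set.uIcc_comm]) (le_of_not_ge hx)).symm
  obtain ⟨n, rfl⟩ := Int.le.dest hx
  simpa [hexDir] using reachable_induce_add_nsmul (Y := Y) (x, y) 0 n fun i hi ↦ by
    simpa [hexDir] using h (x + i) (by rw [Set.uIcc_of_le hx, Set.mem_Icc]; omega)

lemma reachable_induce_column {Y : Set LatticePoint} {x y y' : ℤ}
    (h : ∀ z ∈ Set.uIcc y y', (x, z) ∈ Y) :
    (triLattice.induce Y).Reachable ⟨(x, y), h y Set.left_mem_uIcc⟩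
      ⟨(x, y'), h y' Set.right_mem_uIcc⟩ := by
  wlog hy : y ≤ y' generalizing y y'
  · exact (this (by rwa [Set.uIcc_comm]) (le_of_not_ge hy)).symm
  obtain ⟨n, rfl⟩ := Int.le.dest hy
  simpa [hexDir] using reachable_induce_add_nsmul (Y := Y) (x, y) 2 n fun i hi ↦ by
    simpa [hexDir] using h (y + i) (by rw [Set.uIcc_of_le hy, Set.mem_Icc]; omega)

lemma preconnected_induce_prod (I J : Set ℤ) [I.OrdConnected] [J.OrdConnected] :
    (triLattice.induce (I ×ˢ J)).Preconnected := by
  rintro ⟨⟨x, y⟩, hx, hy⟩ ⟨⟨x', y'⟩, hx', hy'⟩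
  have hrow : ∀ z ∈ Set.uIcc x x', (z, y) ∈ I ×ˢ J := fun z hz ↦
    ⟨Set.OrdConnected.uIcc_subset ‹_› hx hx' hz, hy⟩
  have hcolumn : ∀ z ∈ Set.uIcc y y', (x', z) ∈ I ×ˢ J := fun z hz ↦
    ⟨hx', Set.OrdConnected.uIcc_subset ‹_› hy hy' hz⟩
  exact (reachable_induce_row hrow).trans (reachable_induce_column hcolumn)

lemma triLattice_preconnected : triLattice.Preconnected := by
  have h := preconnected_induce_prod Set.univ Set.univ
  rw [Set.univ_prod_univ] at h
  exact (SimpleGraph.induceUnivIso triLattice).preconnected_iff.1 h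

/-- The square box of radius `N` around the origin. -/
abbrev squareBox (N : ℕ) : Set LatticePoint := Set.Icc (-(N : ℤ)) N ×ˢ Set.Icc (-(N : ℤ)) N

lemma squareBox_finite (N : ℕ) : (squareBox N).Finite :=
  (Set.finite_Icc _ _).prod (Set.finite_Icc _ _)

lemma compl_squareBox_preconnected (N : ℕ) : (triLattice.induce (squareBox N)ᶜ).Preconnected := by
  have hcover : (squareBox N)ᶜ = Set.Iio (-N : ℤ) ×ˢ Set.univ ∪ Set.univ ×ˢ Set.Iio (-N : ℤ) ∪
      (Set.Ioi (N : ℤ) ×ˢ Set.univ ∪ Set.univ ×ˢ Set.Ioi (N : ℤ)) := by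
    ext ⟨x, y⟩
    simp only [Set.mem_compl_iff, Set.mem_prod, Set.mem_Icc, Set.mem_union, Set.mem_Iio,
      Set.mem_univ, Set.mem_Ioi, and_true, true_and]
    omega
  have hstrip : ∀ (I J : Set ℤ) [I.OrdConnected] [J.OrdConnected],
      (triLattice.induce (I ×ˢ J)).Preconnected := preconnected_induce_prod
  have hnegative := SimpleGraph.induce_union_connected (hstrip (Set.Iio (-N)) Set.univ)
    (hstrip Set.univ (Set.Iio (-N))) ⟨(-N - 1, -N - 1), by simp⟩
  have hpositive := SimpleGraph.induce_union_connected (hstrip (Set.Ioi N) Set.univ)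
    (hstrip Set.univ (Set.Ioi N)) ⟨(N + 1, N + 1), by simp⟩
  rw [hcover]
  exact (SimpleGraph.induce_union_connected hnegative.preconnected hpositive.preconnected
    ⟨(-N - 1, N + 1), by simp⟩).preconnected

/-- A partition of the triangular lattice into connected fibres, one for each element of `V`, of
which only the fibre of `outer` is unbounded. It plays the role of a plane drawing of a graph on
`V`. -/
structure LatticeModel (V : Type*) where
  label : LatticePoint → V
  fiber_preconnected : ∀ v, (triLattice.induce (label ⁻¹' {v})).Preconnected
  label_surjective : Function.Surjective label
  radius : ℕ
  outer : V
  label_eq_outer : ∀ a ∉ squareBox radius, label a = outer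

namespace LatticeModel

variable {V : Type*} (L : LatticeModel V)

/-- The box outside which all points have the label `outer`. -/
abbrev box : Set LatticePoint := squareBox L.radius

/-- The set of lattice points with label `x`. -/
abbrev fiber (x : V) : Set LatticePoint := L.label ⁻¹' {x}

/-- The quotient of the triangular lattice by the fibres. -/
def graph : SimpleGraph V where
  Adj x y := x ≠ y ∧ ∃ a b, triLattice.Adj a b ∧ L.label a = x ∧ L.label b = y
  symm := ⟨fun _ _ ⟨hne, a, b, hab, ha, hb⟩ ↦ ⟨hne.symm, b, a, hab.symm, hb, ha⟩⟩
  loopless := ⟨fun _ h ↦ h.1 rfl⟩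

lemma graph_adj_label {a b : LatticePoint} (hab : triLattice.Adj a b)
    (hne : L.label a ≠ L.label b) : L.graph.Adj (L.label a) (L.label b) :=
  ⟨hne, a, b, hab, rfl, rfl⟩

lemma compl_box_subset_fiber_outer : L.boxᶜ ⊆ L.fiber L.outer := L.label_eq_outer

lemma fiber_finite_or_compl_finite (x : V) : (L.fiber x).Finite ∨ (L.fiber x)ᶜ.Finite := by
  have hbox : L.box.Finite := squareBox_finite _
  obtain rfl | hx := eq_or_ne x L.outer
  · exact .inr (hbox.subset (Set.compl_subset_comm.1 L.compl_box_subset_fiber_outer))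
  · refine .inl (hbox.subset fun a ha ↦ by_contra fun hout ↦ hx ?_)
    exact ha.symm.trans (L.label_eq_outer a hout)

lemma exists_base (x : V) : ∃ a, L.label a = x ∧ (x = L.outer → a ∉ L.box) := by
  obtain rfl | hx := eq_or_ne x L.outer
  · have hout : ((L.radius + 1, 0) : LatticePoint) ∉ L.box := by simp [box]
    exact ⟨_, L.label_eq_outer _ hout, fun _ ↦ hout⟩
  · obtain ⟨a, ha⟩ := L.label_surjective x
    exact ⟨a, ha, fun h ↦ absurd h hx⟩

/-- A base point of the fibre of `x`, outside the box for the outer fibre. -/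
noncomputable def base (x : V) : LatticePoint := (L.exists_base x).choose

@[simp] lemma label_base (x : V) : L.label (L.base x) = x := (L.exists_base x).choose_spec.1

lemma base_outer_notMem_box : L.base L.outer ∉ L.box := (L.exists_base L.outer).choose_spec.2 rfl

lemma exists_link (a : LatticePoint) : ∃ c ∈ chainsOn (L.fiber (L.label a)),
    boundary c = Pi.single a 1 + Pi.single (L.base (L.label a)) 1 ∧
      (a ∉ L.box → c ∈ chainsOn L.boxᶜ) := by
  by_cases ha : a ∈ L.box
  · obtain ⟨c, hc, hbd⟩ := exists_boundary_eq (L.fiber_preconnected (L.label a) ⟨a, rfl⟩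
      ⟨L.base (L.label a), L.label_base _⟩)
    exact ⟨c, hc, hbd, fun h ↦ absurd ha h⟩
  · rw [L.label_eq_outer a ha]
    obtain ⟨c, hc, hbd⟩ := exists_boundary_eq (compl_squareBox_preconnected L.radius ⟨a, ha⟩
      ⟨L.base L.outer, L.base_outer_notMem_box⟩)
    exact ⟨c, chainsOn_mono L.compl_box_subset_fiber_outer hc, hbd, fun _ ↦ hc⟩

/-- A chain within a fibre joining `a` to the base point. -/
noncomputable def link (a : LatticePoint) : LatticeChain := (L.exists_link a).choose

lemma link_mem_chainsOn_fiber (a : LatticePoint) : L.link a ∈ chainsOn (L.fiber (L.label a)) :=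
  (L.exists_link a).choose_spec.1

lemma boundary_link (a : LatticePoint) :
    boundary (L.link a) = Pi.single a 1 + Pi.single (L.base (L.label a)) 1 :=
  (L.exists_link a).choose_spec.2.1

lemma link_mem_chainsOn_compl_box {a : LatticePoint} (ha : a ∉ L.box) :
    L.link a ∈ chainsOn L.boxᶜ :=
  (L.exists_link a).choose_spec.2.2 ha

lemma link_apply_of_label_ne (a : LatticePoint) {p q : LatticePoint}
    (hpq : L.label p ≠ L.label q) : L.link a s(p, q) = 0 := by
  by_cases hp : L.label p = L.label a
  · rw [Sym2.eq_swap]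
    exact L.link_mem_chainsOn_fiber a q (fun hq ↦ hpq (hp.trans hq.symm)) p
  · exact L.link_mem_chainsOn_fiber a p hp q

/-- The chain through the lattice edge `ε` joining the base points of the two fibres that `ε`
meets. -/
noncomputable def edgeChain (ε : Sym2 LatticePoint) : LatticeChain :=
  Pi.single ε 1 + Sym2.lift ⟨fun a b ↦ L.link a + L.link b, fun _ _ ↦ add_comm _ _⟩ ε

lemma edgeChain_mk (a b : LatticePoint) :
    L.edgeChain s(a, b) = Pi.single s(a, b) 1 + (L.link a + L.link b) := rfl

lemma boundary_edgeChain {a b : LatticePoint} (hab : triLattice.Adj a b) :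
    boundary (L.edgeChain s(a, b)) =
      Pi.single (L.base (L.label a)) 1 + Pi.single (L.base (L.label b)) 1 := by
  rw [edgeChain_mk, map_add, map_add, boundary_single hab, boundary_link, boundary_link]
  grind

lemma edgeChain_apply_of_label_ne (ε : Sym2 LatticePoint) {p q : LatticePoint}
    (hpq : L.label p ≠ L.label q) : L.edgeChain ε s(p, q) = if s(p, q) = ε then 1 else 0 := by
  induction ε with | h a b
  simp [edgeChain_mk, link_apply_of_label_ne, hpq, Pi.single_apply]

lemma edgeChain_mem_chainsOn (a b : LatticePoint) :
    L.edgeChain s(a, b) ∈ chainsOn (L.fiber (L.label a) ∪ L.fiber (L.label b)) := by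
  rw [edgeChain_mk]
  refine add_mem (single_mem_chainsOn (.inl rfl) (.inr rfl)) (add_mem ?_ ?_)
  · exact chainsOn_mono Set.subset_union_left (L.link_mem_chainsOn_fiber a)
  · exact chainsOn_mono Set.subset_union_right (L.link_mem_chainsOn_fiber b)

lemma edgeChain_mem_chainsOn_compl_box {a b : LatticePoint} (ha : a ∉ L.box) (hb : b ∉ L.box) :
    L.edgeChain s(a, b) ∈ chainsOn L.boxᶜ :=
  add_mem (single_mem_chainsOn ha hb)
    (add_mem (L.link_mem_chainsOn_compl_box ha) (L.link_mem_chainsOn_compl_box hb))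

lemma exists_crossing (e : Sym2 V) : ∃ ε : Sym2 LatticePoint,
    e ∈ L.graph.edgeSet → ε ∈ triLattice.edgeSet ∧ ε.map L.label = e := by
  by_cases he : e ∈ L.graph.edgeSet
  · induction e with | h x y
    obtain ⟨-, a, b, hab, rfl, rfl⟩ := he
    exact ⟨s(a, b), fun _ ↦ ⟨hab, rfl⟩⟩
  · exact ⟨s(0, 0), fun h ↦ absurd h he⟩

/-- A lattice edge representing an edge of the quotient graph. -/
noncomputable def crossing (e : Sym2 V) : Sym2 LatticePoint := (L.exists_crossing e).choose

lemma crossing_mem_edgeSet {e : Sym2 V} (he : e ∈ L.graph.edgeSet) :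
    L.crossing e ∈ triLattice.edgeSet :=
  ((L.exists_crossing e).choose_spec he).1

lemma map_label_crossing {e : Sym2 V} (he : e ∈ L.graph.edgeSet) :
    (L.crossing e).map L.label = e :=
  ((L.exists_crossing e).choose_spec he).2

lemma exists_crossing_eq {x y : V} (h : L.graph.Adj x y) : ∃ a k,
    L.crossing s(x, y) = s(a, a + hexDir k) ∧ L.label a = x ∧ L.label (a + hexDir k) = y := by
  have hmem := L.crossing_mem_edgeSet (e := s(x, y)) h
  have hmap := L.map_label_crossing (e := s(x, y)) h
  generalize L.crossing s(x, y) = ε at hmem hmap ⊢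
  induction ε with | h a b
  rcases Sym2.eq_iff.1 hmap with ⟨ha, hb⟩ | ⟨ha, hb⟩
  · obtain ⟨k, rfl⟩ : triLattice.Adj a b := hmem
    exact ⟨a, k, rfl, ha, hb⟩
  · obtain ⟨k, rfl⟩ : triLattice.Adj b a := SimpleGraph.Adj.symm hmem
    exact ⟨b, k, Sym2.eq_swap, hb, ha⟩

lemma boundary_edgeChain_crossing {x y : V} (h : L.graph.Adj x y) :
    boundary (L.edgeChain (L.crossing s(x, y))) =
      Pi.single (L.base x) 1 + Pi.single (L.base y) 1 := by
  obtain ⟨a, k, hε, rfl, rfl⟩ := L.exists_crossing_eq h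
  rw [hε, L.boundary_edgeChain (triLattice_adj_add_hexDir a k)]

lemma edgeChain_crossing_mem_chainsOn {x y : V} (h : L.graph.Adj x y) :
    L.edgeChain (L.crossing s(x, y)) ∈ chainsOn (L.fiber x ∪ L.fiber y) := by
  obtain ⟨a, k, hε, rfl, rfl⟩ := L.exists_crossing_eq h
  exact hε ▸ L.edgeChain_mem_chainsOn a _

end LatticeModel

open scoped Classical in
/-- The algebraic form of Euler's inequality: if every vector of `Z` is a difference of face values
across edges, where each face that appears has at least `m` edges, then `Z` has dimension at most
`2 * #E / m`. -/
lemma mul_finrank_le_two_mul_card {K E F : Type*} [Field K] [Fintype E] [Finite F]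
    (Z : Submodule K (E → K)) (σ τ : E → F) (s : Z → F → K)
    (hs : ∀ z e, z.1 e = s z (σ e) - s z (τ e)) {m : ℕ}
    (hm : ∀ f e₀, Xor (σ e₀ = f) (τ e₀ = f) → m ≤ #{e | Xor (σ e = f) (τ e = f)}) :
    m * Module.finrank K Z ≤ 2 * Fintype.card E := by
  have := Fintype.ofFinite F
  let r : F → E → K := fun f e ↦ (if σ e = f then 1 else 0) - if τ e = f then 1 else 0
  have hr : ∀ f e, ¬ Xor (σ e = f) (τ e = f) → r f e = 0 := fun f e h ↦ by
    simp only [r]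
    grind
  let faces : Finset F := {f | ∃ e, Xor (σ e = f) (τ e = f)}
  have hspan : Z ≤ Submodule.span K (faces.image r : Set (E → K)) := fun z hz ↦ by
    have hz' : z = ∑ f, s ⟨z, hz⟩ f • r f := by
      ext e
      exact (hs ⟨z, hz⟩ e).trans (by simp [r, mul_sub])
    rw [hz']
    refine Submodule.sum_mem _ fun f _ ↦ ?_
    by_cases hf : f ∈ faces
    · exact Submodule.smul_mem _ _ (Submodule.subset_span (Finset.mem_image_of_mem r hf))
    · have hrf : r f = 0 := funext fun e ↦ hr f e fun h ↦ hf (by simpa [faces] using ⟨e, h⟩)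
      rw [hrf, smul_zero]
      exact zero_mem _
  have htwo : ∀ e, #{f ∈ faces | Xor (σ e = f) (τ e = f)} ≤ 2 := fun e ↦ by
    refine (Finset.card_le_card (t := {σ e, τ e}) fun f hf ↦ ?_).trans Finset.card_le_two
    have := (Finset.mem_filter.1 hf).2
    grind
  calc m * Module.finrank K Z ≤ m * #faces :=
        Nat.mul_le_mul_left m <| (Submodule.finrank_mono hspan).trans <|
          (finrank_span_finset_le_card _).trans Finset.card_image_le
    _ = ∑ _f ∈ faces, m := by rw [Finset.sum_const, smul_eq_mul, mul_comm]
    _ ≤ ∑ f ∈ faces, #{e | Xor (σ e = f) (τ e = f)} := Finset.sum_le_sum fun f hf ↦ by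
        obtain ⟨e₀, he₀⟩ := (Finset.mem_filter.1 hf).2
        exact hm f e₀ he₀
    _ = ∑ e, #{f ∈ faces | Xor (σ e = f) (τ e = f)} := by
        simp only [Finset.card_filter]
        exact Finset.sum_comm
    _ ≤ ∑ _e : E, 2 := Finset.sum_le_sum fun e _ ↦ htwo e
    _ = 2 * Fintype.card E := by rw [Finset.sum_const, smul_eq_mul, mul_comm]; rfl

section CycleSpace

variable {V : Type*} [Fintype V]

open scoped Classical in
/-- The space of mod-2 cycles of a graph: the sets of edges with even degree at each vertex. -/
noncomputable def cycleSpace (G : SimpleGraph V) : Submodule (ZMod 2) (G.edgeSet → ZMod 2) :=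
  LinearMap.ker ((G.incMatrix (ZMod 2)).submatrix id (↑) :
    Matrix V G.edgeSet (ZMod 2)).mulVecLin

open scoped Classical in
lemma mem_cycleSpace {G : SimpleGraph V} {z : G.edgeSet → ZMod 2} :
    z ∈ cycleSpace G ↔ ∀ v, ∑ e : G.edgeSet, G.incMatrix (ZMod 2) v e * z e = 0 := by
  simp [cycleSpace, funext_iff, Matrix.mulVec, dotProduct]

open scoped Classical in
lemma card_edgeSet_lt_card_add_finrank_cycleSpace [Nonempty V] (G : SimpleGraph V) :
    Fintype.card G.edgeSet < Fintype.card V + Module.finrank (ZMod 2) (cycleSpace G) := by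
  let M : Matrix V G.edgeSet (ZMod 2) := (G.incMatrix (ZMod 2)).submatrix id (↑)
  have hcolumn : ∀ e, ∑ v, M v e = 0 := fun e ↦
    (G.sum_incMatrix_apply_of_mem_edgeSet e.2).trans (by decide)
  have hrange : LinearMap.range M.mulVecLin ≠ ⊤ := fun htop ↦ by
    obtain ⟨z, hz⟩ : Pi.single (Classical.arbitrary V) 1 ∈ LinearMap.range M.mulVecLin :=
      htop ▸ Submodule.mem_top
    have hsum : ∑ v, M.mulVecLin z v = 0 := by
      simp only [Matrix.mulVecLin_apply, Matrix.mulVec, dotProduct]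
      rw [Finset.sum_comm]
      exact Finset.sum_eq_zero fun e _ ↦ by rw [← Finset.sum_mul, hcolumn, zero_mul]
    simp [hz] at hsum
  have hrank : Module.finrank (ZMod 2) (LinearMap.range M.mulVecLin) < Fintype.card V :=
    (Submodule.finrank_lt hrange).trans_eq (Module.finrank_fintype_fun_eq_card _)
  have hnullity := LinearMap.finrank_range_add_finrank_ker M.mulVecLin
  rw [Module.finrank_fintype_fun_eq_card] at hnullity
  change _ < _ + Module.finrank (ZMod 2) (LinearMap.ker M.mulVecLin)
  omega

end CycleSpace

/-- The face function `s` takes different values on the two sides of the lattice edge `ε`. -/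
def JumpsAcross (s : LatticeFace → ZMod 2) (ε : Sym2 LatticePoint) : Prop :=
  ∃ a k, ε = s(a, a + hexDir k) ∧ jump s a k ≠ 0

lemma jumpsAcross_mk {s : LatticeFace → ZMod 2} {a : LatticePoint} {k : Fin 6} :
    JumpsAcross s s(a, a + hexDir k) ↔ jump s a k ≠ 0 := by
  refine ⟨?_, fun h ↦ ⟨a, k, rfl, h⟩⟩
  rintro ⟨b, l, h, hj⟩
  obtain ⟨rfl, rfl⟩ | ⟨rfl, rfl⟩ := sym2_dart_eq_iff.1 h
  · exact hj
  · rwa [jump_add_hexDir_add_three]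

lemma jump_indicator_ne_zero {A : Set LatticeFace} {a : LatticePoint} {k : Fin 6} :
    jump (A.indicator 1) a k ≠ 0 ↔ Xor (leftFace a k ∈ A) (leftFace a (k - 1) ∈ A) := by
  by_cases h : leftFace a k ∈ A <;> by_cases h' : leftFace a (k - 1) ∈ A <;>
    simp [jump, h, h', CharTwo.add_self_eq_zero]

namespace LatticeModel

variable {V : Type*} (L : LatticeModel V)

lemma crossing_injOn : Set.InjOn L.crossing L.graph.edgeSet := fun e he e' he' h ↦ by
  rw [← L.map_label_crossing he, h, L.map_label_crossing he']

lemma exists_crossing_eq_of_mem {e : Sym2 V} (he : e ∈ L.graph.edgeSet) {x : V} (hx : x ∈ e) :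
    ∃ a k, L.crossing e = s(a, a + hexDir k) ∧ L.label a = x ∧ L.label (a + hexDir k) ≠ x := by
  obtain ⟨y, rfl⟩ := Sym2.mem_iff_exists.1 hx
  obtain ⟨a, k, hε, ha, hb⟩ := L.exists_crossing_eq he
  exact ⟨a, k, hε, ha, hb.trans_ne he.1.symm⟩

lemma exists_crossing_eq_of_mem_edgeSet {e : Sym2 V} (he : e ∈ L.graph.edgeSet) :
    ∃ a k, L.crossing e = s(a, a + hexDir k) ∧ L.label a ≠ L.label (a + hexDir k) := by
  obtain ⟨a, k, hε, ha, hb⟩ := L.exists_crossing_eq_of_mem he e.out_fst_mem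
  exact ⟨a, k, hε, fun h ↦ hb (h.symm.trans ha)⟩

lemma exists_ne_jumpsAcross_crossing {s : LatticeFace → ZMod 2}
    (hs : ∀ a k, L.label a ≠ L.label (a + hexDir k) → jump s a k ≠ 0 →
      ∃ e ∈ L.graph.edgeSet, s(a, a + hexDir k) = L.crossing e)
    {e₀ : Sym2 V} (he₀ : e₀ ∈ L.graph.edgeSet) (hj₀ : JumpsAcross s (L.crossing e₀))
    {x : V} (hx : x ∈ e₀) :
    ∃ e ∈ L.graph.edgeSet, e ≠ e₀ ∧ x ∈ e ∧ JumpsAcross s (L.crossing e) := by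
  obtain ⟨a₀, k₀, hε₀, ha₀, hb₀⟩ := L.exists_crossing_eq_of_mem he₀ hx
  rw [hε₀, jumpsAcross_mk] at hj₀
  obtain ⟨a, k, ha, hb, hne, hj⟩ := exists_ne_jump_ne_zero (L.fiber_finite_or_compl_finite x) s
    (a₀ := a₀) (k₀ := k₀) ha₀ hb₀ hj₀
  replace ha : L.label a = x := ha
  obtain ⟨e, he, hε⟩ := hs a k (fun h ↦ hb (h.symm.trans ha)) hj
  refine ⟨e, he, ?_, ?_, hε ▸ jumpsAcross_mk.2 hj⟩
  · rintro rfl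
    obtain ⟨rfl, rfl⟩ | ⟨rfl, rfl⟩ := sym2_dart_eq_iff.1 (hε.trans hε₀)
    exacts [hne rfl, hb₀ ha]
  · rw [← L.map_label_crossing he, ← hε]
    exact Sym2.mem_map.2 ⟨a, Sym2.mem_mk_left _ _, ha⟩

open scoped Classical in
lemma three_le_card_jumpsAcross [Fintype L.graph.edgeSet] {s : LatticeFace → ZMod 2}
    (hs : ∀ a k, L.label a ≠ L.label (a + hexDir k) → jump s a k ≠ 0 →
      ∃ e ∈ L.graph.edgeSet, s(a, a + hexDir k) = L.crossing e)
    {e₀ : Sym2 V} (he₀ : e₀ ∈ L.graph.edgeSet) (hj₀ : JumpsAcross s (L.crossing e₀)) :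
    3 ≤ #{e : L.graph.edgeSet | JumpsAcross s (L.crossing e)} := by
  induction e₀ with | h x y
  have hxy : x ≠ y := he₀.1
  obtain ⟨e, he, hne, hxe, hje⟩ :=
    L.exists_ne_jumpsAcross_crossing hs he₀ hj₀ (Sym2.mem_mk_left x y)
  obtain ⟨e', he', hne', hye', hje'⟩ :=
    L.exists_ne_jumpsAcross_crossing hs he₀ hj₀ (Sym2.mem_mk_right x y)
  have hee' : e ≠ e' := by
    rintro rfl
    exact hne ((Sym2.mem_and_mem_iff hxy).1 ⟨hxe, hye'⟩)
  calc 3 = #({⟨s(x, y), he₀⟩, ⟨e, he⟩, ⟨e', he'⟩} : Finset L.graph.edgeSet) := by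
        rw [Finset.card_eq_three.2 ⟨_, _, _, ?_, ?_, ?_, rfl⟩]
        exacts [Subtype.coe_ne_coe.1 hne.symm, Subtype.coe_ne_coe.1 hne'.symm,
          Subtype.coe_ne_coe.1 hee']
    _ ≤ _ := Finset.card_le_card fun f hf ↦ by
        simp only [Finset.mem_insert, Finset.mem_singleton] at hf
        obtain rfl | rfl | rfl := hf <;> simpa

section EdgeBound

open scoped Classical

variable [Fintype V]

/-- The lattice chain that represents a set of edges of the quotient graph. -/
noncomputable def chainOfEdges (z : L.graph.edgeSet → ZMod 2) : LatticeChain :=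
  ∑ e, z e • L.edgeChain (L.crossing e)

lemma boundary_chainOfEdges {z : L.graph.edgeSet → ZMod 2} (hz : z ∈ cycleSpace L.graph) :
    boundary (L.chainOfEdges z) = 0 := by
  classical
  have hedge : ∀ e : L.graph.edgeSet, boundary (L.edgeChain (L.crossing e)) =
      ∑ v, L.graph.incMatrix (ZMod 2) v e • Pi.single (L.base v) 1 := by
    rintro ⟨e, he⟩
    induction e with | h x y
    have hxy : x ≠ y := he.1
    have hincident : ∀ v, L.graph.incMatrix (ZMod 2) v s(x, y) =
        if v ∈ ({x, y} : Finset V) then 1 else 0 := fun v ↦ by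
      rw [SimpleGraph.incMatrix_apply']
      exact if_congr ((and_iff_right he).trans (by simp)) rfl rfl
    simp_rw [hincident, ite_smul, one_smul, zero_smul]
    rw [Finset.sum_ite_mem, Finset.univ_inter, Finset.sum_pair hxy]
    exact L.boundary_edgeChain_crossing he
  calc boundary (L.chainOfEdges z)
      = ∑ e : L.graph.edgeSet, ∑ v,
          (L.graph.incMatrix (ZMod 2) v e * z e) • Pi.single (L.base v) 1 := by
        simp_rw [chainOfEdges, map_sum, map_smul, hedge, Finset.smul_sum, smul_smul, mul_comm]
    _ = ∑ v, (∑ e : L.graph.edgeSet, L.graph.incMatrix (ZMod 2) v e * z e) •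
          Pi.single (L.base v) 1 := by
        rw [Finset.sum_comm]
        simp_rw [Finset.sum_smul]
    _ = 0 := Finset.sum_eq_zero fun v _ ↦ by rw [mem_cycleSpace.1 hz v, zero_smul]

lemma chainOfEdges_apply (z : L.graph.edgeSet → ZMod 2) {p q : LatticePoint}
    (hpq : L.label p ≠ L.label q) :
    L.chainOfEdges z s(p, q) =
      ∑ e : L.graph.edgeSet, if s(p, q) = L.crossing e then z e else 0 := by
  simp [chainOfEdges, L.edgeChain_apply_of_label_ne _ hpq]

lemma chainOfEdges_crossing (z : L.graph.edgeSet → ZMod 2) (e : L.graph.edgeSet) :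
    L.chainOfEdges z (L.crossing e) = z e := by
  obtain ⟨a, k, hε, hne⟩ := L.exists_crossing_eq_of_mem_edgeSet e.2
  rw [hε, L.chainOfEdges_apply _ hne, ← hε, Finset.sum_eq_single e, if_pos rfl]
  · exact fun e' _ he' ↦ if_neg fun h ↦ he' (Subtype.ext (L.crossing_injOn e'.2 e.2 h.symm))
  · exact fun h ↦ absurd (Finset.mem_univ e) h

lemma three_mul_finrank_cycleSpace_le :
    3 * Module.finrank (ZMod 2) (cycleSpace L.graph) ≤ 2 * Fintype.card L.graph.edgeSet := by
  choose s hs using fun z : cycleSpace L.graph ↦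
    exists_isFilling (L.boundary_chainOfEdges z.2)
  let values : LatticeFace → cycleSpace L.graph → ZMod 2 := fun f z ↦ s z f
  let side : (cycleSpace L.graph → ZMod 2) → LatticeFace → ZMod 2 :=
    fun ψ ↦ (values ⁻¹' {ψ}).indicator 1
  have hside : ∀ ψ a k, L.label a ≠ L.label (a + hexDir k) → jump (side ψ) a k ≠ 0 →
      ∃ e ∈ L.graph.edgeSet, s(a, a + hexDir k) = L.crossing e := fun ψ a k hne hj ↦ by
    have hvalues : values (leftFace a k) ≠ values (leftFace a (k - 1)) := fun h ↦ by
      have hxor := jump_indicator_ne_zero.1 hj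
      rw [Set.mem_preimage, Set.mem_preimage, h, xor_self] at hxor
      exact hxor
    obtain ⟨z, hz⟩ := Function.ne_iff.1 hvalues
    have hchain : L.chainOfEdges z.1 s(a, a + hexDir k) ≠ 0 := by
      rw [hs z a k, jump]
      exact fun h ↦ hz (CharTwo.add_eq_zero.1 h)
    rw [L.chainOfEdges_apply _ hne] at hchain
    obtain ⟨e, -, he⟩ := Finset.exists_ne_zero_of_sum_ne_zero hchain
    exact ⟨e, e.2, (ite_ne_right_iff.1 he).1⟩
  choose a k hε using fun e : L.graph.edgeSet ↦ L.exists_crossing_eq_of_mem_edgeSet e.2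
  have hedge : ∀ z e, z.1 e = values (leftFace (a e) (k e)) z -
      values (leftFace (a e) (k e - 1)) z := fun z e ↦ by
    rw [CharTwo.sub_eq_add, ← L.chainOfEdges_crossing z.1 e, (hε e).1]
    exact hs z (a e) (k e)
  have hjumps : ∀ ψ (e : L.graph.edgeSet), JumpsAcross (side ψ) (L.crossing e) ↔
      Xor (values (leftFace (a e) (k e)) = ψ) (values (leftFace (a e) (k e - 1)) = ψ) :=
    fun ψ e ↦ by rw [(hε e).1, jumpsAcross_mk, jump_indicator_ne_zero]; rfl
  refine mul_finrank_le_two_mul_card (cycleSpace L.graph) (fun e ↦ values (leftFace (a e) (k e)))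
    (fun e ↦ values (leftFace (a e) (k e - 1))) (fun z ψ ↦ ψ z) hedge (m := 3)
    fun ψ e₀ he₀ ↦ ?_
  convert L.three_le_card_jumpsAcross (hside ψ) e₀.2 ((hjumps ψ e₀).2 he₀) using 3
  exact (hjumps ψ _).symm

theorem card_edgeSet_add_three_le [Nonempty V] :
    Fintype.card L.graph.edgeSet + 3 ≤ 3 * Fintype.card V := by
  have hfaces := L.three_mul_finrank_cycleSpace_le
  have hcycles := card_edgeSet_lt_card_add_finrank_cycleSpace L.graph
  omega

end EdgeBound

end LatticeModel

namespace LatticeModel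

variable {V : Type*} (L : LatticeModel V)

/-- The face function `s` takes the value `r` on all faces around the fibre of `x`. -/
def HasValue (s : LatticeFace → ZMod 2) (x : V) (r : ZMod 2) : Prop :=
  ∀ a, L.label a = x → ∀ k, s (leftFace a k) = r

/-- The value of the face function `s` at the base point of `x`. -/
noncomputable def value (s : LatticeFace → ZMod 2) (x : V) : ZMod 2 := s (leftFace (L.base x) 0)

variable {L}

lemma hasValue_value {c : LatticeChain} {s : LatticeFace → ZMod 2} (h : IsFilling c s)
    {Λ : Set V} (hc : c ∈ chainsOn (L.label ⁻¹' Λ)) {x : V} (hx : x ∉ Λ) :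
    L.HasValue s x (L.value s x) := fun a ha k ↦ by
  refine h.eq_of_preconnected (L.fiber_preconnected x) (chainsOn_mono ?_ hc) ha (L.label_base x) k 0
  rintro p hp rfl
  exact hx hp

namespace HasValue

variable {s t : LatticeFace → ZMod 2} {x : V} {r r' : ZMod 2}

lemma apply_leftFace_of_label_add (h : L.HasValue s x r) {a : LatticePoint} {k : Fin 6}
    (ha : L.label (a + hexDir k) = x) : s (leftFace a k) = r ∧ s (leftFace a (k - 1)) = r := by
  rw [← leftFace_add_hexDir_add_two, ← leftFace_add_hexDir_add_three]
  exact ⟨h _ ha _, h _ ha _⟩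

end HasValue

lemma value_eq_of_adj {c : LatticeChain} {s : LatticeFace → ZMod 2} (h : IsFilling c s)
    {Λ : Set V} (hc : c ∈ chainsOn (L.label ⁻¹' Λ)) {x y : V} (hxy : L.graph.Adj x y)
    (hx : x ∉ Λ) (hy : y ∉ Λ) : L.value s x = L.value s y := by
  obtain ⟨-, a, b, ⟨k, rfl⟩, ha, hb⟩ := hxy
  rw [← hasValue_value h hc hx a ha k,
    ((hasValue_value h hc hy).apply_leftFace_of_label_add hb).1]

variable (L)

/-- The chain running through the fibres of `z 0, …, z n`. -/
noncomputable def pathChain (z : ℕ → V) (n : ℕ) : LatticeChain :=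
  ∑ j ∈ Finset.range n, L.edgeChain (L.crossing s(z j, z (j + 1)))

variable {L} {z : ℕ → V} {n : ℕ}

lemma boundary_pathChain (h : ∀ j < n, L.graph.Adj (z j) (z (j + 1))) :
    boundary (L.pathChain z n) = Pi.single (L.base (z 0)) 1 + Pi.single (L.base (z n)) 1 := by
  have hstep : ∀ j ∈ Finset.range n, boundary (L.edgeChain (L.crossing s(z j, z (j + 1)))) =
      Pi.single (L.base (z (j + 1))) 1 - Pi.single (L.base (z j)) 1 := fun j hj ↦ by
    rw [L.boundary_edgeChain_crossing (h j (Finset.mem_range.1 hj)), CharTwo.sub_eq_add, add_comm]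
  rw [pathChain, map_sum, Finset.sum_congr rfl hstep,
    Finset.sum_range_sub fun j ↦ (Pi.single (L.base (z j)) 1 : LatticePoint → ZMod 2),
    CharTwo.sub_eq_add, add_comm]

lemma pathChain_mem_chainsOn (h : ∀ j < n, L.graph.Adj (z j) (z (j + 1))) :
    L.pathChain z n ∈ chainsOn (L.label ⁻¹' (z '' Set.Iic n)) := by
  refine sum_mem fun j hj ↦ ?_
  replace hj := Finset.mem_range.1 hj
  refine chainsOn_mono ?_ (L.edgeChain_crossing_mem_chainsOn (h j hj))
  rintro p (hp | hp)
  · exact ⟨j, hj.le, hp.symm⟩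
  · exact ⟨j + 1, hj, hp.symm⟩

lemma pathChain_add_pathChain (z : ℕ → V) {m n : ℕ} (h : m ≤ n) :
    L.pathChain z n = L.pathChain z m + L.pathChain (fun j ↦ z (m + j)) (n - m) := by
  obtain ⟨n, rfl⟩ := Nat.exists_eq_add_of_le h
  simp only [pathChain, Finset.sum_range_add, Nat.add_sub_cancel_left, add_assoc]

end LatticeModel

/-- A breadth-first search tree of a connected graph, given by the parent of each vertex. -/
structure BfsTree {V : Type*} (H : SimpleGraph V) where
  connected : H.Connected
  root : V
  parent : V → V
  parent_root : parent root = root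
  adj_parent : ∀ x ≠ root, H.Adj (parent x) x
  dist_parent_add_one : ∀ x ≠ root, H.dist root (parent x) + 1 = H.dist root x

lemma exists_adj_and_dist_add_one_eq {V : Type*} {H : SimpleGraph V} (hH : H.Connected) {v x : V}
    (hx : x ≠ v) : ∃ y, H.Adj y x ∧ H.dist v y + 1 = H.dist v x := by
  obtain ⟨p, hp⟩ := hH.exists_walk_length_eq_dist x v
  cases p with
  | nil => exact absurd rfl hx
  | @cons _ y _ hxy q =>
    refine ⟨y, hxy.symm, ?_⟩
    have hle := hH.dist_triangle (u := v) (v := y) (w := x)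
    have hq := SimpleGraph.dist_le q
    rw [SimpleGraph.Walk.length_cons] at hp
    rw [SimpleGraph.dist_eq_one_iff_adj.2 hxy.symm] at hle
    rw [SimpleGraph.dist_comm] at hp hq
    omega

namespace BfsTree

open scoped Classical

variable {V : Type*} {H : SimpleGraph V}

lemma exists_root_eq (hH : H.Connected) (v : V) : ∃ T : BfsTree H, T.root = v := by
  choose! p hp using fun x (hx : x ≠ v) ↦ exists_adj_and_dist_add_one_eq hH hx
  exact ⟨⟨hH, v, Function.update p v v, Function.update_self .., fun x hx ↦ by
    rw [Function.update_of_ne hx]; exact (hp x hx).1, fun x hx ↦ by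
    rw [Function.update_of_ne hx]; exact (hp x hx).2⟩, rfl⟩

variable (T : BfsTree H)

/-- The level of a vertex of the tree is its distance from the root. -/
noncomputable abbrev level (x : V) : ℕ := H.dist T.root x

lemma level_root : T.level T.root = 0 := SimpleGraph.dist_self

variable {T} {w x y z : V}

lemma level_eq_zero : T.level x = 0 ↔ x = T.root := by
  rw [T.connected.dist_eq_zero_iff, eq_comm]

lemma level_pos (hx : x ≠ T.root) : 0 < T.level x := T.connected.pos_dist_of_ne hx.symm

lemma level_eq_one : T.level x = 1 ↔ H.Adj T.root x := SimpleGraph.dist_eq_one_iff_adj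

variable (T)

lemma level_parent (x : V) : T.level (T.parent x) = T.level x - 1 := by
  rcases eq_or_ne x T.root with rfl | hx
  · rw [T.parent_root, T.level_root]
  · exact Nat.eq_sub_of_add_eq (T.dist_parent_add_one x hx)

lemma level_iterate_parent (x : V) (i : ℕ) : T.level (T.parent^[i] x) = T.level x - i := by
  induction i with
  | zero => rfl
  | succ i ih => rw [Function.iterate_succ_apply', level_parent, ih, Nat.sub_sub]

lemma iterate_parent_eq_root {i : ℕ} (hi : T.level x ≤ i) : T.parent^[i] x = T.root := by
  rw [← level_eq_zero, level_iterate_parent, Nat.sub_eq_zero_of_le hi]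

lemma adj_iterate_parent {i : ℕ} (hi : i < T.level x) :
    H.Adj (T.parent^[i] x) (T.parent^[i + 1] x) := by
  rw [Function.iterate_succ_apply']
  refine (T.adj_parent _ fun h ↦ ?_).symm
  have := T.level_iterate_parent x i
  rw [h, T.level_root] at this
  omega

/-- The vertices of the tree path from `x` to the root. -/
noncomputable def ancestors (x : V) : Finset V :=
  (Finset.range (T.level x + 1)).image fun i ↦ T.parent^[i] x

variable {T}

lemma mem_ancestors_iff_le : w ∈ T.ancestors x ↔ ∃ i ≤ T.level x, T.parent^[i] x = w := by
  simp only [ancestors, Finset.mem_image, Finset.mem_range, Nat.lt_succ_iff]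

lemma mem_ancestors : w ∈ T.ancestors x ↔ ∃ i, T.parent^[i] x = w := by
  refine mem_ancestors_iff_le.trans ⟨fun ⟨i, _, hi⟩ ↦ ⟨i, hi⟩, fun ⟨i, hi⟩ ↦ ?_⟩
  rcases le_total i (T.level x) with h | h
  · exact ⟨i, h, hi⟩
  · exact ⟨_, le_rfl, by rw [← hi, T.iterate_parent_eq_root h, T.iterate_parent_eq_root le_rfl]⟩

variable (T) in
lemma self_mem_ancestors (x : V) : x ∈ T.ancestors x := mem_ancestors.2 ⟨0, rfl⟩

variable (T) in
lemma root_mem_ancestors (x : V) : T.root ∈ T.ancestors x :=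
  mem_ancestors.2 ⟨_, T.iterate_parent_eq_root le_rfl⟩

lemma ancestors_root : T.ancestors T.root = {T.root} := by
  ext w
  simp [mem_ancestors_iff_le, eq_comm]

lemma ancestors_subset (h : w ∈ T.ancestors x) : T.ancestors w ⊆ T.ancestors x := fun z hz ↦ by
  obtain ⟨i, rfl⟩ := mem_ancestors.1 h
  obtain ⟨j, rfl⟩ := mem_ancestors.1 hz
  exact mem_ancestors.2 ⟨j + i, Function.iterate_add_apply ..⟩

lemma level_le_of_mem_ancestors (h : w ∈ T.ancestors x) : T.level w ≤ T.level x := by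
  obtain ⟨i, rfl⟩ := mem_ancestors.1 h
  exact (T.level_iterate_parent x i).trans_le (Nat.sub_le ..)

lemma mem_ancestors_of_level_le (hy : y ∈ T.ancestors x) (hw : w ∈ T.ancestors x)
    (h : T.level w ≤ T.level y) : w ∈ T.ancestors y := by
  obtain ⟨i, hi, rfl⟩ := mem_ancestors_iff_le.1 hy
  obtain ⟨j, hj, rfl⟩ := mem_ancestors_iff_le.1 hw
  rw [level_iterate_parent, level_iterate_parent] at h
  refine mem_ancestors.2 ⟨j - i, ?_⟩
  rw [← Function.iterate_add_apply, Nat.sub_add_cancel (by omega)]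

variable (T) in
lemma injOn_level_ancestors (x : V) : Set.InjOn T.level (T.ancestors x) := fun w hw z hz h ↦ by
  obtain ⟨i, hi, rfl⟩ := mem_ancestors_iff_le.1 hw
  obtain ⟨j, hj, rfl⟩ := mem_ancestors_iff_le.1 hz
  rw [level_iterate_parent, level_iterate_parent] at h
  rw [show i = j by omega]

variable (T) in
/-- The number of neighbours of the root in `A`. -/
noncomputable def rootDegree (A : Finset V) : ℕ := #{w ∈ A | H.Adj T.root w}

variable {A B : Finset V}

lemma rootDegree_le_rootDegree (h : ∀ w ∈ A, H.Adj T.root w → w ∈ B) :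
    T.rootDegree A ≤ T.rootDegree B := by
  refine Finset.card_le_card fun w hw ↦ ?_
  rw [Finset.mem_filter] at hw ⊢
  exact ⟨h w hw.1 hw.2, hw.2⟩

lemma rootDegree_union_le :
    T.rootDegree (A ∪ B) ≤ T.rootDegree A + T.rootDegree B := by
  rw [rootDegree, Finset.filter_union]
  exact Finset.card_union_le ..

lemma rootDegree_union (h : Disjoint A B) :
    T.rootDegree (A ∪ B) = T.rootDegree A + T.rootDegree B := by
  rw [rootDegree, Finset.filter_union]
  exact Finset.card_union_of_disjoint (Finset.disjoint_filter_filter h)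

lemma rootDegree_ancestors_le_one (x : V) : T.rootDegree (T.ancestors x) ≤ 1 := by
  refine Finset.card_le_one.2 fun w hw z hz ↦ ?_
  rw [Finset.mem_filter, ← level_eq_one] at hw hz
  exact T.injOn_level_ancestors x hw.1 hz.1 (hw.2.trans hz.2.symm)

variable (T) in
/-- The vertices of the tree paths from the two ends of `e` to the root. Together with `e` they
form the fundamental cycle of `e` and a path joining it to the root. -/
noncomputable def rootedCycle (e : Sym2 V) : Finset V :=
  Sym2.lift ⟨fun x y ↦ T.ancestors x ∪ T.ancestors y, fun _ _ ↦ Finset.union_comm ..⟩ e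

lemma rootedCycle_mk (x y : V) : T.rootedCycle s(x, y) = T.ancestors x ∪ T.ancestors y := rfl

lemma rootDegree_rootedCycle_le_two (e : Sym2 V) : T.rootDegree (T.rootedCycle e) ≤ 2 := by
  induction e with | h x y
  exact rootDegree_union_le.trans
    (add_le_add (rootDegree_ancestors_le_one x) (rootDegree_ancestors_le_one y))

lemma exists_adj_root_mem_ancestors (hx : x ≠ T.root) : ∃ w ∈ T.ancestors x, H.Adj T.root w := by
  refine ⟨_, mem_ancestors.2 ⟨T.level x - 1, rfl⟩, ?_⟩
  rw [← level_eq_one, level_iterate_parent]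
  have := level_pos hx
  omega

lemma eq_root_of_mem_ancestors_of_mem_ancestors
    (h : 2 ≤ T.rootDegree (T.ancestors x ∪ T.ancestors y)) (hx : w ∈ T.ancestors x)
    (hy : w ∈ T.ancestors y) : w = T.root := by
  by_contra hw
  obtain ⟨q, hq, hadj⟩ := exists_adj_root_mem_ancestors hw
  rw [← level_eq_one] at hadj
  suffices hsub : {r ∈ T.ancestors x ∪ T.ancestors y | H.Adj T.root r} ⊆ {q} from
    h.not_gt (Nat.lt_succ_of_le (Finset.card_le_card hsub))
  intro r hr
  rw [Finset.mem_filter, Finset.mem_union, ← level_eq_one] at hr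
  rw [Finset.mem_singleton]
  rcases hr with ⟨hr | hr, hlevel⟩
  · exact T.injOn_level_ancestors x hr (ancestors_subset hx hq) (hlevel.trans hadj.symm)
  · exact T.injOn_level_ancestors y hr (ancestors_subset hy hq) (hlevel.trans hadj.symm)

lemma left_ne_root_of_two_le_rootDegree (h : 2 ≤ T.rootDegree (T.ancestors x ∪ T.ancestors y)) :
    x ≠ T.root := by
  rintro rfl
  rw [ancestors_root, Finset.union_eq_right.2
    (Finset.singleton_subset_iff.2 (T.root_mem_ancestors y))] at h
  exact h.not_gt (Nat.lt_succ_of_le (rootDegree_ancestors_le_one y))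

end BfsTree

lemma leftFace_eq_leftFace_iff {a p : LatticePoint} {k l : Fin 6} :
    leftFace p l = leftFace a k ↔ (p = a ∧ l = k) ∨ (p = a + hexDir k ∧ l = k + 2) ∨
      (p = a + hexDir (k + 1) ∧ l = k + 4) := by
  obtain ⟨x, y⟩ := p
  obtain ⟨i, j⟩ := a
  fin_cases l <;> fin_cases k <;> simp [leftFace, hexDir] <;> omega

lemma leftFace_zero_ne_leftFace_one (a b : LatticePoint) : leftFace a 0 ≠ leftFace b 1 := by
  simp [leftFace]

lemma leftFace_left_injective (k : Fin 6) : Function.Injective (leftFace · k) := fun a b h ↦ by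
  simpa [leftFace] using h

/-- The sum of `t` over the three sides of the triangle to the left of the dart from `a` in
direction `k`. -/
def triangleSum {M : Type*} [Add M] (t : Sym2 LatticePoint → M) (a : LatticePoint) (k : Fin 6) :
    M :=
  t s(a, a + hexDir k) + t s(a + hexDir k, a + hexDir (k + 1)) + t s(a, a + hexDir (k + 1))

lemma add_hexDir_add_one (a : LatticePoint) (k : Fin 6) :
    a + hexDir (k + 1) = a + hexDir k + hexDir (k + 2) := by
  rw [add_assoc]
  congr 1
  revert k
  decide

lemma triLattice_adj_add_hexDir_add_one (a : LatticePoint) (k : Fin 6) :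
    triLattice.Adj (a + hexDir k) (a + hexDir (k + 1)) :=
  add_hexDir_add_one a k ▸ triLattice_adj_add_hexDir _ _

lemma isFilling_triangle (a : LatticePoint) (k : Fin 6) :
    IsFilling (triangleSum (fun ε ↦ (Pi.single ε 1 : LatticeChain)) a k)
      (Pi.single (leftFace a k) 1) := by
  intro p l
  have hfin : ∀ k l : Fin 6, k + 2 + 3 = k + 5 ∧ k + 1 + 3 = k + 4 ∧ k + 2 + 1 = k + 3 ∧
      k + 4 + 1 = k + 5 ∧ ∀ i, l - 1 = i ↔ l = i + 1 := by decide
  have hdir : ∀ k, hexDir k ≠ 0 ∧ hexDir k ≠ hexDir (k + 1) := by decide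
  have hmid : s(a + hexDir k, a + hexDir (k + 1)) =
      s(a + hexDir k, a + hexDir k + hexDir (k + 2)) := by rw [add_hexDir_add_one]
  simp only [triangleSum, hmid, jump, Pi.add_apply, Pi.single_apply, leftFace_eq_leftFace_iff,
    sym2_dart_eq_iff, (hfin k l), ← add_hexDir_add_one]
  by_cases h₀ : p = a
  · simp [h₀, hdir]
  by_cases h₁ : p = a + hexDir k
  · simpa [h₁, hdir] using add_comm _ _
  by_cases h₂ : p = a + hexDir (k + 1)
  · simpa [h₂, (hdir _).2.symm, hdir] using add_comm _ _
  · simp [h₀, h₁, h₂]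

lemma finsum_triangleSum_zero_eq {M : Type*} [AddCommMonoid M] {t : Sym2 LatticePoint → M}
    (ht : ∀ k, (fun a ↦ t s(a, a + hexDir k)).HasFiniteSupport) :
    ∑ᶠ a, triangleSum t a 0 = ∑ᶠ a, triangleSum t a 1 := by
  have hsum : ∀ {f g h : LatticePoint → M} (d : LatticePoint), f.HasFiniteSupport →
      g.HasFiniteSupport → h.HasFiniteSupport →
      ∑ᶠ a, (f a + g (a + d) + h a) = ∑ᶠ a, f a + ∑ᶠ a, g a + ∑ᶠ a, h a := fun d hf hg hh ↦ by
    have hgd := hg.fun_comp_of_injective (add_left_injective d)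
    rw [finsum_add_distrib (hf.fun_add hgd) hh, finsum_add_distrib hf hgd]
    exact congrArg (_ + · + _) (finsum_comp_equiv (Equiv.addRight d))
  have h₀ : ∀ a, triangleSum t a 0 =
      t s(a, a + hexDir 0) + t s(a + hexDir 0, a + hexDir 0 + hexDir 2) + t s(a, a + hexDir 1) :=
    fun a ↦ by rw [triangleSum, add_assoc a (hexDir 0)]; rfl
  have h₁ : ∀ a, triangleSum t a 1 =
      t s(a, a + hexDir 1) + t s(a + hexDir 2, a + hexDir 2 + hexDir 0) + t s(a, a + hexDir 2) :=
    fun a ↦ by rw [triangleSum, Sym2.eq_swap (a := a + hexDir 1), add_assoc a (hexDir 2)]; rfl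
  simp only [h₀, h₁]
  rw [hsum _ (ht 0) (ht 2) (ht 1), hsum _ (ht 1) (ht 0) (ht 2)]
  abel

/-- The sums over upward and over downward triangles agree, but only one of them would count the
face `leftFace 0 0`. -/
lemma exists_triangleSum_ne_single {t : Sym2 LatticePoint → ZMod 2}
    (ht : ∀ k, (fun a ↦ t s(a, a + hexDir k)).HasFiniteSupport) :
    ∃ a k, triangleSum t a k ≠ (Pi.single (leftFace a k) 1 : _ → ZMod 2) (leftFace 0 0) := by
  by_contra! hsum
  have hparity := finsum_triangleSum_zero_eq ht
  simp only [hsum] at hparity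
  rw [finsum_eq_single _ 0 fun a ha ↦
      Pi.single_eq_of_ne' ((leftFace_left_injective 0).ne ha) _, Pi.single_eq_same,
    finsum_eq_zero_of_forall_eq_zero fun a ↦
      Pi.single_eq_of_ne (leftFace_zero_ne_leftFace_one 0 a) _] at hparity
  exact one_ne_zero hparity

namespace LatticeModel

variable {V : Type*} {L : LatticeModel V} (T : BfsTree L.graph)

/-- The chain running along the tree path from `x` to the root. -/
noncomputable def treeChain (x : V) : LatticeChain :=
  L.pathChain (fun i ↦ T.parent^[i] x) (T.level x)

lemma boundary_treeChain (x : V) : boundary (treeChain T x) =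
    Pi.single (L.base x) 1 + Pi.single (L.base T.root) 1 := by
  rw [treeChain, boundary_pathChain fun _ ↦ T.adj_iterate_parent, T.iterate_parent_eq_root le_rfl]
  rfl

lemma treeChain_mem_chainsOn (x : V) :
    treeChain T x ∈ chainsOn (L.label ⁻¹' T.ancestors x) := by
  refine chainsOn_mono (Set.preimage_mono ?_) (pathChain_mem_chainsOn fun _ ↦ T.adj_iterate_parent)
  rintro _ ⟨i, _, rfl⟩
  exact BfsTree.mem_ancestors.2 ⟨i, rfl⟩

/-- The closed chain formed by the lattice edge `ε` and the tree paths from its ends to the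
root. -/
noncomputable def closedChain (ε : Sym2 LatticePoint) : LatticeChain :=
  L.edgeChain ε + Sym2.lift
    ⟨fun a b ↦ treeChain T (L.label a) + treeChain T (L.label b), fun _ _ ↦ add_comm _ _⟩ ε

lemma closedChain_mk (a b : LatticePoint) : closedChain T s(a, b) =
    L.edgeChain s(a, b) + (treeChain T (L.label a) + treeChain T (L.label b)) := rfl

lemma boundary_closedChain {ε : Sym2 LatticePoint} (hε : ε ∈ triLattice.edgeSet) :
    boundary (closedChain T ε) = 0 := by
  induction ε with | h a b
  rw [closedChain_mk, map_add, map_add, L.boundary_edgeChain hε, boundary_treeChain,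
    boundary_treeChain]
  grind

lemma closedChain_mem_chainsOn (ε : Sym2 LatticePoint) :
    closedChain T ε ∈ chainsOn (L.label ⁻¹' T.rootedCycle (ε.map L.label)) := by
  induction ε with | h a b
  classical
  rw [Sym2.map_mk, BfsTree.rootedCycle_mk, Finset.coe_union]
  refine add_mem (chainsOn_mono ?_ (L.edgeChain_mem_chainsOn a b)) (add_mem ?_ ?_)
  · rintro p (hp | hp)
    · exact .inl (hp ▸ T.self_mem_ancestors _)
    · exact .inr (hp ▸ T.self_mem_ancestors _)
  · exact chainsOn_mono (Set.preimage_mono Set.subset_union_left) (treeChain_mem_chainsOn T _)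
  · exact chainsOn_mono (Set.preimage_mono Set.subset_union_right) (treeChain_mem_chainsOn T _)

lemma closedChain_mem_chainsOn_compl_box {a b : LatticePoint} (ha : a ∉ L.box) (hb : b ∉ L.box) :
    closedChain T s(a, b) ∈ chainsOn L.boxᶜ := by
  rw [closedChain_mk, L.label_eq_outer a ha, L.label_eq_outer b hb, CharTwo.add_self_eq_zero,
    add_zero]
  exact L.edgeChain_mem_chainsOn_compl_box ha hb

lemma closedChain_add_single_triangle (a b c : LatticePoint) :
    closedChain T s(a, b) + closedChain T s(b, c) + closedChain T s(a, c) =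
      Pi.single s(a, b) 1 + Pi.single s(b, c) 1 + Pi.single s(a, c) 1 := by
  simp only [closedChain_mk, edgeChain_mk]
  grind

end LatticeModel

open LatticeModel

/-- A closed curve formed by a lattice edge and two tree paths to the root, together with the choice
of one of its two sides: the faces where `side` is `1`. -/
structure Separator {V : Type*} {L : LatticeModel V} (T : BfsTree L.graph) where
  edge : Sym2 LatticePoint
  edge_mem : edge ∈ triLattice.edgeSet
  side : LatticeFace → ZMod 2
  isFilling : IsFilling (closedChain T edge) side

namespace Separator

open scoped Classical

variable {V : Type*} {L : LatticeModel V} {T : BfsTree L.graph} (S : Separator T)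

lemma exists_edge_eq {ε : Sym2 LatticePoint} (hε : ε ∈ triLattice.edgeSet) :
    ∃ S : Separator T, S.edge = ε := by
  obtain ⟨s, hs⟩ := exists_isFilling (boundary_closedChain T hε)
  exact ⟨⟨ε, hε, s, hs⟩, rfl⟩

/-- The same curve with the opposite side. -/
def flip : Separator T where
  __ := S
  side := S.side + 1
  isFilling a k := by
    rw [S.isFilling a k]
    simp only [jump, Pi.add_apply, Pi.one_apply]
    grind

lemma flip_flip : S.flip.flip = S := by
  obtain ⟨ε, hε, s, hs⟩ := S
  simp [flip, add_assoc, CharTwo.add_self_eq_zero]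

lemma value_flip (w : V) : L.value S.flip.side w = L.value S.side w + 1 := rfl

/-- The vertices on the curve. -/
noncomputable def cycle : Finset V := T.rootedCycle (S.edge.map L.label)

lemma hasValue {w : V} (hw : w ∉ S.cycle) : L.HasValue S.side w (L.value S.side w) :=
  hasValue_value S.isFilling (closedChain_mem_chainsOn T S.edge) hw

lemma label_mem_cycle {a b : LatticePoint} (h : S.edge = s(a, b)) : L.label a ∈ S.cycle := by
  rw [cycle, h]
  exact Finset.mem_union_left _ (T.self_mem_ancestors _)

lemma cycle_eq {a b : LatticePoint} (h : S.edge = s(a, b)) :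
    S.cycle = T.ancestors (L.label a) ∪ T.ancestors (L.label b) := by
  rw [cycle, h]
  rfl

lemma rootDegree_cycle_le_two : T.rootDegree S.cycle ≤ 2 :=
  BfsTree.rootDegree_rootedCycle_le_two _

variable [Fintype V]

/-- The vertices on the chosen side of the curve. -/
noncomputable def interior : Finset V := {w | w ∉ S.cycle ∧ L.value S.side w = 1}

lemma mem_interior {w : V} : w ∈ S.interior ↔ w ∉ S.cycle ∧ L.value S.side w = 1 :=
  Finset.mem_filter_univ w

lemma disjoint_interior_cycle : Disjoint S.interior S.cycle :=
  Finset.disjoint_left.2 fun _ hw ↦ (S.mem_interior.1 hw).1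

lemma compl_flip_interior_union_cycle : (S.flip.interior ∪ S.cycle)ᶜ = S.interior := by
  ext w
  have hcycle : S.flip.cycle = S.cycle := rfl
  have hflip : ∀ r : ZMod 2, r + 1 = 1 ↔ ¬r = 1 := by decide
  simp only [Finset.mem_compl, Finset.mem_union, mem_interior, hcycle, value_flip, hflip]
  tauto

/-- The vertices on the curve or on the chosen side. -/
noncomputable def region : Finset V := S.interior ∪ S.cycle

lemma mem_region_of_adj {w w' : V} (hw : w ∈ S.interior) (h : L.graph.Adj w w') :
    w' ∈ S.region := by
  rw [region, Finset.mem_union, mem_interior, or_iff_not_imp_right]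
  obtain ⟨hcycle, hvalue⟩ := S.mem_interior.1 hw
  refine fun hw' ↦ ⟨hw', ?_⟩
  rw [← hvalue]
  exact (value_eq_of_adj S.isFilling (closedChain_mem_chainsOn T S.edge) h hcycle hw').symm

lemma rootDegree_region : T.rootDegree S.region =
    T.rootDegree S.interior + T.rootDegree S.cycle :=
  BfsTree.rootDegree_union S.disjoint_interior_cycle

lemma rootDegree_interior_add_rootDegree_flip_region :
    T.rootDegree S.interior + T.rootDegree S.flip.region = T.rootDegree Finset.univ := by
  have hcompl : S.flip.region = S.interiorᶜ := by
    rw [← compl_flip_interior_union_cycle, compl_compl]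
    rfl
  rw [hcompl, ← BfsTree.rootDegree_union disjoint_compl_right, Finset.union_compl]

end Separator

namespace Separator

open scoped Classical

variable {V : Type*} {L : LatticeModel V} {T : BfsTree L.graph}

lemma triangleSum_side_add_single_eq {S : Sym2 LatticePoint → Separator T}
    (hS : ∀ ε ∈ triLattice.edgeSet, (S ε).edge = ε) (a : LatticePoint) (k : Fin 6)
    (g g' : LatticeFace) :
    triangleSum (fun ε ↦ (S ε).side g) a k + (Pi.single (leftFace a k) 1 : _ → ZMod 2) g =
      triangleSum (fun ε ↦ (S ε).side g') a k + (Pi.single (leftFace a k) 1 : _ → ZMod 2) g' := by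
  have hside : ∀ {p q}, triLattice.Adj p q → IsFilling (closedChain T s(p, q)) (S s(p, q)).side :=
    fun {p q} h ↦ by
      simpa only [hS s(p, q) h] using (S s(p, q)).isFilling
  have hfill := (((hside (triLattice_adj_add_hexDir a k)).add
    (hside (triLattice_adj_add_hexDir_add_one a k))).add
    (hside (triLattice_adj_add_hexDir a (k + 1)))).add (isFilling_triangle a k)
  rw [closedChain_add_single_triangle, triangleSum, CharTwo.add_self_eq_zero] at hfill
  obtain ⟨b, l, rfl⟩ := exists_leftFace_eq g
  obtain ⟨b', l', rfl⟩ := exists_leftFace_eq g'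
  exact hfill.eq_of_preconnected (Y := Set.univ)
    ((SimpleGraph.induceUnivIso _).preconnected_iff.2 triLattice_preconnected)
    (zero_mem _) trivial trivial l l'

/-- If the edge lies in the unbounded fibre then one of the two sides contains the whole box. -/
lemma exists_edge_eq_side_leftFace_eq_zero {a b : LatticePoint} (hab : triLattice.Adj a b)
    (ha : a ∉ L.box) (hb : b ∉ L.box) : ∃ S : Separator T, S.edge = s(a, b) ∧
      ∀ c ∈ L.box, ∀ l, S.side (leftFace c l) = 0 := by
  obtain ⟨S, hS⟩ := exists_edge_eq (T := T) (ε := s(a, b)) hab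
  have hzero : (0 : LatticePoint) ∈ L.box := by simp [LatticeModel.box, Prod.le_def]
  have hconst : ∀ c ∈ L.box, ∀ l, S.side (leftFace c l) = S.side (leftFace 0 0) := fun c hc l ↦
    S.isFilling.eq_of_preconnected (preconnected_induce_prod _ _)
      (hS ▸ closedChain_mem_chainsOn_compl_box T ha hb) hc hzero l 0
  have hcases : ∀ r : ZMod 2, r = 0 ∨ r + 1 = 0 := by decide
  obtain h | h := hcases (S.side (leftFace 0 0))
  · exact ⟨S, hS, fun c hc l ↦ (hconst c hc l).trans h⟩
  · exact ⟨S.flip, hS, fun c hc l ↦ (congrArg (· + 1) (hconst c hc l)).trans h⟩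

variable [Fintype V]

lemma exists_mem_region_of_triangleSum_side_ne {S : Sym2 LatticePoint → Separator T}
    (hS : ∀ ε ∈ triLattice.edgeSet, (S ε).edge = ε) {a : LatticePoint} {k : Fin 6} {g : LatticeFace}
    (hg : triangleSum (fun ε ↦ (S ε).side g) a k ≠
      (Pi.single (leftFace a k) 1 : _ → ZMod 2) g) (w : V) :
    w ∈ (S s(a, a + hexDir k)).region ∨ w ∈ (S s(a + hexDir k, a + hexDir (k + 1))).region ∨
      w ∈ (S s(a, a + hexDir (k + 1))).region := by
  have hne : ∀ r r' : ZMod 2, r ≠ r' → r + r' = 1 := by decide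
  have hzero : ∀ r : ZMod 2, r ≠ 1 → r = 0 := by decide
  by_contra! hw
  simp only [region, Finset.mem_union, mem_interior, value, not_or, not_and] at hw
  obtain ⟨⟨hin₁, hw₁⟩, ⟨hin₂, hw₂⟩, hin₃, hw₃⟩ := hw
  have hface : leftFace (L.base w) 0 = leftFace a k := by
    by_contra hface
    have hbase := triangleSum_side_add_single_eq hS a k (leftFace (L.base w) 0) g
    rw [triangleSum, hzero _ (hin₁ hw₁), hzero _ (hin₂ hw₂), hzero _ (hin₃ hw₃),
      Pi.single_eq_of_ne hface, hne _ _ hg] at hbase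
    exact absurd hbase (by decide)
  have hadj := triLattice_adj_add_hexDir a
  have hmem {b c : LatticePoint} (hbc : triLattice.Adj b c) (hb : L.base w = b) :
      w ∈ (S s(b, c)).cycle := by
    rw [← L.label_base w, hb]
    exact label_mem_cycle _ (hS _ hbc)
  obtain ⟨h, -⟩ | ⟨h, -⟩ | ⟨h, -⟩ := leftFace_eq_leftFace_iff.1 hface
  · exact hw₁ (hmem (hadj k) h)
  · exact hw₁ (Sym2.eq_swap ▸ hmem (hadj k).symm h)
  · exact hw₃ (Sym2.eq_swap ▸ hmem (hadj (k + 1)).symm h)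

lemma interior_eq_empty_of_side_leftFace_eq_zero {S : Separator T} {a b : LatticePoint}
    (hS : S.edge = s(a, b)) (ha : a ∉ L.box)
    (h : ∀ c ∈ L.box, ∀ l, S.side (leftFace c l) = 0) : S.interior = ∅ := by
  refine Finset.eq_empty_of_forall_notMem fun w hw ↦ ?_
  obtain ⟨hcycle, hvalue⟩ := S.mem_interior.1 hw
  have hbase : L.base w ∈ L.box := by
    by_contra hout
    apply hcycle
    rw [← L.label_base w, L.label_eq_outer _ hout, ← L.label_eq_outer a ha]
    exact S.label_mem_cycle hS
  exact zero_ne_one ((h _ hbase 0).symm.trans hvalue)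

/-- Choose a side of every separator. If no triangle had its three chosen sides covering all
vertices then every triangle would contribute to the sides containing a fixed face according to
whether it equals that face. -/
theorem exists_three_regions_cover {P : Separator T → Prop} (hflip : ∀ S, P S ∨ P S.flip)
    (hempty : ∀ S, S.interior = ∅ → P S) :
    ∃ S : Fin 3 → Separator T, (∀ i, P (S i)) ∧ ∀ w, ∃ i, w ∈ (S i).region := by
  have hex : ∀ ε ∈ triLattice.edgeSet, ∃ S : Separator T, S.edge = ε ∧ P S ∧
      ((∀ a ∈ ε, a ∉ L.box) → S.side (leftFace 0 0) = 0) := fun ε hε ↦ by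
    induction ε with | h a b
    by_cases hout : ∀ c ∈ s(a, b), c ∉ L.box
    · have ha := hout a (Sym2.mem_mk_left a b)
      obtain ⟨S, hS, hside⟩ :=
        exists_edge_eq_side_leftFace_eq_zero (T := T) hε ha (hout b (Sym2.mem_mk_right a b))
      exact ⟨S, hS, hempty S (interior_eq_empty_of_side_leftFace_eq_zero hS ha hside),
        fun _ ↦ hside 0 (by simp [LatticeModel.box, Prod.le_def]) 0⟩
    · obtain ⟨S, hS⟩ := exists_edge_eq (T := T) hε
      exact (hflip S).elim (⟨S, hS, ·, (absurd · hout)⟩) (⟨S.flip, hS, ·, (absurd · hout)⟩)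
  have : Nonempty (Separator T) :=
    let ⟨S, _⟩ := hex s(0, 0 + hexDir 0) (triLattice_adj_add_hexDir 0 0); ⟨S⟩
  choose! S hS hP hside using hex
  by_contra! hcover
  have hsum : ∀ a k, triangleSum (fun ε ↦ (S ε).side (leftFace 0 0)) a k =
      (Pi.single (leftFace a k) 1 : _ → ZMod 2) (leftFace 0 0) := fun a k ↦ by
    by_contra hne
    obtain ⟨w, hw⟩ := hcover ![S s(a, a + hexDir k), S s(a + hexDir k, a + hexDir (k + 1)),
      S s(a, a + hexDir (k + 1))] fun i ↦ by
        fin_cases i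
        exacts [hP _ (triLattice_adj_add_hexDir _ _), hP _ (triLattice_adj_add_hexDir_add_one _ _),
          hP _ (triLattice_adj_add_hexDir _ _)]
    obtain h | h | h := exists_mem_region_of_triangleSum_side_ne hS hne w
    exacts [hw 0 h, hw 1 h, hw 2 h]
  have hsupp : ∀ k, (fun a ↦ (S s(a, a + hexDir k)).side (leftFace 0 0)).HasFiniteSupport :=
    fun k ↦ by
      refine ((squareBox_finite L.radius).union ((squareBox_finite L.radius).preimage
        (add_left_injective (hexDir k)).injOn)).subset fun a ha ↦ ?_
      by_contra! hout
      refine ha (hside _ (triLattice_adj_add_hexDir a k) fun c hc ↦ ?_)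
      obtain rfl | rfl := Sym2.mem_iff.1 hc
      exacts [fun h ↦ hout (.inl h), fun h ↦ hout (.inr h)]
  obtain ⟨a, k, hne⟩ := exists_triangleSum_ne_single (t := fun ε ↦ (S ε).side (leftFace 0 0)) hsupp
  exact hne (hsum a k)

end Separator

namespace Separator

open scoped Classical

variable {V : Type*} [Fintype V] {L : LatticeModel V} {T : BfsTree L.graph}

lemma exists_card_le_three_mul_card_region_erase_root {P : Separator T → Prop}
    (hflip : ∀ S, P S ∨ P S.flip) (hempty : ∀ S, S.interior = ∅ → P S) :
    ∃ S, P S ∧ Fintype.card V ≤ 3 * #(S.region.erase T.root) + 1 := by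
  obtain ⟨S, hS, hcover⟩ := exists_three_regions_cover hflip hempty
  have hsubset : Finset.univ.erase T.root ⊆
      Finset.univ.biUnion fun i ↦ (S i).region.erase T.root := fun w hw ↦ by
    obtain ⟨i, hi⟩ := hcover w
    exact Finset.mem_biUnion.2
      ⟨i, Finset.mem_univ i, Finset.mem_erase.2 ⟨Finset.ne_of_mem_erase hw, hi⟩⟩
  have hcard := (Finset.card_le_card hsubset).trans Finset.card_biUnion_le
  rw [Finset.card_erase_of_mem (Finset.mem_univ _), Finset.card_univ] at hcard
  obtain ⟨i, -, hi⟩ := Finset.exists_le_of_sum_le (s := Finset.univ) ⟨(0 : Fin 3), by simp⟩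
    (f := fun _ ↦ Fintype.card V - 1) (g := fun i ↦ 3 * #((S i).region.erase T.root)) (by
      rw [← Finset.mul_sum]; simpa using Nat.mul_le_mul_left 3 hcard)
  exact ⟨S i, hS i, by omega⟩

lemma rootDegree_region_le_two {S : Separator T} (h : S.interior = ∅) :
    T.rootDegree S.region ≤ 2 := by
  rw [region, h, Finset.empty_union]
  exact S.rootDegree_cycle_le_two

lemma card_region_erase_root_le_sn {G : SimpleGraph V} (hG : G ≤ L.graph) {S : Separator T}
    (h : T.rootDegree S.region ≤ 3) :
    #(S.region.erase T.root) ≤ sn G (fun _ ↦ 3) T.root := by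
  obtain ⟨a, b, hab⟩ : ∃ a b, S.edge = s(a, b) := by
    induction h : S.edge with | h a b
    exact ⟨a, b, rfl⟩
  have hregion : S.region =
      S.interior ∪ T.ancestors (L.label a) ∪ T.ancestors (L.label b) := by
    rw [region, S.cycle_eq hab, Finset.union_assoc]
  rw [hregion] at h ⊢
  refine card_erase_le_sn_of_geodesics hG T.connected (by norm_num)
    (T.injOn_level_ancestors _) (T.injOn_level_ancestors _) (fun w hw w' hww' ↦ .inl ?_) h
  rw [← hregion]
  exact S.mem_region_of_adj hw hww'

end Separator

namespace BfsTree

open scoped Classical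

variable {V : Type*} [Fintype V] {L : LatticeModel V} {T : BfsTree L.graph} {G : SimpleGraph V}

lemma card_le_sn_add_one (hG : G ≤ L.graph) (h : T.rootDegree Finset.univ ≤ 3) :
    Fintype.card V ≤ sn G (fun _ ↦ 3) T.root + 1 := by
  have hsaved := card_erase_le_sn_of_geodesics (D := Finset.univ) (Q₁ := ∅) (Q₂ := ∅) hG
    T.connected (v := T.root) (k := 3) (by norm_num) (by simp) (by simp)
    (fun _ _ _ _ ↦ .inl (by simp)) (by simpa [rootDegree] using h)
  rw [Finset.union_empty, Finset.union_empty, Finset.card_erase_of_mem (Finset.mem_univ _),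
    Finset.card_univ] at hsaved
  omega

lemma card_le_three_mul_sn_add_one (hG : G ≤ L.graph) (h : T.rootDegree Finset.univ ≤ 5) :
    Fintype.card V ≤ 3 * sn G (fun _ ↦ 3) T.root + 1 := by
  obtain ⟨S, hS, hcard⟩ := Separator.exists_card_le_three_mul_card_region_erase_root
    (P := fun S : Separator T ↦ T.rootDegree S.region ≤ 3)
    (fun S ↦ by
      have hregion := S.rootDegree_region
      have huniv := S.rootDegree_interior_add_rootDegree_flip_region
      have hcycle := S.rootDegree_cycle_le_two
      omega)
    fun S hS ↦ (Separator.rootDegree_region_le_two hS).trans (by norm_num)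
  have := Separator.card_region_erase_root_le_sn hG hS
  omega

lemma exists_separator_of_rootDegree_le_six (hG : G ≤ L.graph)
    (h : T.rootDegree Finset.univ ≤ 6) (hsn : 3 * sn G (fun _ ↦ 3) T.root + 1 < Fintype.card V) :
    ∃ S : Separator T, T.rootDegree S.cycle = 2 ∧ T.rootDegree S.interior = 2 ∧
      #S.interior ≤ #S.flip.interior ∧ Fintype.card V ≤ 3 * #(S.region.erase T.root) + 1 := by
  have hflip (S : Separator T) :
      (T.rootDegree S.region ≤ 3 ∨ T.rootDegree S.cycle = 2 ∧ T.rootDegree S.interior = 2 ∧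
        #S.interior ≤ #S.flip.interior) ∨
      (T.rootDegree S.flip.region ≤ 3 ∨ T.rootDegree S.cycle = 2 ∧
        T.rootDegree S.flip.interior = 2 ∧ #S.flip.interior ≤ #S.flip.flip.interior) := by
    have hregion := S.rootDegree_region
    have hregion_flip : T.rootDegree S.flip.region =
      T.rootDegree S.flip.interior + T.rootDegree S.cycle := S.flip.rootDegree_region
    have huniv := S.rootDegree_interior_add_rootDegree_flip_region
    have hcycle := S.rootDegree_cycle_le_two
    rw [Separator.flip_flip]
    omega
  obtain ⟨S, hS | ⟨hcycle, hinterior, hle⟩, hcard⟩ :=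
    Separator.exists_card_le_three_mul_card_region_erase_root hflip
      fun S hS ↦ .inl ((Separator.rootDegree_region_le_two hS).trans (by norm_num))
  · have := Separator.card_region_erase_root_le_sn hG hS
    omega
  · exact ⟨S, hcycle, hinterior, hle, hcard⟩

end BfsTree

namespace LatticeModel

variable {V : Type*} {L : LatticeModel V}

/-- A face function has an even number of nonzero jumps along the boundary of a fibre. -/
lemma exists_jump_ne_zero_of_crossing {f : LatticeFace → ZMod 2} {v u : V}
    (hvu : L.graph.Adj v u)
    (h : ∀ a k, L.label a = v → L.label (a + hexDir k) = u →
      (jump f a k ≠ 0 ↔ s(a, a + hexDir k) = L.crossing s(v, u))) :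
    ∃ a k, L.label a = v ∧ L.label (a + hexDir k) ≠ v ∧ L.label (a + hexDir k) ≠ u ∧
      jump f a k ≠ 0 := by
  obtain ⟨a₀, k₀, hε, ha₀, hb₀⟩ := L.exists_crossing_eq hvu
  obtain ⟨a, k, ha, hb, hne, hjump⟩ := exists_ne_jump_ne_zero (L.fiber_finite_or_compl_finite v) f
    ha₀ (fun hv ↦ hvu.ne (hv.symm.trans hb₀)) ((h a₀ k₀ ha₀ hb₀).2 hε.symm)
  refine ⟨a, k, ha, hb, fun hu ↦ hne ?_, hjump⟩
  have hdart := (h a k ha hu).1 hjump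
  rw [hε, Sym2.eq_iff] at hdart
  obtain ⟨rfl, hk⟩ | ⟨rfl, -⟩ := hdart
  · rw [hexDir_injective (add_left_cancel hk)]
  · exact absurd (ha.symm.trans hb₀) hvu.ne

lemma value_eq_of_mem_ancestors {T : BfsTree L.graph} {c : LatticeChain}
    {s : LatticeFace → ZMod 2} (h : IsFilling c s) {Λ : Set V}
    (hc : c ∈ chainsOn (L.label ⁻¹' Λ)) {x w : V} (hw : w ∈ T.ancestors x)
    (hΛ : ∀ w' ∈ T.ancestors x, T.level w ≤ T.level w' → w' ∉ Λ) : L.value s w = L.value s x := by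
  obtain ⟨i, hi, rfl⟩ := BfsTree.mem_ancestors_iff_le.1 hw
  rw [T.level_iterate_parent] at hΛ
  have hpath : ∀ j ≤ i, T.parent^[j] x ∉ Λ := fun j hj ↦ by
    refine hΛ _ (BfsTree.mem_ancestors.2 ⟨j, rfl⟩) ?_
    rw [T.level_iterate_parent]
    omega
  clear hw hΛ
  induction i with
  | zero => rfl
  | succ i ih =>
    rw [← ih (by omega) fun j hj ↦ hpath j (by omega)]
    exact (value_eq_of_adj h hc (T.adj_iterate_parent hi) (hpath i (by omega))
      (hpath _ le_rfl)).symm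

lemma treeChain_add_treeChain_mem_chainsOn {T : BfsTree L.graph} {p x : V}
    (hp : p ∈ T.ancestors x) : treeChain T x + treeChain T p ∈
      chainsOn (L.label ⁻¹' {w | w ∈ T.ancestors x ∧ T.level p ≤ T.level w}) := by
  obtain ⟨i, hi, rfl⟩ := BfsTree.mem_ancestors_iff_le.1 hp
  have htail : L.pathChain (fun j ↦ T.parent^[i + j] x) (T.level x - i) =
      treeChain T (T.parent^[i] x) := by
    rw [treeChain, T.level_iterate_parent]
    simp only [← Function.iterate_add_apply, add_comm i]
  rw [treeChain, pathChain_add_pathChain _ hi, htail, add_assoc, CharTwo.add_self_eq_zero, add_zero]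
  refine chainsOn_mono (Set.preimage_mono ?_)
    (pathChain_mem_chainsOn fun j hj ↦ T.adj_iterate_parent (hj.trans_le hi))
  rintro _ ⟨j, hj, rfl⟩
  refine ⟨BfsTree.mem_ancestors.2 ⟨j, rfl⟩, ?_⟩
  rw [T.level_iterate_parent, T.level_iterate_parent]
  exact Nat.sub_le_sub_left hj _

end LatticeModel

namespace Separator

open scoped Classical

variable {V : Type*} {L : LatticeModel V} {T : BfsTree L.graph} [Fintype V]

/-- A geodesic from the root that runs through the interior of `S` until it returns to the curve at
an ancestor of the left end of the edge of `S`. -/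
structure Shortcut (S : Separator T) where
  left : LatticePoint
  right : LatticePoint
  edge_eq : S.edge = s(left, right)
  two_le_rootDegree_cycle : 2 ≤ T.rootDegree S.cycle
  path : ℕ → V
  length : ℕ
  two_le_length : 2 ≤ length
  adj_path : ∀ j < length, L.graph.Adj (path j) (path (j + 1))
  level_path : ∀ j ≤ length, T.level (path j) = j
  path_mem_interior : ∀ j, 1 ≤ j → j < length → path j ∈ S.interior
  path_length_mem : path length ∈ T.ancestors (L.label left)

namespace Shortcut

variable {S : Separator T} (Z : S.Shortcut) {w : V}

/-- The ancestors of the left end of the edge. -/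
noncomputable def leftBranch : Finset V := T.ancestors (L.label Z.left)

/-- The ancestors of the right end of the edge. -/
noncomputable def rightBranch : Finset V := T.ancestors (L.label Z.right)

/-- The vertex where the shortcut returns to the curve. -/
def foot : V := Z.path Z.length

/-- The part of the left branch from the root to the foot. -/
noncomputable def stem : Finset V := T.ancestors Z.foot

/-- The part of the left branch from the foot upwards. -/
noncomputable def tail : Finset V := {w ∈ Z.leftBranch | Z.length ≤ T.level w}

/-- The vertices of the shortcut. -/
noncomputable def arc : Finset V := (Finset.range (Z.length + 1)).image Z.path

lemma cycle_eq : S.cycle = Z.leftBranch ∪ Z.rightBranch := S.cycle_eq Z.edge_eq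

lemma eq_root_of_mem_leftBranch_of_mem_rightBranch (hl : w ∈ Z.leftBranch)
    (hr : w ∈ Z.rightBranch) : w = T.root :=
  BfsTree.eq_root_of_mem_ancestors_of_mem_ancestors (Z.cycle_eq ▸ Z.two_le_rootDegree_cycle) hl hr

lemma notMem_leftBranch_of_mem_interior (hw : w ∈ S.interior) : w ∉ Z.leftBranch := fun h ↦
  (S.mem_interior.1 hw).1 (Z.cycle_eq ▸ Finset.mem_union_left _ h)

lemma notMem_rightBranch_of_mem_interior (hw : w ∈ S.interior) : w ∉ Z.rightBranch := fun h ↦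
  (S.mem_interior.1 hw).1 (Z.cycle_eq ▸ Finset.mem_union_right _ h)

lemma path_zero : Z.path 0 = T.root := T.level_eq_zero.1 (Z.level_path 0 (Nat.zero_le _))

lemma adj_root_path_one : L.graph.Adj T.root (Z.path 1) :=
  Z.path_zero ▸ Z.adj_path 0 (by have := Z.two_le_length; omega)

lemma path_one_mem_interior : Z.path 1 ∈ S.interior :=
  Z.path_mem_interior 1 le_rfl (by have := Z.two_le_length; omega)

lemma level_foot : T.level Z.foot = Z.length := Z.level_path _ le_rfl

lemma stem_subset_leftBranch : Z.stem ⊆ Z.leftBranch := BfsTree.ancestors_subset Z.path_length_mem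

lemma stem_union_tail : Z.stem ∪ Z.tail = Z.leftBranch := by
  refine (Finset.union_subset Z.stem_subset_leftBranch (Finset.filter_subset ..)).antisymm
    fun w hw ↦ ?_
  obtain h | h := le_total (T.level w) (T.level Z.foot)
  · exact Finset.mem_union_left _ (BfsTree.mem_ancestors_of_level_le Z.path_length_mem hw h)
  · exact Finset.mem_union_right _ (Finset.mem_filter.2 ⟨hw, Z.level_foot.ge.trans h⟩)

lemma level_le_of_mem_stem (hw : w ∈ Z.stem) : T.level w ≤ Z.length :=
  (BfsTree.level_le_of_mem_ancestors hw).trans_eq Z.level_foot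

lemma mem_arc : w ∈ Z.arc ↔ ∃ j ≤ Z.length, Z.path j = w := by
  simp only [arc, Finset.mem_image, Finset.mem_range, Nat.lt_succ_iff]

lemma foot_mem_arc : Z.foot ∈ Z.arc := Z.mem_arc.2 ⟨_, le_rfl, rfl⟩

lemma level_le_of_mem_arc (hw : w ∈ Z.arc) : T.level w ≤ Z.length := by
  obtain ⟨j, hj, rfl⟩ := Z.mem_arc.1 hw
  rwa [Z.level_path j hj]

lemma eq_path_of_mem_arc (hw : w ∈ Z.arc) : w = Z.path (T.level w) := by
  obtain ⟨j, hj, rfl⟩ := Z.mem_arc.1 hw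
  rw [Z.level_path j hj]

lemma injOn_level_arc : Set.InjOn T.level Z.arc := fun w hw w' hw' h ↦ by
  rw [Z.eq_path_of_mem_arc hw, Z.eq_path_of_mem_arc hw', h]

lemma mem_interior_of_mem_arc (hw : w ∈ Z.arc) (hroot : w ≠ T.root) (hfoot : w ≠ Z.foot) :
    w ∈ S.interior := by
  obtain ⟨j, hj, rfl⟩ := Z.mem_arc.1 hw
  refine Z.path_mem_interior j (Nat.one_le_iff_ne_zero.2 ?_) (lt_of_le_of_ne hj ?_)
  · rintro rfl
    exact hroot Z.path_zero
  · rintro rfl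
    exact hfoot rfl

lemma mem_interior_of_mem_arc_of_adj (hw : w ∈ Z.arc) (h : L.graph.Adj T.root w) :
    w ∈ S.interior := by
  refine Z.mem_interior_of_mem_arc hw h.ne' ?_
  rintro rfl
  have := BfsTree.level_eq_one.2 h
  have := Z.level_foot
  have := Z.two_le_length
  omega

lemma notMem_rightBranch_of_mem_arc (hw : w ∈ Z.arc) (hroot : w ≠ T.root) :
    w ∉ Z.rightBranch := fun hr ↦ by
  obtain rfl | hfoot := eq_or_ne w Z.foot
  · exact hroot (Z.eq_root_of_mem_leftBranch_of_mem_rightBranch Z.path_length_mem hr)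
  · exact Z.notMem_rightBranch_of_mem_interior (Z.mem_interior_of_mem_arc hw hroot hfoot) hr

lemma notMem_of_mem_tail (hw : w ∈ Z.tail) (hfoot : w ≠ Z.foot) : w ∉ Z.stem ∪ Z.arc := by
  rw [tail, Finset.mem_filter] at hw
  have hlt : Z.length < T.level w := by
    refine hw.2.lt_of_ne fun h ↦ hfoot ?_
    exact T.injOn_level_ancestors _ hw.1 Z.path_length_mem (h.symm.trans Z.level_foot.symm)
  rw [Finset.mem_union]
  rintro (h | h)
  · exact hlt.not_ge (Z.level_le_of_mem_stem h)
  · exact hlt.not_ge (Z.level_le_of_mem_arc h)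

lemma notMem_of_mem_rightBranch (hw : w ∈ Z.rightBranch) (hroot : w ≠ T.root) :
    w ∉ Z.stem ∪ Z.arc := by
  rw [Finset.mem_union]
  rintro (h | h)
  · exact hroot
      (Z.eq_root_of_mem_leftBranch_of_mem_rightBranch (Z.stem_subset_leftBranch h) hw)
  · exact Z.notMem_rightBranch_of_mem_arc h hroot hw

lemma notMem_of_mem_stem (hw : w ∈ Z.stem) (hroot : w ≠ T.root) (hfoot : w ≠ Z.foot) :
    w ∉ Z.arc ∪ Z.tail ∪ Z.rightBranch := by
  simp only [Finset.mem_union]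
  rintro ((h | h) | h)
  · exact Z.notMem_leftBranch_of_mem_interior (Z.mem_interior_of_mem_arc h hroot hfoot)
      (Z.stem_subset_leftBranch hw)
  · exact Z.notMem_of_mem_tail h hfoot (Finset.mem_union_left _ hw)
  · exact hroot
      (Z.eq_root_of_mem_leftBranch_of_mem_rightBranch (Z.stem_subset_leftBranch hw) h)

lemma notMem_stem_union_arc (hw : w ∈ S.interior) (harc : w ∉ Z.arc) : w ∉ Z.stem ∪ Z.arc := by
  rw [Finset.mem_union]
  exact not_or_intro
    (fun h ↦ Z.notMem_leftBranch_of_mem_interior hw (Z.stem_subset_leftBranch h)) harc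

end Shortcut

end Separator

namespace Separator.Shortcut

open scoped Classical

variable {V : Type*} {L : LatticeModel V} {T : BfsTree L.graph} [Fintype V]
  {S : Separator T} (Z : S.Shortcut) {w : V}

/-- The closed chain running along the shortcut and back to the root along the stem. -/
noncomputable def chain : LatticeChain := treeChain T Z.foot + L.pathChain Z.path Z.length

lemma boundary_chain : boundary Z.chain = 0 := by
  rw [chain, map_add, boundary_treeChain, boundary_pathChain Z.adj_path, Z.path_zero, foot]
  grind

/-- The faces on one side of the shortcut and its stem. -/
noncomputable def side : LatticeFace → ZMod 2 := (exists_isFilling Z.boundary_chain).choose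

lemma isFilling_side : IsFilling Z.chain Z.side := (exists_isFilling Z.boundary_chain).choose_spec

lemma isFilling_add_side : IsFilling (closedChain T S.edge + Z.chain) (S.side + Z.side) :=
  S.isFilling.add Z.isFilling_side

lemma pathChain_mem_chainsOn_arc :
    L.pathChain Z.path Z.length ∈ chainsOn (L.label ⁻¹' (Z.arc : Set V)) := by
  refine chainsOn_mono (Set.preimage_mono ?_) (pathChain_mem_chainsOn Z.adj_path)
  rintro _ ⟨j, hj, rfl⟩
  exact Z.mem_arc.2 ⟨j, hj, rfl⟩

lemma chain_mem_chainsOn : Z.chain ∈ chainsOn (L.label ⁻¹' ↑(Z.stem ∪ Z.arc)) := by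
  rw [Finset.coe_union]
  exact add_mem
    (chainsOn_mono (Set.preimage_mono Set.subset_union_left) (treeChain_mem_chainsOn T _))
    (chainsOn_mono (Set.preimage_mono Set.subset_union_right) Z.pathChain_mem_chainsOn_arc)

lemma left_mem_tail : L.label Z.left ∈ Z.tail :=
  Finset.mem_filter.2 ⟨T.self_mem_ancestors _,
    Z.level_foot.ge.trans (BfsTree.level_le_of_mem_ancestors Z.path_length_mem)⟩

/-- The sum of the two closed curves avoids the stem, as the tree path to the foot cancels. -/
lemma closedChain_add_chain_mem_chainsOn : closedChain T S.edge + Z.chain ∈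
    chainsOn (L.label ⁻¹' ↑(Z.arc ∪ Z.tail ∪ Z.rightBranch)) := by
  have hsum : closedChain T S.edge + Z.chain = L.edgeChain s(Z.left, Z.right) +
      treeChain T (L.label Z.right) + L.pathChain Z.path Z.length +
        (treeChain T (L.label Z.left) + treeChain T Z.foot) := by
    rw [Z.edge_eq, closedChain_mk, chain]
    abel
  rw [hsum]
  refine add_mem (add_mem (add_mem ?_ ?_) ?_) ?_
  · refine chainsOn_mono ?_ (L.edgeChain_mem_chainsOn Z.left Z.right)
    rintro p (hp | hp)
    · rw [Set.mem_preimage, show L.label p = L.label Z.left from hp]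
      exact Finset.mem_union_left _ (Finset.mem_union_right _ Z.left_mem_tail)
    · rw [Set.mem_preimage, show L.label p = L.label Z.right from hp]
      exact Finset.mem_union_right _ (T.self_mem_ancestors _)
  · exact chainsOn_mono (Set.preimage_mono fun _ ↦ Finset.mem_union_right _)
      (treeChain_mem_chainsOn T _)
  · exact chainsOn_mono
      (Set.preimage_mono fun _ h ↦ Finset.mem_union_left _ (Finset.mem_union_left _ h))
      Z.pathChain_mem_chainsOn_arc
  · refine chainsOn_mono (Set.preimage_mono fun w h ↦ ?_)
      (treeChain_add_treeChain_mem_chainsOn Z.path_length_mem)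
    exact Finset.mem_union_left _ (Finset.mem_union_right _
      (Finset.mem_filter.2 ⟨h.1, Z.level_foot.ge.trans h.2⟩))

lemma hasValue_side (hw : w ∉ Z.stem ∪ Z.arc) : L.HasValue Z.side w (L.value Z.side w) :=
  hasValue_value Z.isFilling_side Z.chain_mem_chainsOn hw

lemma value_side_eq_of_adj {w' : V} (h : L.graph.Adj w w') (hw : w ∉ Z.stem ∪ Z.arc)
    (hw' : w' ∉ Z.stem ∪ Z.arc) : L.value Z.side w = L.value Z.side w' :=
  value_eq_of_adj Z.isFilling_side Z.chain_mem_chainsOn h hw hw'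

/-- The side of the shortcut containing the part of the curve not on the shortcut or its stem. -/
noncomputable def outerValue : ZMod 2 := L.value Z.side (L.label Z.right)

lemma right_ne_root : L.label Z.right ≠ T.root :=
  BfsTree.left_ne_root_of_two_le_rootDegree (y := L.label Z.left) <| by
    rw [Finset.union_comm]
    exact Z.cycle_eq ▸ Z.two_le_rootDegree_cycle

lemma adj_left_right : L.graph.Adj (L.label Z.left) (L.label Z.right) := by
  have hadj : triLattice.Adj Z.left Z.right := by
    have := S.edge_mem
    rwa [Z.edge_eq] at this
  refine L.graph_adj_label hadj fun h ↦ Z.right_ne_root ?_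
  exact Z.eq_root_of_mem_leftBranch_of_mem_rightBranch (h ▸ T.self_mem_ancestors _)
    (T.self_mem_ancestors _)

lemma value_side_of_mem_rightBranch (hw : w ∈ Z.rightBranch) (hroot : w ≠ T.root) :
    L.value Z.side w = Z.outerValue := by
  refine value_eq_of_mem_ancestors Z.isFilling_side Z.chain_mem_chainsOn hw fun w' hw' h ↦
    Z.notMem_of_mem_rightBranch hw' ?_
  rintro rfl
  exact hroot (T.level_eq_zero.1 (Nat.le_zero.1 (T.level_root ▸ h)))

lemma value_side_of_mem_tail (hw : w ∈ Z.tail) (hfoot : w ≠ Z.foot) :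
    L.value Z.side w = Z.outerValue := by
  have hlevel := Finset.mem_filter.1 hw
  have hne : ∀ w' ∈ Z.leftBranch, T.level w ≤ T.level w' → w' ∉ Z.stem ∪ Z.arc := by
    refine fun w' hw' h ↦
      Z.notMem_of_mem_tail (Finset.mem_filter.2 ⟨hw', hlevel.2.trans h⟩) ?_
    rintro rfl
    exact hfoot (T.injOn_level_ancestors _ hlevel.1 Z.path_length_mem
      (h.antisymm (Z.level_foot ▸ hlevel.2)))
  rw [value_eq_of_mem_ancestors Z.isFilling_side Z.chain_mem_chainsOn hlevel.1 hne]
  exact Z.value_side_eq_of_adj Z.adj_left_right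
    (hne _ (T.self_mem_ancestors _) (BfsTree.level_le_of_mem_ancestors hlevel.1))
    (Z.notMem_of_mem_rightBranch (T.self_mem_ancestors _) Z.right_ne_root)

/-- The value of the sum of the two sides along the stem. -/
noncomputable def stemValue : ZMod 2 := L.value (S.side + Z.side) (T.parent Z.foot)

lemma hasValue_add_side (hw : w ∉ Z.arc ∪ Z.tail ∪ Z.rightBranch) :
    L.HasValue (S.side + Z.side) w (L.value (S.side + Z.side) w) :=
  hasValue_value Z.isFilling_add_side Z.closedChain_add_chain_mem_chainsOn hw

lemma value_add_side_of_mem_stem (hw : w ∈ Z.stem) (hroot : w ≠ T.root) (hfoot : w ≠ Z.foot) :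
    L.value (S.side + Z.side) w = Z.stemValue := by
  have hlevel : T.level (T.parent Z.foot) < T.level Z.foot := by
    rw [T.level_parent, Z.level_foot]
    have := Z.two_le_length
    omega
  have hparent : T.parent Z.foot ∈ Z.stem := BfsTree.mem_ancestors.2 ⟨1, rfl⟩
  have hw' : w ∈ T.ancestors (T.parent Z.foot) := by
    refine BfsTree.mem_ancestors_of_level_le hparent hw ?_
    rw [T.level_parent]
    refine Nat.le_sub_one_of_lt ((BfsTree.level_le_of_mem_ancestors hw).lt_of_ne fun h ↦ hfoot ?_)
    exact T.injOn_level_ancestors _ hw (T.self_mem_ancestors _) h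
  refine value_eq_of_mem_ancestors Z.isFilling_add_side Z.closedChain_add_chain_mem_chainsOn hw'
    fun w' hw' h ↦ Z.notMem_of_mem_stem (BfsTree.ancestors_subset hparent hw') ?_ ?_
  · rintro rfl
    exact hroot (T.level_eq_zero.1 (Nat.le_zero.1 (T.level_root ▸ h)))
  · rintro rfl
    exact hlevel.not_ge (BfsTree.level_le_of_mem_ancestors hw')

end Separator.Shortcut

namespace Separator

open scoped Classical

variable {V : Type*} {L : LatticeModel V} {T : BfsTree L.graph} [Fintype V]
  {S : Separator T}

namespace Shortcut

variable (Z : S.Shortcut) {w : V}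

lemma chain_apply_of_label_eq_root {a b : LatticePoint} (ha : L.label a = T.root)
    (hb : L.label b = Z.path 1) :
    Z.chain s(a, b) = L.edgeChain (L.crossing s(T.root, Z.path 1)) s(a, b) := by
  have hlength := Z.two_le_length
  have htree : treeChain T Z.foot s(a, b) = 0 := by
    rw [Sym2.eq_swap]
    refine mem_chainsOn.1 (treeChain_mem_chainsOn T Z.foot) b (fun h ↦ ?_) a
    rw [Set.mem_preimage, hb] at h
    exact Z.notMem_leftBranch_of_mem_interior Z.path_one_mem_interior (Z.stem_subset_leftBranch h)
  have hrest : L.pathChain (fun j ↦ Z.path (1 + j)) (Z.length - 1) s(a, b) = 0 := by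
    have hadj : ∀ j < Z.length - 1, L.graph.Adj (Z.path (1 + j)) (Z.path (1 + (j + 1))) :=
      fun j hj ↦ Z.adj_path (1 + j) (by omega)
    refine mem_chainsOn.1 (pathChain_mem_chainsOn hadj) a ?_ b
    rintro ⟨j, hj, h⟩
    have hlevel := Z.level_path (1 + j) (by rw [Set.mem_Iic] at hj; omega)
    rw [show Z.path (1 + j) = _ from h, ha, T.level_root] at hlevel
    omega
  rw [chain, pathChain_add_pathChain _ (by omega : 1 ≤ Z.length), Pi.add_apply, Pi.add_apply, htree,
    hrest, zero_add, add_zero, pathChain, Finset.sum_range_one, Z.path_zero]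

/-- The indicator of the faces on the chosen side of `S` and on the inner side of the shortcut. -/
noncomputable def innerSide : LatticeFace → ZMod 2 := S.side * (Z.side + fun _ ↦ Z.outerValue)

lemma jump_innerSide_of_label_eq_root {a : LatticePoint} {k : Fin 6} (ha : L.label a = T.root)
    (hb : L.label (a + hexDir k) = Z.path 1) : jump Z.innerSide a k =
      L.edgeChain (L.crossing s(T.root, Z.path 1)) s(a, a + hexDir k) := by
  obtain ⟨hcycle, hvalue⟩ := S.mem_interior.1 Z.path_one_mem_interior
  obtain ⟨hleft, hright⟩ := (S.hasValue hcycle).apply_leftFace_of_label_add hb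
  rw [← Z.chain_apply_of_label_eq_root ha hb, Z.isFilling_side a k]
  simp only [jump, innerSide, Pi.mul_apply, Pi.add_apply, hleft, hright, hvalue]
  grind

lemma jump_innerSide_eq_zero_of_value_side_eq {a : LatticePoint} {k : Fin 6}
    (hw : L.label (a + hexDir k) ∉ Z.stem ∪ Z.arc)
    (h : L.value Z.side (L.label (a + hexDir k)) = Z.outerValue) : jump Z.innerSide a k = 0 := by
  obtain ⟨hleft, hright⟩ := (Z.hasValue_side hw).apply_leftFace_of_label_add rfl
  simp only [jump, innerSide, Pi.mul_apply, Pi.add_apply, hleft, hright, h]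
  grind

lemma jump_innerSide_eq_zero_of_mem_stem {a : LatticePoint} {k : Fin 6}
    (hstem : Z.stemValue = 1 + Z.outerValue) (hw : L.label (a + hexDir k) ∈ Z.stem)
    (hroot : L.label (a + hexDir k) ≠ T.root) (hfoot : L.label (a + hexDir k) ≠ Z.foot) :
    jump Z.innerSide a k = 0 := by
  have hmul : ∀ r : ZMod 2, r * (r + 1) = 0 := by decide
  obtain ⟨hleft, hright⟩ := (Z.hasValue_add_side
    (Z.notMem_of_mem_stem hw hroot hfoot)).apply_leftFace_of_label_add rfl
  rw [Z.value_add_side_of_mem_stem hw hroot hfoot, hstem, Pi.add_apply] at hleft hright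
  have hinner : ∀ φ, S.side φ + Z.side φ = 1 + Z.outerValue → Z.innerSide φ = 0 := fun φ h ↦ by
    have : Z.side φ + Z.outerValue = S.side φ + 1 := by grind
    rw [innerSide, Pi.mul_apply, Pi.add_apply, this, hmul]
  rw [jump, hinner _ hleft, hinner _ hright, add_zero]

lemma jump_innerSide_eq_zero {a : LatticePoint} {k : Fin 6}
    (hstem : Z.stemValue = 1 + Z.outerValue) (hw : L.graph.Adj T.root (L.label (a + hexDir k)))
    (hpath : L.label (a + hexDir k) ≠ Z.path 1) : jump Z.innerSide a k = 0 := by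
  have hlevel := BfsTree.level_eq_one.2 hw
  have hfoot : L.label (a + hexDir k) ≠ Z.foot := fun h ↦ by
    have := Z.two_le_length
    have := Z.level_foot
    rw [← h] at this
    omega
  have harc : L.label (a + hexDir k) ∉ Z.arc := fun h ↦ hpath (hlevel ▸ Z.eq_path_of_mem_arc h)
  by_cases hright : L.label (a + hexDir k) ∈ Z.rightBranch
  · exact Z.jump_innerSide_eq_zero_of_value_side_eq (Z.notMem_of_mem_rightBranch hright hw.ne')
      (Z.value_side_of_mem_rightBranch hright hw.ne')
  by_cases htail : L.label (a + hexDir k) ∈ Z.tail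
  · exact Z.jump_innerSide_eq_zero_of_value_side_eq (Z.notMem_of_mem_tail htail hfoot)
      (Z.value_side_of_mem_tail htail hfoot)
  by_cases hmem : L.label (a + hexDir k) ∈ Z.stem
  · exact Z.jump_innerSide_eq_zero_of_mem_stem hstem hmem hw.ne' hfoot
  have hcycle : L.label (a + hexDir k) ∉ S.cycle := by
    rw [Z.cycle_eq, ← Z.stem_union_tail]
    simp only [Finset.mem_union]
    tauto
  have hside : L.label (a + hexDir k) ∉ Z.stem ∪ Z.arc := by
    rw [Finset.mem_union]
    exact not_or_intro hmem harc
  obtain ⟨hl, hr⟩ := (S.hasValue hcycle).apply_leftFace_of_label_add rfl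
  obtain ⟨hl', hr'⟩ := (Z.hasValue_side hside).apply_leftFace_of_label_add rfl
  simp only [jump, innerSide, Pi.mul_apply, Pi.add_apply, hl, hr, hl', hr']
  exact CharTwo.add_self_eq_zero _

/-- Otherwise `innerSide` would jump along the boundary of the fibre of the root only where the
shortcut leaves it. -/
lemma stemValue_ne : Z.stemValue ≠ 1 + Z.outerValue := fun hstem ↦ by
  obtain ⟨a, k, ha, hb, hpath, hjump⟩ := exists_jump_ne_zero_of_crossing (f := Z.innerSide)
    Z.adj_root_path_one fun a k ha hb ↦ by
      rw [Z.jump_innerSide_of_label_eq_root ha hb, L.edgeChain_apply_of_label_ne]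
      · simp
      · rw [ha, hb]
        exact Z.adj_root_path_one.ne
  refine hjump (Z.jump_innerSide_eq_zero hstem ?_ hpath)
  have hadj := L.graph_adj_label (triLattice_adj_add_hexDir a k) (by rw [ha]; exact hb.symm)
  rwa [ha] at hadj

/-- The part of the interior between the shortcut and the stem. -/
noncomputable def innerPiece : Finset V :=
  {w ∈ S.interior | w ∉ Z.arc ∧ L.value Z.side w ≠ Z.outerValue}

/-- The part of the interior between the shortcut and the rest of the curve. -/
noncomputable def outerPiece : Finset V :=
  {w ∈ S.interior | w ∉ Z.arc ∧ L.value Z.side w = Z.outerValue}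

lemma mem_stem_or_mem_arc_of_adj {w' : V} (hw : w ∈ Z.innerPiece) (h : L.graph.Adj w w')
    (hw' : w' ∉ Z.innerPiece) (hroot : w' ≠ T.root) : w' ∈ Z.stem ∨ w' ∈ Z.arc := by
  rw [innerPiece, Finset.mem_filter] at hw hw'
  by_contra! hnot
  have hside : w' ∉ Z.stem ∪ Z.arc := fun h ↦ (Finset.mem_union.1 h).elim hnot.1 hnot.2
  have hvalue := Z.value_side_eq_of_adj h (Z.notMem_stem_union_arc hw.1 hw.2.1) hside
  rw [hvalue] at hw
  have hregion := S.mem_region_of_adj hw.1 h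
  rw [region, Z.cycle_eq, ← Z.stem_union_tail] at hregion
  simp only [Finset.mem_union] at hregion
  rcases hregion with hin | (hstem | htail) | hright
  · exact hw' ⟨hin, hnot.2, hw.2.2⟩
  · exact hnot.1 hstem
  · exact hw.2.2 (Z.value_side_of_mem_tail htail fun h ↦ hnot.2 (h ▸ Z.foot_mem_arc))
  · exact hw.2.2 (Z.value_side_of_mem_rightBranch hright hroot)

lemma mem_arc_or_mem_tail_or_mem_rightBranch_of_adj {w' : V} (hw : w ∈ Z.outerPiece)
    (h : L.graph.Adj w w') (hw' : w' ∉ Z.outerPiece) (hroot : w' ≠ T.root) :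
    w' ∈ Z.arc ∨ w' ∈ Z.tail ∨ w' ∈ Z.rightBranch := by
  rw [outerPiece, Finset.mem_filter] at hw hw'
  by_contra! hnot
  have hregion := S.mem_region_of_adj hw.1 h
  rw [region, Z.cycle_eq, ← Z.stem_union_tail] at hregion
  simp only [Finset.mem_union, hnot, or_false] at hregion
  obtain hin | hstem := hregion
  · refine hw' ⟨hin, hnot.1, ?_⟩
    rw [← hw.2.2]
    exact (Z.value_side_eq_of_adj h (Z.notMem_stem_union_arc hw.1 hw.2.1)
      (Z.notMem_stem_union_arc hin hnot.1)).symm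
  · have hfoot : w' ≠ Z.foot := fun h ↦ hnot.1 (h ▸ Z.foot_mem_arc)
    have hsum : w ∉ Z.arc ∪ Z.tail ∪ Z.rightBranch := by
      have := Z.notMem_leftBranch_of_mem_interior hw.1
      rw [← Z.stem_union_tail] at this
      have := Z.notMem_rightBranch_of_mem_interior hw.1
      simp only [Finset.mem_union] at *
      tauto
    have hvalue := value_eq_of_adj Z.isFilling_add_side Z.closedChain_add_chain_mem_chainsOn h hsum
      (Z.notMem_of_mem_stem hstem hroot hfoot)
    rw [Z.value_add_side_of_mem_stem hstem hroot hfoot] at hvalue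
    refine Z.stemValue_ne (hvalue.symm.trans ?_)
    rw [← hw.2.2, ← (S.mem_interior.1 hw.1).2]
    rfl

lemma injOn_level_arc_union_tail : Set.InjOn T.level (Z.arc ∪ Z.tail : Finset V) := by
  have hcross : ∀ w ∈ Z.arc, ∀ w' ∈ Z.tail, T.level w = T.level w' → w = w' := by
    refine fun w hw w' hw' h ↦ ?_
    have hlevel := Z.level_le_of_mem_arc hw
    have hfoot : w' = Z.foot := by_contra fun hne ↦ Z.notMem_of_mem_tail hw' hne <| by
      rw [tail, Finset.mem_filter] at hw'
      refine absurd (T.injOn_level_ancestors _ hw'.1 Z.path_length_mem ?_) hne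
      exact (hw'.2.antisymm (h ▸ hlevel)).symm.trans Z.level_foot.symm
    rw [hfoot] at h ⊢
    exact Z.injOn_level_arc hw Z.foot_mem_arc h
  rw [Finset.coe_union]
  rintro w (hw | hw) w' (hw' | hw') h
  · exact Z.injOn_level_arc hw hw' h
  · exact hcross w hw w' hw' h
  · exact (hcross w' hw' w hw h.symm).symm
  · exact T.injOn_level_ancestors _ (Finset.mem_filter.1 hw).1 (Finset.mem_filter.1 hw').1 h

lemma rootDegree_innerPiece_le (h : T.rootDegree S.interior ≤ 2) :
    T.rootDegree (Z.innerPiece ∪ Z.stem ∪ Z.arc) ≤ 3 := by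
  have hsub : T.rootDegree (Z.innerPiece ∪ Z.stem ∪ Z.arc) ≤
      T.rootDegree (S.interior ∪ Z.stem) := by
    refine BfsTree.rootDegree_le_rootDegree fun w hw hadj ↦ ?_
    have harc := fun h ↦ Z.mem_interior_of_mem_arc_of_adj h hadj
    simp only [innerPiece, Finset.mem_union, Finset.mem_filter] at hw ⊢
    tauto
  exact (hsub.trans BfsTree.rootDegree_union_le).trans
    (add_le_add h (BfsTree.rootDegree_ancestors_le_one _))

lemma rootDegree_outerPiece_le (h : T.rootDegree S.interior ≤ 2) :
    T.rootDegree (Z.outerPiece ∪ (Z.arc ∪ Z.tail) ∪ Z.rightBranch) ≤ 3 := by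
  have hsub : T.rootDegree (Z.outerPiece ∪ (Z.arc ∪ Z.tail) ∪ Z.rightBranch) ≤
      T.rootDegree (S.interior ∪ Z.rightBranch) := by
    refine BfsTree.rootDegree_le_rootDegree fun w hw hadj ↦ ?_
    have harc := fun h ↦ Z.mem_interior_of_mem_arc_of_adj h hadj
    have htail : w ∉ Z.tail := fun h ↦ by
      have := (Finset.mem_filter.1 h).2
      have := Z.two_le_length
      have := BfsTree.level_eq_one.2 hadj
      omega
    simp only [outerPiece, Finset.mem_union, Finset.mem_filter] at hw ⊢
    tauto
  exact (hsub.trans BfsTree.rootDegree_union_le).trans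
    (add_le_add h (BfsTree.rootDegree_ancestors_le_one _))

variable {G : SimpleGraph V}

lemma card_innerPiece_le_sn (hG : G ≤ L.graph) (h : T.rootDegree S.interior ≤ 2) :
    #((Z.innerPiece ∪ Z.stem ∪ Z.arc).erase T.root) ≤ sn G (fun _ ↦ 3) T.root := by
  refine card_erase_le_sn_of_geodesics hG T.connected (by norm_num) (T.injOn_level_ancestors _)
    Z.injOn_level_arc (fun w hw w' hadj ↦ ?_) (Z.rootDegree_innerPiece_le h)
  have := Z.mem_stem_or_mem_arc_of_adj hw hadj
  simp only [Finset.mem_union]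
  tauto

lemma card_outerPiece_le_sn (hG : G ≤ L.graph) (h : T.rootDegree S.interior ≤ 2) :
    #((Z.outerPiece ∪ (Z.arc ∪ Z.tail) ∪ Z.rightBranch).erase T.root) ≤
      sn G (fun _ ↦ 3) T.root := by
  refine card_erase_le_sn_of_geodesics hG T.connected (by norm_num) Z.injOn_level_arc_union_tail
    (T.injOn_level_ancestors _) (fun w hw w' hadj ↦ ?_) (Z.rootDegree_outerPiece_le h)
  have := Z.mem_arc_or_mem_tail_or_mem_rightBranch_of_adj hw hadj
  simp only [Finset.mem_union]
  tauto

end Shortcut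

variable {G : SimpleGraph V}

lemma card_region_erase_root_le_two_mul_sn (hG : G ≤ L.graph) (h : T.rootDegree S.interior ≤ 2)
    (hS : Nonempty S.Shortcut) :
    #(S.region.erase T.root) ≤ 2 * sn G (fun _ ↦ 3) T.root := by
  obtain ⟨Z⟩ := hS
  have hsub : S.region.erase T.root ⊆ (Z.innerPiece ∪ Z.stem ∪ Z.arc).erase T.root ∪
      (Z.outerPiece ∪ (Z.arc ∪ Z.tail) ∪ Z.rightBranch).erase T.root := by
    rw [← Finset.erase_union_distrib]
    refine Finset.erase_subset_erase _ fun w hw ↦ ?_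
    rw [region, Z.cycle_eq, ← Z.stem_union_tail] at hw
    simp only [Shortcut.innerPiece, Shortcut.outerPiece, Finset.mem_union, Finset.mem_filter]
      at hw ⊢
    tauto
  have := (Finset.card_le_card hsub).trans (Finset.card_union_le ..)
  have := Z.card_innerPiece_le_sn hG h
  have := Z.card_outerPiece_le_sn hG h
  omega

end Separator

lemma dist_getVert_of_length_eq_dist {V : Type*} {H : SimpleGraph V} {v c : V} {p : H.Walk v c}
    (hp : p.length = H.dist v c) {j : ℕ} (hj : j ≤ p.length) : H.dist v (p.getVert j) = j := by
  rw [← SimpleGraph.length_eq_dist_of_subwalk hp (p.isSubwalk_take j), p.take_length,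
    min_eq_left hj]

namespace Separator

open scoped Classical

variable {V : Type*} {L : LatticeModel V} {T : BfsTree L.graph} {S : Separator T}

lemma exists_edge_eq_and_mem_ancestors {w : V} (hw : w ∈ S.cycle) :
    ∃ a b, S.edge = s(a, b) ∧ w ∈ T.ancestors (L.label a) := by
  obtain ⟨a, b, hedge⟩ : ∃ a b, S.edge = s(a, b) := by
    induction h : S.edge with | h a b
    exact ⟨a, b, rfl⟩
  rw [S.cycle_eq hedge, Finset.mem_union] at hw
  obtain ha | hb := hw
  · exact ⟨a, b, hedge, ha⟩
  · exact ⟨b, a, hedge.trans Sym2.eq_swap, hb⟩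

lemma card_filter_level_le {t : ℕ} (ht : 1 ≤ t) : #{c ∈ S.cycle | T.level c ≤ t} ≤ 3 * t := by
  obtain ⟨a, b, hedge, -⟩ := exists_edge_eq_and_mem_ancestors
    (show T.root ∈ S.cycle by
      induction h : S.edge with | h a b
      exact S.cycle_eq h ▸ Finset.mem_union_left _ (T.root_mem_ancestors _))
  have hsub : {c ∈ S.cycle | T.level c ≤ t} ⊆ insert T.root
      ({c ∈ T.ancestors (L.label a) | 1 ≤ T.level c ∧ T.level c ≤ t} ∪
        {c ∈ T.ancestors (L.label b) | 1 ≤ T.level c ∧ T.level c ≤ t}) := by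
    intro c hc
    rw [Finset.mem_filter, S.cycle_eq hedge, Finset.mem_union] at hc
    have := T.level_eq_zero (x := c)
    simp only [Finset.mem_insert, Finset.mem_union, Finset.mem_filter, Nat.one_le_iff_ne_zero]
    tauto
  have := (Finset.card_le_card hsub).trans (Finset.card_insert_le ..)
  have := Finset.card_union_le {c ∈ T.ancestors (L.label a) | 1 ≤ T.level c ∧ T.level c ≤ t}
    {c ∈ T.ancestors (L.label b) | 1 ≤ T.level c ∧ T.level c ≤ t}
  have := card_filter_le_of_injOn (T.injOn_level_ancestors (L.label a)) 1 t
  have := card_filter_le_of_injOn (T.injOn_level_ancestors (L.label b)) 1 t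
  omega

variable [Fintype V]

lemma nonempty_shortcut {c : V} {p : L.graph.Walk T.root c} (hp : p.length = T.level c)
    (hc : c ∈ S.cycle) (hinterior : p.getVert 1 ∈ S.interior) (h : 2 ≤ T.rootDegree S.cycle) :
    Nonempty S.Shortcut := by
  have hnotMem := (S.mem_interior.1 hinterior).1
  have hexists : ∃ j, 1 ≤ j ∧ p.getVert j ∈ S.cycle :=
    ⟨p.length + 1, Nat.le_add_left .., by rwa [p.getVert_of_length_le (Nat.le_succ _)]⟩
  have hlength : 2 ≤ p.length := by
    by_contra! hlt
    exact hnotMem (by rwa [p.getVert_of_length_le (Nat.le_of_lt_succ hlt)])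
  obtain ⟨i, ⟨hi, hmem⟩, hmin⟩ : ∃ i, (1 ≤ i ∧ p.getVert i ∈ S.cycle) ∧
      ∀ j < i, ¬(1 ≤ j ∧ p.getVert j ∈ S.cycle) :=
    ⟨Nat.find hexists, Nat.find_spec hexists, fun j hj ↦ Nat.find_min hexists hj⟩
  have hle : i ≤ p.length := by
    by_contra! hlt
    exact hmin _ hlt ⟨by omega, by rwa [p.getVert_length]⟩
  have hadj : ∀ j < i, L.graph.Adj (p.getVert j) (p.getVert (j + 1)) := fun j hj ↦
    p.adj_getVert_succ (by omega)
  obtain ⟨a, b, hedge, ha⟩ := exists_edge_eq_and_mem_ancestors hmem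
  refine ⟨⟨a, b, hedge, h, p.getVert, i, ?_, hadj,
    fun j hj ↦ dist_getVert_of_length_eq_dist hp (hj.trans hle), fun j hj ↦ ?_, ha⟩⟩
  · refine hi.lt_of_ne fun h1 ↦ hnotMem ?_
    rwa [h1]
  · induction j, hj using Nat.le_induction with
    | base => exact fun _ ↦ hinterior
    | succ j hj ih =>
      intro hji
      have hregion := S.mem_region_of_adj (ih (by omega)) (hadj j (by omega))
      exact (Finset.mem_union.1 hregion).resolve_right fun hc ↦ hmin _ hji ⟨by omega, hc⟩

lemma nonempty_shortcut_of_dist_lt {u c : V} (hu : L.graph.Adj T.root u)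
    (hinterior : u ∈ S.interior) (hc : c ∈ S.cycle) (h : 2 ≤ T.rootDegree S.cycle)
    (hdist : L.graph.dist u c < T.level c) : Nonempty S.Shortcut := by
  obtain ⟨q, hq⟩ := T.connected.exists_walk_length_eq_dist u c
  have hle := SimpleGraph.dist_le (q.cons hu)
  rw [SimpleGraph.Walk.length_cons, hq] at hle
  refine nonempty_shortcut (p := q.cons hu) ?_ hc ?_ h
  · rw [SimpleGraph.Walk.length_cons, hq]
    exact le_antisymm hdist hle
  · rwa [q.getVert_cons_succ hu, q.getVert_zero]

variable {G : SimpleGraph V}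

lemma card_flip_interior_union_cycle_le_sn (hG : G ≤ L.graph) {u : V} (hu : u ∈ S.interior)
    (hdist : ∀ c ∈ S.cycle, T.level c ≤ L.graph.dist u c) :
    #(S.flip.interior ∪ S.cycle) ≤ sn G (fun _ ↦ 3) u := by
  have hcompl {w : V} : w ∈ S.interior ↔ w ∉ S.flip.interior ∪ S.cycle := by
    rw [← Finset.mem_compl, compl_flip_interior_union_cycle]
  refine card_le_sn_of_inBoundary (d := L.graph.dist u) (SimpleGraph.dist_self ..)
    (fun x y hxy ↦ ?_) (hcompl.1 hu) Finset.subset_union_right (fun y hy x hx hxy ↦ ?_)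
    fun t ↦ ?_
  · rw [← SimpleGraph.dist_eq_one_iff_adj.2 (hG hxy)]
    exact T.connected.dist_triangle
  · have hregion := S.mem_region_of_adj (hcompl.2 hx) (hG hxy)
    exact (Finset.mem_union.1 hregion).resolve_left fun h ↦ hcompl.1 h hy
  · obtain rfl | ht := Nat.eq_zero_or_pos t
    · rw [mul_zero, Nat.le_zero, Finset.card_eq_zero]
      refine Finset.filter_eq_empty_iff.2 fun c hc h ↦ (S.mem_interior.1 hu).1 ?_
      rwa [T.connected.dist_eq_zero_iff.1 (Nat.le_zero.1 h)]
    · refine le_trans (Finset.card_le_card fun c hc ↦ ?_) (card_filter_level_le (S := S) ht)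
      rw [Finset.mem_filter] at hc ⊢
      exact ⟨hc.1, (hdist c hc.1).trans hc.2⟩

end Separator

namespace BfsTree

open scoped Classical

variable {V : Type*} [Fintype V] {L : LatticeModel V} {T : BfsTree L.graph} {G : SimpleGraph V}

/-- A shortcut would let a large set be saved from the root, so there is none, and a fire starting
at a neighbour of the root inside the separator is too far from the separating curve. -/
lemma exists_card_eq_two_forall_card_le_two_mul_sn (hG : G ≤ L.graph)
    (h : T.rootDegree Finset.univ ≤ 6)
    (hsn : 6 * sn G (fun _ ↦ 3) T.root + 1 < Fintype.card V) :
    ∃ X : Finset V, #X = 2 ∧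
      ∀ u ∈ X, L.graph.Adj T.root u ∧ Fintype.card V ≤ 2 * sn G (fun _ ↦ 3) u := by
  obtain ⟨S, hcycle, hinterior, hle, hregion⟩ :=
    exists_separator_of_rootDegree_le_six hG h (by omega)
  have hshortcut : ¬Nonempty S.Shortcut := fun hS ↦ by
    have := Separator.card_region_erase_root_le_two_mul_sn hG hinterior.le hS
    omega
  refine ⟨{w ∈ S.interior | L.graph.Adj T.root w}, hinterior, fun u hu ↦ ?_⟩
  rw [Finset.mem_filter] at hu
  refine ⟨hu.2, ?_⟩
  have hsave := S.card_flip_interior_union_cycle_le_sn hG hu.1 fun c hc ↦ not_lt.1 fun hlt ↦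
    hshortcut (Separator.nonempty_shortcut_of_dist_lt hu.2 hu.1 hc hcycle.ge hlt)
  have hcard := Finset.card_add_card_compl (S.flip.interior ∪ S.cycle)
  rw [S.compl_flip_interior_union_cycle] at hcard
  have := Finset.card_le_card (Finset.subset_union_left (s₁ := S.flip.interior) (s₂ := S.cycle))
  omega

end BfsTree

section Discharging

open scoped Classical

lemma charge_le {n d b β f : ℕ} (hn : 2 ≤ n) (hb : b ≤ d) (hpos : 0 < b → n ≤ 2 * f)
    (hthree : d ≤ 3 → n ≤ f + 1) (hfive : d ≤ 5 → n ≤ 3 * f + 1)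
    (hsix : d = 6 → 2 * n ≤ 21 * f + 2 * n * β) :
    14 * n + n * b ≤ 21 * f + 7 + 2 * n * d + 2 * n * β := by
  have hnb : n * b ≤ n * d := Nat.mul_le_mul_left n hb
  rw [mul_assoc 2 n d]
  have hfour : 4 ≤ d → n * 4 ≤ n * d := Nat.mul_le_mul_left n
  have hseven : 7 ≤ d → n * 7 ≤ n * d := Nat.mul_le_mul_left n
  obtain rfl | hb0 := Nat.eq_zero_or_pos b
  · obtain rfl | hd := eq_or_ne d 6 <;> omega
  · have := hpos hb0
    by_cases hd : d ≤ 3 <;> omega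

variable {V : Type*} [Fintype V] {H : SimpleGraph V} {f : V → ℕ}

/-- Give each vertex `v` the charge `21 f(v) + 2 n d(v)`, where `d` is the degree. A vertex of
degree `6` whose charge is below `14 n` takes `n` from each of two neighbours; then every vertex
keeps at least `14 n - 7`, while the total charge is at most `21 ∑ f + 12 n² - 12 n`. -/
lemma two_mul_card_sq_lt_sum (hn : 2 ≤ Fintype.card V)
    (hedge : #H.edgeFinset + 3 ≤ 3 * Fintype.card V)
    (hthree : ∀ v, H.degree v ≤ 3 → Fintype.card V ≤ f v + 1)
    (hfive : ∀ v, H.degree v ≤ 5 → Fintype.card V ≤ 3 * f v + 1)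
    (hsix : ∀ v, H.degree v = 6 → 21 * f v < 2 * Fintype.card V →
      ∃ X : Finset V, #X = 2 ∧ ∀ u ∈ X, H.Adj v u ∧ Fintype.card V ≤ 2 * f u) :
    2 * Fintype.card V ^ 2 < 21 * ∑ v, f v := by
  set n := Fintype.card V with hn_eq
  let poor : Finset V := {v | H.degree v = 6 ∧ 21 * f v < 2 * n}
  have hX : ∀ v ∈ poor, ∃ X : Finset V, #X = 2 ∧ ∀ u ∈ X, H.Adj v u ∧ n ≤ 2 * f u := fun v hv ↦
    hsix v (Finset.mem_filter.1 hv).2.1 (Finset.mem_filter.1 hv).2.2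
  choose! X hcard hX using hX
  have hcharge (x : V) : 14 * n + n * #{v ∈ poor | x ∈ X v} ≤
      21 * f x + 7 + 2 * n * H.degree x + 2 * n * if x ∈ poor then 1 else 0 := by
    refine charge_le hn ?_ (fun hpos ↦ ?_) (hthree x) (hfive x) fun hd ↦ ?_
    · rw [← SimpleGraph.card_neighborFinset_eq_degree]
      refine Finset.card_le_card fun v hv ↦ ?_
      rw [Finset.mem_filter] at hv
      exact (H.mem_neighborFinset ..).2 (hX v hv.1 x hv.2).1.symm
    · obtain ⟨v, hv⟩ := Finset.card_pos.1 hpos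
      rw [Finset.mem_filter] at hv
      exact (hX v hv.1 x hv.2).2
    · split_ifs with hx
      · omega
      · have : ¬21 * f x < 2 * n := fun h ↦ hx (Finset.mem_filter.2 ⟨Finset.mem_univ _, hd, h⟩)
        omega
  have hdouble : ∑ x, #{v ∈ poor | x ∈ X v} = #poor * 2 := by
    rw [← Finset.sum_const_nat hcard]
    refine (Finset.sum_card_bipartiteAbove_eq_sum_card_bipartiteBelow fun x v ↦ x ∈ X v).trans
      (Finset.sum_congr rfl fun v _ ↦ ?_)
    rw [Finset.bipartiteBelow, Finset.filter_univ_mem]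
  have hsum := Finset.sum_le_sum fun x (_ : x ∈ Finset.univ) ↦ hcharge x
  simp only [Finset.sum_add_distrib, ← Finset.mul_sum, Finset.sum_const, Finset.card_univ,
    smul_eq_mul, ← hn_eq, SimpleGraph.sum_degrees_eq_twice_card_edges, hdouble,
    Finset.sum_boole, Finset.filter_univ_mem, Nat.cast_id] at hsum
  nlinarith [Nat.mul_le_mul_left n hedge]

end Discharging

section SurvivingRate

open scoped Classical

variable {V : Type*} [Fintype V] {G : SimpleGraph V}

lemma BfsTree.rootDegree_univ {H : SimpleGraph V} (T : BfsTree H) :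
    T.rootDegree Finset.univ = H.degree T.root := by
  rw [← SimpleGraph.card_neighborFinset_eq_degree, SimpleGraph.neighborFinset_eq_filter]
  rfl

lemma LatticeModel.two_div_lt_survivingRate (L : LatticeModel V) (hG : G ≤ L.graph)
    (hconn : G.Connected) (hn : 2 ≤ Fintype.card V) :
    2 / 21 < survivingRate G fun _ ↦ 3 := by
  have : Nonempty V := hconn.nonempty
  have hedge := L.card_edgeSet_add_three_le
  rw [← SimpleGraph.edgeFinset_card] at hedge
  have hsum : 2 * Fintype.card V ^ 2 < 21 * ∑ v, sn G (fun _ ↦ 3) v := by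
    refine two_mul_card_sq_lt_sum hn hedge (fun v hd ↦ ?_) (fun v hd ↦ ?_) fun v hd hsn ↦ ?_
    all_goals
      obtain ⟨T, rfl⟩ := BfsTree.exists_root_eq (hconn.mono hG) v
      rw [← T.rootDegree_univ] at hd
    · exact T.card_le_sn_add_one hG hd
    · exact T.card_le_three_mul_sn_add_one hG hd
    · have : #{w | L.graph.Adj T.root w} < Fintype.card V :=
        Finset.card_lt_univ_of_notMem (x := T.root) (by simp)
      refine T.exists_card_eq_two_forall_card_le_two_mul_sn hG hd.le ?_
      rw [BfsTree.rootDegree] at hd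
      omega
  have hpos : (0 : ℝ) < (Fintype.card V : ℝ) ^ 2 := by positivity
  rw [survivingRate, div_lt_div_iff₀ (by norm_num) hpos, mul_comm (∑ v, _)]
  exact_mod_cast hsum

end SurvivingRate

section PartialPartition

variable {P ι : Type*} {H : SimpleGraph P} {F : ι → Set P}

lemma preconnected_induce_insert {Y : Set P} (hY : (H.induce Y).Preconnected) {p q : P}
    (hp : p ∈ Y) (hpq : H.Adj p q) : (H.induce (insert q Y)).Preconnected := by
  rw [← Set.union_singleton]
  exact (SimpleGraph.connected_induce_union hY (SimpleGraph.Preconnected.of_subsingleton) hp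
    (Set.mem_singleton q) hpq).preconnected

lemma exists_adj_mem_notMem (hH : H.Preconnected) {S : Set P} (hS : S.Nonempty)
    (hcompl : Sᶜ.Nonempty) : ∃ p q, H.Adj p q ∧ p ∈ S ∧ q ∉ S := by
  obtain ⟨a, ha⟩ := hS
  obtain ⟨b, hb⟩ := hcompl
  obtain ⟨w⟩ := hH a b
  obtain ⟨d, -, hfst, hsnd⟩ := w.exists_boundary_dart S ha hb
  exact ⟨d.fst, d.snd, d.adj, hfst, hsnd⟩

lemma exists_forall_preimage_singleton_eq (hcover : ⋃ i, F i = Set.univ)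
    (hdisj : Pairwise fun i j ↦ Disjoint (F i) (F j)) : ∃ ψ : P → ι, ∀ i, ψ ⁻¹' {i} = F i := by
  choose ψ hψ using fun a ↦ Set.mem_iUnion.1 (hcover ▸ Set.mem_univ a)
  refine ⟨ψ, fun i ↦ Set.Subset.antisymm (fun a ha ↦ ha ▸ hψ a) fun a ha ↦ ?_⟩
  by_contra hne
  exact Set.disjoint_left.1 (hdisj hne) (hψ a) ha

lemma exists_preconnected_partition (hH : H.Preconnected)
    (hF : ∀ i, (H.induce (F i)).Preconnected) (hdisj : Pairwise fun i j ↦ Disjoint (F i) (F j))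
    (hne : (⋃ i, F i).Nonempty) (hfin : (⋃ i, F i)ᶜ.Finite) :
    ∃ ψ : P → ι, ∀ i, F i ⊆ ψ ⁻¹' {i} ∧ (H.induce (ψ ⁻¹' {i})).Preconnected := by
  classical
  induction hn : (⋃ i, F i)ᶜ.ncard generalizing F with
  | zero =>
    rw [Set.ncard_eq_zero hfin, Set.compl_empty_iff] at hn
    obtain ⟨ψ, hψ⟩ := exists_forall_preimage_singleton_eq hn hdisj
    exact ⟨ψ, fun i ↦ by rw [hψ]; exact ⟨le_rfl, hF i⟩⟩
  | succ n ih =>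
    obtain ⟨p, q, hpq, hp, hq⟩ := exists_adj_mem_notMem hH hne
      (Set.nonempty_of_ncard_ne_zero (hn ▸ n.succ_ne_zero))
    obtain ⟨i, hp⟩ := Set.mem_iUnion.1 hp
    let F' := Function.update F i (insert q (F i))
    have hself : F' i = insert q (F i) := Function.update_self ..
    have hother (j : ι) (hj : j ≠ i) : F' j = F j := Function.update_of_ne hj ..
    have hFF' (j : ι) : F j ⊆ F' j := by
      obtain rfl | hj := eq_or_ne j i
      · exact hself ▸ Set.subset_insert ..
      · exact (hother j hj).ge
    have hunion : (⋃ j, F' j)ᶜ = (⋃ j, F j)ᶜ \ {q} := by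
      ext a
      simp only [F', Set.mem_compl_iff, Set.mem_iUnion, Set.mem_sdiff, Set.mem_singleton_iff,
        Function.update_apply]
      grind
    have hF' (j : ι) : (H.induce (F' j)).Preconnected := by
      obtain rfl | hj := eq_or_ne j i
      · rw [hself]
        exact preconnected_induce_insert (hF j) hp hpq
      · rw [hother j hj]
        exact hF j
    have hdisj' : Pairwise fun j k ↦ Disjoint (F' j) (F' k) := fun j k hjk ↦ by
      have := Set.mem_iUnion.not.1 hq
      have := Set.disjoint_left.1 (hdisj hjk)
      simp only [F', Set.disjoint_left, Function.update_apply]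
      grind
    obtain ⟨ψ, hψ⟩ := ih hF' hdisj' (hne.mono (Set.iUnion_mono hFF')) (hunion ▸ hfin.sdiff)
      (by rw [hunion, Set.ncard_sdiff_singleton_of_mem hq, hn, Nat.add_sub_cancel])
    exact ⟨ψ, fun j ↦ ⟨(hFF' j).trans (hψ j).1, (hψ j).2⟩⟩

end PartialPartition

lemma exists_subset_squareBox {Y : Set LatticePoint} (hY : Bornology.IsBounded Y) :
    ∃ N, Y ⊆ squareBox N := by
  obtain ⟨R, hR⟩ := hY.subset_closedBall 0
  refine ⟨⌈R⌉₊, fun a ha ↦ ?_⟩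
  have hdist := (Metric.mem_closedBall.1 (hR ha)).trans (Nat.le_ceil R)
  rw [Prod.dist_eq, max_le_iff, Int.dist_eq, Int.dist_eq, Prod.fst_zero, Prod.snd_zero] at hdist
  norm_cast at hdist
  simpa only [Set.mem_prod, Set.mem_Icc, abs_le, sub_zero] using hdist

lemma exists_option_partition {V : Type*} {F : V → Set LatticePoint} {N : ℕ}
    (hF : ∀ v, (triLattice.induce (F v)).Preconnected)
    (hdisj : Pairwise fun u v ↦ Disjoint (F u) (F v)) (hN : ∀ v, F v ⊆ squareBox N) :
    ∃ ψ : LatticePoint → Option V,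
      ((squareBox N)ᶜ ⊆ ψ ⁻¹' {none} ∧ (triLattice.induce (ψ ⁻¹' {none})).Preconnected) ∧
      ∀ v, F v ⊆ ψ ⁻¹' {some v} ∧ (triLattice.induce (ψ ⁻¹' {some v})).Preconnected := by
  let F' (o : Option V) : Set LatticePoint := o.elim (squareBox N)ᶜ F
  have hout : (squareBox N)ᶜ ⊆ ⋃ o, F' o := Set.subset_iUnion F' none
  have hdisj' : Pairwise fun o o' ↦ Disjoint (F' o) (F' o') := by
    have hnone (v : V) : Disjoint (squareBox N)ᶜ (F v) :=
      Set.disjoint_compl_left_iff_subset.2 (hN v)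
    rintro (_ | u) (_ | v) hne
    · exact absurd rfl hne
    · exact hnone v
    · exact (hnone u).symm
    · exact hdisj fun h ↦ hne (congrArg some h)
  obtain ⟨ψ, hψ⟩ := exists_preconnected_partition (F := F') triLattice_preconnected
    (Option.forall.2 ⟨compl_squareBox_preconnected N, hF⟩) hdisj'
    ⟨((N : ℤ) + 1, 0), hout (by simp)⟩ ((squareBox_finite N).subset (Set.compl_subset_comm.1 hout))
  exact ⟨ψ, Option.forall.1 hψ⟩

/-- Extend a family of connected sets of lattice points to a lattice model. The points that are far
out form an additional fibre, which is merged with an adjacent one. -/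
lemma LatticeModel.exists_label_eq {V : Type*} [Finite V] [Nonempty V] {F : V → Set LatticePoint}
    (hF : ∀ v, (triLattice.induce (F v)).Preconnected) (hne : ∀ v, (F v).Nonempty)
    (hdisj : Pairwise fun u v ↦ Disjoint (F u) (F v)) (hbdd : ∀ v, Bornology.IsBounded (F v)) :
    ∃ L : LatticeModel V, ∀ v, ∀ a ∈ F v, L.label a = v := by
  obtain ⟨N, hN⟩ := exists_subset_squareBox ((Bornology.isBounded_iUnion).2 hbdd)
  obtain ⟨ψ, ⟨hout, hnone⟩, hsome⟩ := exists_option_partition hF hdisj (Set.iUnion_subset_iff.1 hN)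
  have hlabel {v : V} {a : LatticePoint} (ha : a ∈ F v) : ψ a = some v := (hsome v).1 ha
  obtain ⟨v₀⟩ := ‹Nonempty V›
  obtain ⟨a₀, ha₀⟩ := hne v₀
  obtain ⟨p, q, hpq, hp, hq⟩ := exists_adj_mem_notMem triLattice_preconnected
    (S := ψ ⁻¹' {none}) ⟨((N : ℤ) + 1, 0), hout (by simp)⟩ ⟨a₀, by simp [hlabel ha₀]⟩
  obtain ⟨o, ho⟩ := Option.ne_none_iff_exists'.1 hq
  refine ⟨⟨fun a ↦ (ψ a).getD o, fun v ↦ ?_, fun v ↦ ?_, N, o, fun a ha ↦ ?_⟩, fun v a ha ↦ ?_⟩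
  · obtain rfl | hv := eq_or_ne v o
    · have hfiber : (fun a ↦ (ψ a).getD v) ⁻¹' {v} = ψ ⁻¹' {none} ∪ ψ ⁻¹' {some v} := by
        ext a
        cases h : ψ a <;> simp [h]
      rw [hfiber]
      exact (SimpleGraph.connected_induce_union hnone (hsome v).2 hp ho hpq).preconnected
    · have hfiber : (fun a ↦ (ψ a).getD o) ⁻¹' {v} = ψ ⁻¹' {some v} := by
        ext a
        cases h : ψ a <;> simp [h, hv.symm]
      rw [hfiber]
      exact (hsome v).2
  · obtain ⟨a, ha⟩ := hne v
    exact ⟨a, by simp [hlabel ha]⟩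
  · have : ψ a = none := hout ha
    simp [this]
  · simp [hlabel ha]

section Raster

/-- The point `a` of the square lattice of mesh `h` in the plane. -/
def meshPoint (h : ℝ) (a : LatticePoint) : ℝ × ℝ := (h * a.1, h * a.2)

/-- The points of the lattice of mesh `h` at distance less than `h` from the plane set `X`. -/
def raster (h : ℝ) (X : Set (ℝ × ℝ)) : Set LatticePoint := meshPoint h ⁻¹' Metric.thickening h X

variable {h : ℝ} {X Y : Set (ℝ × ℝ)}

lemma exists_dist_meshPoint_lt (hh : 0 < h) (x : ℝ × ℝ) : ∃ a, dist (meshPoint h a) x < h := by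
  have hround (t : ℝ) : dist (h * round (t / h)) t < h := by
    have habs := abs_sub_round (t / h)
    rw [← mul_le_mul_iff_right₀ hh, ← abs_of_pos hh, ← abs_mul, mul_sub, abs_of_pos hh,
      mul_div_cancel₀ t hh.ne', abs_sub_comm] at habs
    exact habs.trans_lt (by linarith)
  exact ⟨(round (x.1 / h), round (x.2 / h)), max_lt (hround _) (hround _)⟩

lemma raster_mono (hXY : X ⊆ Y) : raster h X ⊆ raster h Y :=
  Set.preimage_mono (Metric.thickening_subset_of_subset h hXY)

lemma mem_raster_singleton {a : LatticePoint} {x : ℝ × ℝ} :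
    a ∈ raster h {x} ↔ dist (meshPoint h a) x < h := by
  rw [raster, Metric.thickening_singleton]
  rfl

lemma raster_singleton_subset {x : ℝ × ℝ} (hx : x ∈ X) : raster h {x} ⊆ raster h X :=
  raster_mono (Set.singleton_subset_iff.2 hx)

lemma raster_singleton_preconnected (hh : 0 < h) (x : ℝ × ℝ) :
    (triLattice.induce (raster h {x})).Preconnected := by
  have hordConnected (t : ℝ) : ((fun m : ℤ ↦ h * (m : ℝ)) ⁻¹' Metric.ball t h).OrdConnected :=
    (convex_ball t h).ordConnected.preimage_mono fun m n hmn ↦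
      mul_le_mul_of_nonneg_left (Int.cast_le.2 hmn) hh.le
  have := hordConnected x.1
  have := hordConnected x.2
  have hprod : raster h {x} = ((fun m : ℤ ↦ h * (m : ℝ)) ⁻¹' Metric.ball x.1 h) ×ˢ
      ((fun m : ℤ ↦ h * (m : ℝ)) ⁻¹' Metric.ball x.2 h) := by
    rw [raster, Metric.thickening_singleton, ← ball_prod_same]
    rfl
  rw [hprod]
  exact preconnected_induce_prod _ _

lemma exists_preconnected_subset_raster (hh : 0 < h) (hX : IsPreconnected X) {x y : ℝ × ℝ}
    (hx : x ∈ X) (hy : y ∈ X) : ∃ Z ⊆ raster h X,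
      raster h {x} ⊆ Z ∧ raster h {y} ⊆ Z ∧ (triLattice.induce Z).Preconnected := by
  refine hX.induction₂ (fun x y ↦ ∃ Z ⊆ raster h X, raster h {x} ⊆ Z ∧ raster h {y} ⊆ Z ∧
    (triLattice.induce Z).Preconnected) (fun x hx ↦ ?_) ?_ ?_ hx hy
  · obtain ⟨a, ha⟩ := exists_dist_meshPoint_lt hh x
    have hnear : ∀ᶠ y in 𝓝[X] x, dist (meshPoint h a) y < h := nhdsWithin_le_nhds <|
      (continuous_const.dist continuous_id).continuousAt.eventually_lt_const ha
    filter_upwards [hnear, self_mem_nhdsWithin] with y hay hy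
    exact ⟨_, Set.union_subset (raster_singleton_subset hx) (raster_singleton_subset hy),
      Set.subset_union_left, Set.subset_union_right,
      (SimpleGraph.induce_union_connected (raster_singleton_preconnected hh x)
        (raster_singleton_preconnected hh y)
        ⟨a, mem_raster_singleton.2 ha, mem_raster_singleton.2 hay⟩).preconnected⟩
  · rintro x y z - - - ⟨Z, hZ, hxZ, hyZ, hconn⟩ ⟨Z', hZ', hyZ', hzZ', hconn'⟩
    obtain ⟨a, ha⟩ := exists_dist_meshPoint_lt hh y
    rw [← mem_raster_singleton] at ha
    exact ⟨Z ∪ Z', Set.union_subset hZ hZ', Set.subset_union_of_subset_left hxZ _,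
      Set.subset_union_of_subset_right hzZ' _,
      (SimpleGraph.induce_union_connected hconn hconn' ⟨a, hyZ ha, hyZ' ha⟩).preconnected⟩
  · rintro x y - - ⟨Z, hZ, hxZ, hyZ, hconn⟩
    exact ⟨Z, hZ, hyZ, hxZ, hconn⟩

lemma raster_preconnected (hh : 0 < h) (hX : IsPreconnected X) :
    (triLattice.induce (raster h X)).Preconnected := by
  rintro ⟨a, ha⟩ ⟨b, hb⟩
  obtain ⟨x, hx, hax⟩ := Metric.mem_thickening_iff.1 ha
  obtain ⟨y, hy, hby⟩ := Metric.mem_thickening_iff.1 hb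
  obtain ⟨Z, hZ, hxZ, hyZ, hconn⟩ := exists_preconnected_subset_raster hh hX hx hy
  exact (hconn ⟨a, hxZ (mem_raster_singleton.2 hax)⟩ ⟨b, hyZ (mem_raster_singleton.2 hby)⟩).map
    (SimpleGraph.induceHomOfLE triLattice hZ).toHom

lemma meshPoint_antilipschitz (hh : 0 < h) :
    AntilipschitzWith (Real.toNNReal h⁻¹) (meshPoint h) := by
  refine AntilipschitzWith.of_le_mul_dist fun a b ↦ ?_
  have hscale (m n : ℤ) : dist m n = h⁻¹ * dist (h * m) (h * n) := by
    rw [Real.dist_eq, ← mul_sub, abs_mul, abs_of_pos hh, inv_mul_cancel_left₀ hh.ne', Int.dist_eq]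
  rw [Real.coe_toNNReal _ (inv_nonneg.2 hh.le), Prod.dist_eq, Prod.dist_eq,
    mul_max_of_nonneg _ _ (inv_nonneg.2 hh.le), hscale, hscale]
  rfl

lemma raster_isBounded (hh : 0 < h) (hX : Bornology.IsBounded X) :
    Bornology.IsBounded (raster h X) :=
  (meshPoint_antilipschitz hh).isBounded_preimage hX.thickening

end Raster

namespace PlaneEmbedding

variable {V : Type*} {G : SimpleGraph V} (E : PlaneEmbedding G) {r : ℝ} {u w x y z : V}

/-- The closed arc of the drawing that represents the edge `uw`. -/
def curve (u w : V) : Set (ℝ × ℝ) := E.arc u w '' Set.Icc 0 1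

/-- The part of the curve `uw` that remains when the balls of radius `r` around all vertices are
removed. -/
def core (r : ℝ) (u w : V) : Set (ℝ × ℝ) := E.curve u w \ ⋃ z, Metric.ball (E.pos z) r

variable {E}

lemma isCompact_curve (h : G.Adj u w) : IsCompact (E.curve u w) :=
  isCompact_Icc.image (E.arc_cont h)

lemma isPreconnected_curve (h : G.Adj u w) : IsPreconnected (E.curve u w) :=
  isPreconnected_Icc.image _ (E.arc_cont h).continuousOn

lemma pos_left_mem_curve (h : G.Adj u w) : E.pos u ∈ E.curve u w :=
  ⟨0, by simp, E.arc_zero h⟩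

lemma pos_right_mem_curve (h : G.Adj u w) : E.pos w ∈ E.curve u w :=
  ⟨1, by simp, E.arc_one h⟩

lemma eq_or_eq_of_pos_mem_curve (h : G.Adj u w) (hz : E.pos z ∈ E.curve u w) :
    z = u ∨ z = w := by
  obtain ⟨t, ht, htz⟩ := hz
  rcases ht.1.eq_or_lt with rfl | hpos
  · exact .inl (E.pos_inj (htz.symm.trans (E.arc_zero h)))
  rcases ht.2.eq_or_lt with rfl | hlt
  · exact .inr (E.pos_inj (htz.symm.trans (E.arc_one h)))
  · exact absurd ⟨t, ⟨hpos, hlt⟩, htz⟩ (E.arc_avoid h z)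

lemma isCompact_core (h : G.Adj u w) : IsCompact (E.core r u w) :=
  (isCompact_curve h).diff (isOpen_iUnion fun _ ↦ Metric.isOpen_ball)

lemma disjoint_core (hr : 0 < r) (h : G.Adj u w) (h' : G.Adj x y) (hne : s(u, w) ≠ s(x, y)) :
    Disjoint (E.core r u w) (E.core r x y) := by
  refine Set.disjoint_left.2 fun p ⟨hp, hball⟩ ⟨hp', _⟩ ↦ hball (Set.mem_iUnion.2 ?_)
  obtain rfl | rfl := (E.arc_meet h h' hne ⟨hp, hp'⟩).1
  · exact ⟨u, Metric.mem_ball_self hr⟩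
  · exact ⟨w, Metric.mem_ball_self hr⟩

end PlaneEmbedding

lemma eventually_disjoint_thickening {X : Type*} [PseudoMetricSpace X] {s t : Set X}
    (hs : IsCompact s) (ht : IsClosed t) (hst : Disjoint s t) :
    ∀ᶠ δ in 𝓝[>] (0 : ℝ), Disjoint (Metric.thickening δ s) (Metric.thickening δ t) := by
  obtain ⟨δ, hδ, hdisj⟩ := hst.exists_thickenings hs ht
  filter_upwards [Ioc_mem_nhdsGT hδ] with ε hε
  exact hdisj.mono (Metric.thickening_mono hε.2 s) (Metric.thickening_mono hε.2 t)

namespace PlaneEmbedding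

variable {V : Type*} {G : SimpleGraph V} {E : PlaneEmbedding G}

variable (E) in
/-- A radius of discs around the vertices and a mesh of the lattice, small enough that the rasters
of the discs and of the edges between them do not interfere. -/
structure Scale where
  radius : ℝ
  mesh : ℝ
  mesh_pos : 0 < mesh
  mesh_le_radius : mesh ≤ radius
  disjoint_ball {u w : V} : u ≠ w →
    Disjoint (Metric.ball (E.pos u) (2 * radius)) (Metric.ball (E.pos w) (2 * radius))
  disjoint_ball_curve {u w z : V} : G.Adj u w → z ≠ u → z ≠ w →
    Disjoint (Metric.ball (E.pos z) (2 * radius)) (Metric.thickening (2 * radius) (E.curve u w))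
  disjoint_thickening_core {u w x y : V} : G.Adj u w → G.Adj x y → s(u, w) ≠ s(x, y) →
    Disjoint (Metric.thickening mesh (E.core radius u w))
      (Metric.thickening mesh (E.core radius x y))

lemma eventually_disjoint_ball [Finite V] : ∀ᶠ δ in 𝓝[>] (0 : ℝ), ∀ u w, u ≠ w →
    Disjoint (Metric.ball (E.pos u) δ) (Metric.ball (E.pos w) δ) := by
  simp only [← Metric.thickening_singleton, Filter.eventually_all]
  exact fun u w hne ↦ eventually_disjoint_thickening isCompact_singleton isClosed_singleton
    (Set.disjoint_singleton.2 (E.pos_inj.ne hne))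

lemma eventually_disjoint_ball_curve [Finite V] : ∀ᶠ δ in 𝓝[>] (0 : ℝ), ∀ u w z, G.Adj u w →
    z ≠ u → z ≠ w → Disjoint (Metric.ball (E.pos z) δ) (Metric.thickening δ (E.curve u w)) := by
  simp only [← Metric.thickening_singleton, Filter.eventually_all]
  exact fun u w z h hzu hzw ↦ eventually_disjoint_thickening isCompact_singleton
    (isCompact_curve h).isClosed (Set.disjoint_singleton_left.2 fun hz ↦
      (eq_or_eq_of_pos_mem_curve h hz).elim hzu hzw)

lemma eventually_disjoint_thickening_core [Finite V] {r : ℝ} (hr : 0 < r) :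
    ∀ᶠ δ in 𝓝[>] (0 : ℝ), ∀ u w x y, G.Adj u w → G.Adj x y → s(u, w) ≠ s(x, y) →
      Disjoint (Metric.thickening δ (E.core r u w)) (Metric.thickening δ (E.core r x y)) := by
  simp only [Filter.eventually_all]
  exact fun u w x y h h' hne ↦ eventually_disjoint_thickening (isCompact_core h)
    (isCompact_core h').isClosed (disjoint_core hr h h' hne)

variable (E) in
lemma nonempty_scale [Finite V] : Nonempty E.Scale := by
  obtain ⟨δ, hball, hcurve, hδ⟩ := (E.eventually_disjoint_ball.and
    (E.eventually_disjoint_ball_curve.and self_mem_nhdsWithin)).exists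
  have hr : 0 < δ / 2 := half_pos hδ
  obtain ⟨h, hcore, hh⟩ := ((E.eventually_disjoint_thickening_core hr).and
    (Ioc_mem_nhdsGT hr)).exists
  refine ⟨⟨δ / 2, h, hh.1, hh.2, ?_, ?_, hcore _ _ _ _⟩⟩
  · rw [mul_div_cancel₀ δ two_ne_zero]
    exact hball _ _
  · rw [mul_div_cancel₀ δ two_ne_zero]
    exact hcurve _ _ _

namespace Scale

variable (σ : E.Scale) {u w x y z : V}

/-- The lattice points representing the disc around the vertex `z`. -/
def disc (z : V) : Set LatticePoint := raster σ.mesh (Metric.ball (E.pos z) σ.radius)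

/-- The lattice points representing the edge `uw` outside all discs. -/
def strip (u w : V) : Set LatticePoint := raster σ.mesh (E.curve u w) \ ⋃ z, σ.disc z

lemma disc_preconnected (z : V) : (triLattice.induce (σ.disc z)).Preconnected :=
  raster_preconnected σ.mesh_pos (convex_ball _ _).isPreconnected

lemma disc_inter_raster_nonempty {X : Set (ℝ × ℝ)} (hz : E.pos z ∈ X) :
    (σ.disc z ∩ raster σ.mesh X).Nonempty := by
  obtain ⟨a, ha⟩ := exists_dist_meshPoint_lt σ.mesh_pos (E.pos z)
  rw [← mem_raster_singleton] at ha
  exact ⟨a, raster_singleton_subset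
    (Metric.mem_ball_self (σ.mesh_pos.trans_le σ.mesh_le_radius)) ha, raster_singleton_subset hz ha⟩

lemma disc_nonempty (z : V) : (σ.disc z).Nonempty :=
  (σ.disc_inter_raster_nonempty (Set.mem_univ (E.pos z))).left

lemma disc_subset (z : V) :
    σ.disc z ⊆ meshPoint σ.mesh ⁻¹' Metric.ball (E.pos z) (2 * σ.radius) :=
  Set.preimage_mono <| (Metric.thickening_ball _ _ _).trans <|
    Metric.ball_subset_ball (by linarith [σ.mesh_le_radius])

lemma disjoint_disc (hne : u ≠ w) : Disjoint (σ.disc u) (σ.disc w) :=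
  ((σ.disjoint_ball hne).preimage _).mono (σ.disc_subset u) (σ.disc_subset w)

lemma disjoint_disc_raster_curve (h : G.Adj u w) (hzu : z ≠ u) (hzw : z ≠ w) :
    Disjoint (σ.disc z) (raster σ.mesh (E.curve u w)) :=
  ((σ.disjoint_ball_curve h hzu hzw).preimage _).mono (σ.disc_subset z) <| Set.preimage_mono <|
    Metric.thickening_mono (by linarith [σ.mesh_pos, σ.mesh_le_radius]) _

lemma disjoint_disc_strip : Disjoint (σ.disc z) (σ.strip u w) :=
  Set.disjoint_sdiff_right.mono_left (Set.subset_iUnion σ.disc z)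

lemma strip_subset_raster_core : σ.strip u w ⊆ raster σ.mesh (E.core σ.radius u w) := by
  rintro a ⟨ha, hdisc⟩
  obtain ⟨p, hp, hap⟩ := Metric.mem_thickening_iff.1 ha
  refine Metric.mem_thickening_iff.2 ⟨p, ⟨hp, fun hball ↦ hdisc ?_⟩, hap⟩
  obtain ⟨z, hz⟩ := Set.mem_iUnion.1 hball
  exact Set.mem_iUnion.2 ⟨z, Metric.mem_thickening_iff.2 ⟨p, hz, hap⟩⟩

lemma disjoint_strip (h : G.Adj u w) (h' : G.Adj x y) (hne : s(u, w) ≠ s(x, y)) :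
    Disjoint (σ.strip u w) (σ.strip x y) :=
  ((σ.disjoint_thickening_core h h' hne).preimage _).mono σ.strip_subset_raster_core
    σ.strip_subset_raster_core

variable [LinearOrder V]

/-- The disc of `u` with the strips of the edges from `u` to larger vertices. -/
def territory (u : V) : Set LatticePoint :=
  σ.disc u ∪ {a | ∃ w, G.Adj u w ∧ u < w ∧ a ∈ σ.strip u w}

/-- The connected component of the disc of `u` in its territory. -/
def region (u : V) : Set LatticePoint :=
  ⋃₀ {Z | σ.disc u ⊆ Z ∧ Z ⊆ σ.territory u ∧ (triLattice.induce Z).Preconnected}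

lemma disjoint_territory (hne : u ≠ x) : Disjoint (σ.territory u) (σ.territory x) := by
  rw [Set.disjoint_left]
  rintro a (ha | ⟨w, hw, huw, ha⟩) (ha' | ⟨y, hy, hxy, ha'⟩)
  · exact Set.disjoint_left.1 (σ.disjoint_disc hne) ha ha'
  · exact Set.disjoint_left.1 σ.disjoint_disc_strip ha ha'
  · exact Set.disjoint_left.1 σ.disjoint_disc_strip ha' ha
  · refine Set.disjoint_left.1 (σ.disjoint_strip hw hy fun h ↦ ?_) ha ha'
    obtain ⟨rfl, -⟩ | ⟨rfl, rfl⟩ := Sym2.eq_iff.1 h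
    · exact hne rfl
    · exact huw.asymm hxy

lemma isBounded_territory [Finite V] (u : V) : Bornology.IsBounded (σ.territory u) := by
  have hstrip : Bornology.IsBounded (⋃ w : {w // G.Adj u w}, raster σ.mesh (E.curve u w)) :=
    Bornology.isBounded_iUnion.2 fun w ↦
      raster_isBounded σ.mesh_pos (isCompact_curve w.2).isBounded
  refine (raster_isBounded σ.mesh_pos Metric.isBounded_ball).union (hstrip.subset ?_)
  rintro a ⟨w, hw, -, ha⟩
  exact Set.mem_iUnion.2 ⟨⟨w, hw⟩, ha.1⟩

lemma disc_subset_region (u : V) : σ.disc u ⊆ σ.region u :=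
  Set.subset_sUnion_of_mem ⟨le_rfl, Set.subset_union_left, σ.disc_preconnected u⟩

lemma region_subset_territory (u : V) : σ.region u ⊆ σ.territory u :=
  Set.sUnion_subset fun _ hZ ↦ hZ.2.1

lemma region_preconnected (u : V) : (triLattice.induce (σ.region u)).Preconnected := by
  obtain ⟨a, ha⟩ := σ.disc_nonempty u
  refine (triLattice.induce_sUnion_connected_of_pairwise_not_disjoint
    (S := {Z | σ.disc u ⊆ Z ∧ Z ⊆ σ.territory u ∧ (triLattice.induce Z).Preconnected})
    ⟨σ.disc u, le_rfl, Set.subset_union_left, σ.disc_preconnected u⟩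
    (fun hY hZ ↦ ⟨a, hY.1 ha, hZ.1 ha⟩) fun {Z} hZ ↦ ?_).preconnected
  have : Nonempty Z := ⟨⟨a, hZ.1 ha⟩⟩
  exact ⟨hZ.2.2⟩

lemma mem_region_of_adj {p q : LatticePoint} (hp : p ∈ σ.region u) (hpq : triLattice.Adj p q)
    (hq : q ∈ σ.territory u) : q ∈ σ.region u :=
  Set.mem_sUnion_of_mem (Set.mem_insert q (σ.region u))
    ⟨(σ.disc_subset_region u).trans (Set.subset_insert ..),
      Set.insert_subset hq (σ.region_subset_territory u),
      preconnected_induce_insert (σ.region_preconnected u) hp hpq⟩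

lemma exists_adj_region (h : G.Adj u w) (huw : u < w) :
    ∃ p q, triLattice.Adj p q ∧ p ∈ σ.region u ∧ q ∈ σ.region w := by
  obtain ⟨a, hau, ha⟩ := σ.disc_inter_raster_nonempty (pos_left_mem_curve h)
  obtain ⟨b, hbw, hb⟩ := σ.disc_inter_raster_nonempty (pos_right_mem_curve h)
  have hb' : b ∉ σ.region u := fun hbu ↦ Set.disjoint_left.1 (σ.disjoint_territory h.ne)
    (σ.region_subset_territory u hbu) (.inl hbw)
  obtain ⟨⟨p, hp⟩, ⟨q, hq⟩, hpq, hpu, hqu⟩ := exists_adj_mem_notMem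
    (raster_preconnected σ.mesh_pos (isPreconnected_curve h)) (S := Subtype.val ⁻¹' σ.region u)
    ⟨⟨a, ha⟩, σ.disc_subset_region u hau⟩ ⟨⟨b, hb⟩, hb'⟩
  refine ⟨p, q, hpq, hpu, σ.disc_subset_region w ?_⟩
  by_contra hqw
  refine hqu (σ.mem_region_of_adj hpu hpq ?_)
  by_cases hdisc : q ∈ ⋃ z, σ.disc z
  · obtain ⟨z, hz⟩ := Set.mem_iUnion.1 hdisc
    obtain rfl | hzu := eq_or_ne z u
    · exact .inl hz
    · exact absurd hq (Set.disjoint_left.1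
        (σ.disjoint_disc_raster_curve h hzu fun hzw ↦ hqw (hzw ▸ hz)) hz)
  · exact .inr ⟨w, h, huw, hq, hdisc⟩

end Scale

lemma exists_latticeModel (E : PlaneEmbedding G) [Finite V] [Nonempty V] :
    ∃ L : LatticeModel V, G ≤ L.graph := by
  obtain ⟨σ⟩ := E.nonempty_scale
  obtain ⟨_, -⟩ := exists_wellFoundedLT V
  obtain ⟨L, hL⟩ := LatticeModel.exists_label_eq σ.region_preconnected
    (fun v ↦ (σ.disc_nonempty v).mono (σ.disc_subset_region v))
    (fun u v hne ↦ (σ.disjoint_territory hne).mono (σ.region_subset_territory u)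
      (σ.region_subset_territory v))
    fun v ↦ (σ.isBounded_territory v).subset (σ.region_subset_territory v)
  have hadj {u w : V} (h : G.Adj u w) (huw : u < w) : L.graph.Adj u w := by
    obtain ⟨p, q, hpq, hp, hq⟩ := σ.exists_adj_region h huw
    exact ⟨h.ne, p, q, hpq, hL u p hp, hL w q hq⟩
  refine ⟨L, fun u w h ↦ ?_⟩
  obtain huw | hwu := h.ne.lt_or_gt
  · exact hadj h huw
  · exact (hadj h.symm hwu).symm

end PlaneEmbedding

/-- Theorem 1.1: any connected planar graph on at least 2 vertices has 3-surviving rate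
greater than `2/21`. -/
theorem surviving_rate_three_planar {V : Type} [Fintype V] (G : SimpleGraph V)
    (hconn : G.Connected) (hplanar : IsPlanar G)
    (hn : 2 ≤ Fintype.card V) :
    survivingRate G (fun _ => 3) > 2 / 21 := by
  obtain ⟨E⟩ := hplanar
  have := hconn.nonempty
  obtain ⟨L, hL⟩ := E.exists_latticeModel
  exact L.two_div_lt_survivingRate hL hconn hn
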